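/- arXiv:2502.04124 — 4 statements merged into one kernel-verified Lean document; each statement's English description precedes it below -/
import Mathlib

section
/- Let G be a finite group in which every element of prime power order has conjugacy class of size at most m. Then every element of G has conjugacy class of size at most m^m. -/
/-!
Write `g` as a product of powers of itself of prime power order, one for each prime dividing its
order. Class sizes are submultiplicative, since a conjugate of `x * y` is a conjugate of `x` times
a conjugate of `y`, so it suffices to bound the contribution of each prime `p`.

For `p ≤ m` the contribution is at most `m` by hypothesis. For `p > m` let `x` be a `p`-element and
`y` an element of prime power order: the orbit of `y` under conjugation by the powers of `x` has
`p`-power size, and at most `m < p` elements, so `x` commutes with `y`. Elements of prime power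
order generate the group, hence `x` is central and contributes a factor `1`. This gives the sharper
bound `m ^ π(m)`.
-/

open MulAction Subgroup
open scoped Pointwise

section Action

variable {G α : Type*} [Group G] [MulAction G α]

theorem period_le_encard_orbit (g : G) (a : α) : (period g a : ℕ∞) ≤ (orbit G a).encard := by
  rcases (orbit G a).finite_or_infinite with hfin | hinf
  · have hsub : orbit (zpowers g) a ⊆ orbit G a := orbit_subgroup_subset _ a
    have := (hfin.subset hsub).fintype
    calc (period g a : ℕ∞) = (orbit (zpowers g) a).encard := by
          rw [period, minimalPeriod_eq_card, Set.encard_eq_coe_toFinset_card, Set.toFinset_card]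
      _ ≤ (orbit G a).encard := Set.encard_le_encard hsub
  · simp [hinf.encard_eq]

theorem smul_eq_self_of_encard_orbit_lt {p k : ℕ} (hp : p.Prime) {g : G} (hg : g ^ p ^ k = 1)
    {a : α} (ha : (orbit G a).encard < p) : g • a = a := by
  have hdvd : period g a ∣ p ^ k := (period_dvd_orderOf g a).trans (orderOf_dvd_of_pow_eq_one hg)
  have hlt : period g a < p := by exact_mod_cast (period_le_encard_orbit g a).trans_lt ha
  obtain ⟨j, -, hj⟩ := (Nat.dvd_prime_pow hp).1 hdvd
  have hj0 : j = 0 := by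
    by_contra hj0
    exact (Nat.le_self_pow hj0 p).not_gt (hj ▸ hlt)
  rw [← period_eq_one_iff, hj, hj0, pow_zero]

end Action

section PrimaryDecomposition

theorem exists_sum_primeFactors_eq_one {n : ℕ} (hn : 1 < n) :
    ∃ e : ℕ → ℤ, (∀ p ∈ n.primeFactors, (n : ℤ) ∣ e p * (p : ℤ) ^ n.factorization p) ∧
      ∑ p ∈ n.primeFactors, e p = 1 := by
  let q (p : ℕ) : ℤ := (p : ℤ) ^ n.factorization p
  have hprod : ∏ p ∈ n.primeFactors, q p = n := by
    simp only [q]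
    exact_mod_cast (Nat.prod_factorization_eq_prod_primeFactors _).symm.trans
      (Nat.prod_factorization_pow_eq_self (by lia : n ≠ 0))
  have hcoprime : Pairwise (Function.onFun IsCoprime fun p : n.primeFactors ↦ q p) :=
    fun p r hpr ↦ ((Nat.coprime_primes (Nat.prime_of_mem_primeFactors p.2)
      (Nat.prime_of_mem_primeFactors r.2)).2 (Subtype.coe_ne_coe.2 hpr)).isCoprime.pow
  obtain ⟨u, hu⟩ := (exists_sum_eq_one_iff_pairwise_coprime
    (Nat.nonempty_primeFactors.2 hn)).2 hcoprime
  refine ⟨fun p ↦ u p * ∏ r ∈ n.primeFactors \ {p}, q r, fun p hp ↦ ⟨u p, ?_⟩, hu⟩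
  rw [← hprod, ← Finset.prod_sdiff (Finset.singleton_subset_iff.2 hp), Finset.prod_singleton]
  ring

variable {G : Type*} [Group G]

theorem exists_zpow_sum_primeFactors_eq {g : G} (hg : IsOfFinOrder g) :
    ∃ e : ℕ → ℤ, (∀ p ∈ (orderOf g).primeFactors, ∃ k : ℕ, (g ^ e p) ^ p ^ k = 1) ∧
      g ^ ∑ p ∈ (orderOf g).primeFactors, e p = g := by
  rcases (Nat.succ_le_of_lt hg.orderOf_pos).eq_or_lt' with h1 | h1
  · exact ⟨0, by simp [h1], by simp [orderOf_eq_one_iff.1 h1]⟩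
  obtain ⟨e, he, hsum⟩ := exists_sum_primeFactors_eq_one h1
  refine ⟨e, fun p hp ↦ ⟨(orderOf g).factorization p, ?_⟩, by rw [hsum, zpow_one]⟩
  rw [← zpow_natCast, ← zpow_mul, ← orderOf_dvd_iff_zpow_eq_one]
  exact_mod_cast he p hp

theorem eq_one_or_isPrimePow_orderOf {p k : ℕ} (hp : p.Prime) {x : G} (hx : x ^ p ^ k = 1) :
    x = 1 ∨ IsPrimePow (orderOf x) := by
  obtain ⟨j, -, hj⟩ := (Nat.dvd_prime_pow hp).1 (orderOf_dvd_of_pow_eq_one hx)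
  rcases eq_or_ne j 0 with rfl | hj0
  · exact .inl (orderOf_eq_one_iff.1 hj)
  · exact .inr (hj ▸ hp.isPrimePow.pow hj0)

theorem mem_of_forall_isPrimePow_orderOf_mem {S : Submonoid G}
    (hS : ∀ y : G, IsPrimePow (orderOf y) → y ∈ S) {g : G} (hg : IsOfFinOrder g) : g ∈ S := by
  obtain ⟨e, he, hsum⟩ := exists_zpow_sum_primeFactors_eq hg
  rw [← hsum]
  refine Finset.sum_induction e (g ^ · ∈ S) (fun i j hi hj ↦ zpow_add g i j ▸ S.mul_mem hi hj)
    (zpow_zero g ▸ S.one_mem) fun p hp ↦ ?_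
  obtain ⟨k, hk⟩ := he p hp
  rcases eq_one_or_isPrimePow_orderOf (Nat.prime_of_mem_primeFactors hp) hk with h1 | hpow
  · exact h1 ▸ S.one_mem
  · exact hS _ hpow

end PrimaryDecomposition

section ConjugacyClass

variable {G : Type*} [Group G]

theorem conjugatesOf_eq_orbit (g : G) : conjugatesOf g = orbit (ConjAct G) g := by
  ext x
  rw [ConjAct.mem_orbit_conjAct, isConj_comm, conjugatesOf, Set.mem_ofPred_eq]

theorem encard_conjugatesOf_eq_one_of_mem_center {x : G} (hx : x ∈ center G) :
    (conjugatesOf x).encard = 1 := by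
  refine Set.encard_eq_one.2 ⟨x, Set.eq_singleton_iff_unique_mem.2
    ⟨mem_conjugatesOf_self, fun y hy ↦ ?_⟩⟩
  obtain ⟨c, rfl⟩ := isConj_iff.1 hy
  rw [mem_center_iff.1 hx c, mul_inv_cancel_right]

theorem conjugatesOf_mul_subset (x y : G) :
    conjugatesOf (x * y) ⊆ conjugatesOf x * conjugatesOf y := by
  intro z hz
  obtain ⟨c, rfl⟩ := isConj_iff.1 hz
  exact ⟨c * x * c⁻¹, isConj_iff.2 ⟨c, rfl⟩, c * y * c⁻¹, isConj_iff.2 ⟨c, rfl⟩, conj_mul⟩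

theorem encard_conjugatesOf_mul_le (x y : G) :
    (conjugatesOf (x * y)).encard ≤ (conjugatesOf x).encard * (conjugatesOf y).encard :=
  calc (conjugatesOf (x * y)).encard ≤ (conjugatesOf x * conjugatesOf y).encard :=
        Set.encard_le_encard (conjugatesOf_mul_subset x y)
    _ ≤ (conjugatesOf x ×ˢ conjugatesOf y).encard := by
        rw [← Set.image_mul_prod]
        exact Set.encard_image_le _ _
    _ = (conjugatesOf x).encard * (conjugatesOf y).encard := Set.encard_prod

theorem encard_conjugatesOf_zpow_sum_le {ι : Type*} (g : G) (s : Finset ι) (e : ι → ℤ) :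
    (conjugatesOf (g ^ ∑ i ∈ s, e i)).encard ≤ ∏ i ∈ s, (conjugatesOf (g ^ e i)).encard := by
  classical
  induction s using Finset.induction_on with
  | empty => simp [encard_conjugatesOf_eq_one_of_mem_center (one_mem (center G))]
  | insert i s hi ih =>
    rw [Finset.sum_insert hi, Finset.prod_insert hi, zpow_add]
    exact (encard_conjugatesOf_mul_le _ _).trans (by gcongr)

theorem commute_of_encard_conjugatesOf_lt {p k : ℕ} (hp : p.Prime) {x y : G}
    (hx : x ^ p ^ k = 1) (hy : (conjugatesOf y).encard < p) : Commute x y := by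
  rw [conjugatesOf_eq_orbit] at hy
  have hfix : ConjAct.toConjAct x • y = y :=
    smul_eq_self_of_encard_orbit_lt hp (by rw [← map_pow, hx, map_one]) hy
  rwa [ConjAct.toConjAct_smul, mul_inv_eq_iff_eq_mul] at hfix

theorem mem_center_of_encard_conjugatesOf_lt (hG : IsMulTorsion G) {p k : ℕ}
    (hp : p.Prime) {x : G} (hx : x ^ p ^ k = 1)
    (h : ∀ y : G, IsPrimePow (orderOf y) → (conjugatesOf y).encard < p) : x ∈ center G := by
  refine mem_center_iff.2 fun g ↦ ?_
  have hg : g ∈ (centralizer {x}).toSubmonoid :=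
    mem_of_forall_isPrimePow_orderOf_mem (fun y hy ↦ mem_centralizer_singleton_iff.2
      (commute_of_encard_conjugatesOf_lt hp hx (h y hy)).symm) (hG g)
  exact mem_centralizer_singleton_iff.1 hg

theorem encard_conjugatesOf_le_ite_of_pow_prime_pow_eq_one (hG : IsMulTorsion G) {m : ℕ}
    (h : ∀ y : G, IsPrimePow (orderOf y) → (conjugatesOf y).encard ≤ m)
    {p k : ℕ} (hp : p.Prime) {x : G} (hx : x ^ p ^ k = 1) :
    (conjugatesOf x).encard ≤ if p ≤ m then (m : ℕ∞) else 1 := by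
  split_ifs with hpm
  · rcases eq_one_or_isPrimePow_orderOf hp hx with rfl | hpow
    · rw [encard_conjugatesOf_eq_one_of_mem_center (one_mem _)]
      exact_mod_cast hp.one_le.trans hpm
    · exact h x hpow
  · exact (encard_conjugatesOf_eq_one_of_mem_center <| mem_center_of_encard_conjugatesOf_lt hG hp hx
      fun y hy ↦ (h y hy).trans_lt (by exact_mod_cast not_le.1 hpm)).le

end ConjugacyClass

theorem primeCounting_le_self (m : ℕ) : m.primeCounting ≤ m := by
  rw [← Nat.primesLE_card_eq_primeCounting]
  calc (Nat.primesLE m).card ≤ (Finset.Icc 1 m).card := Finset.card_le_card fun p hp ↦ by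
        obtain ⟨hpm, hp⟩ := Nat.mem_primesLE.1 hp
        exact Finset.mem_Icc.2 ⟨hp.one_le, hpm⟩
    _ = m := by simp

theorem prod_primeFactors_ite_le_pow_primeCounting (n m : ℕ) :
    ∏ p ∈ n.primeFactors, (if p ≤ m then m else 1) ≤ m ^ m.primeCounting := by
  rw [← Finset.prod_filter, ← Nat.primesLE_card_eq_primeCounting, ← Finset.prod_const]
  refine Finset.prod_le_prod_of_subset_of_one_le' (fun p hp ↦ ?_) fun p hp _ ↦ ?_
  · rw [Finset.mem_filter] at hp
    exact Nat.mem_primesLE.2 ⟨hp.2, Nat.prime_of_mem_primeFactors hp.1⟩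
  · obtain ⟨hpm, hp⟩ := Nat.mem_primesLE.1 hp
    exact hp.one_le.trans hpm

theorem classes_bounded_of_primePower_classes_general {G : Type*} [Group G]
    (hG : IsMulTorsion G) {m : ℕ}
    (h : ∀ x : G, IsPrimePow (orderOf x) → (conjugatesOf x).encard ≤ m) (g : G) :
    (conjugatesOf g).encard ≤ (m ^ m.primeCounting : ℕ) := by
  obtain ⟨e, he, hsum⟩ := exists_zpow_sum_primeFactors_eq (hG g)
  calc (conjugatesOf g).encard
      = (conjugatesOf (g ^ ∑ p ∈ (orderOf g).primeFactors, e p)).encard := by rw [hsum]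
    _ ≤ ∏ p ∈ (orderOf g).primeFactors, (conjugatesOf (g ^ e p)).encard :=
        encard_conjugatesOf_zpow_sum_le g _ e
    _ ≤ ∏ p ∈ (orderOf g).primeFactors, (if p ≤ m then (m : ℕ∞) else 1) := by
        refine Finset.prod_le_prod' fun p hp ↦ ?_
        obtain ⟨k, hk⟩ := he p hp
        exact encard_conjugatesOf_le_ite_of_pow_prime_pow_eq_one hG h
          (Nat.prime_of_mem_primeFactors hp) hk
    _ ≤ (m ^ m.primeCounting : ℕ) := by
        exact_mod_cast prod_primeFactors_ite_le_pow_primeCounting (orderOf g) m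

theorem natCard_isConj_le_iff {G : Type*} [Group G] [Finite G] {g : G} {n : ℕ} :
    Nat.card {x : G // IsConj g x} ≤ n ↔ (conjugatesOf g).encard ≤ n := by
  rw [← (conjugatesOf g).toFinite.cast_ncard_eq, Nat.cast_le]
  rfl

/-- If every element of prime power order of a finite group `G` has conjugacy class of
size at most `m`, then every element of `G` has conjugacy class of size at most `m^m`. -/
theorem classes_bounded_of_primePower_classes (G : Type*) [Group G] [Finite G]
    (m : ℕ) (hm : 0 < m)
    (h : ∀ x : G, IsPrimePow (orderOf x) → Nat.card {h : G // IsConj x h} ≤ m) :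
    ∀ g : G, Nat.card {h : G // IsConj g h} ≤ m ^ m := by
  intro g
  simp only [natCard_isConj_le_iff] at h
  exact (natCard_isConj_le_iff.2 <| classes_bounded_of_primePower_classes_general
    isMulTorsion_of_finite h g).trans (Nat.pow_le_pow_right hm (primeCounting_le_self m))
end

section
/- Let m be a positive integer and G a finite soluble group such that |x^G| ≤ m for every x ∈ X(G). Then the second derived subgroup G'' has order bounded by a function of m only. -/
/-- `Xset G` is the set of commutators `[x,y] = x⁻¹y⁻¹xy` such that `x` and `[x,y]`
both lie in some Sylow subgroup `P` of `G`, `y` arbitrary. -/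
def Xset (G : Type*) [Group G] : Set G :=
  {z | ∃ (p : ℕ) (_ : Fact p.Prime) (P : Sylow p G) (x y : G),
    z = x⁻¹ * y⁻¹ * x * y ∧ x ∈ (P : Subgroup G) ∧ z ∈ (P : Subgroup G)}

/-!
By the focal subgroup theorem `G'` is generated by `X(G)`, so `C(G')` is the intersection of the
kernels of the actions of `G` on the conjugacy classes of the elements of `X(G)`. The images of
these actions are soluble of order at most `m!`. Hence, if one starts from `G` and repeatedly passes
to the subgroup generated by all `p`-th powers, with `p` running often enough through the primes up
to `m!`, one arrives inside `C(G')` after a number of steps depending only on `m`. Applying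
Frattini's argument to a Sylow `p`-subgroup at each step writes `G` as `U ^ k * C(G')` with `k`
bounded, where for all `u` and `v` in `U` one of `[u, v]`, `[v, u]` lies in `X(G)`. So, modulo
`C(G')`, all commutators of `G` have boundedly many conjugates.

This last property bounds `G''`, by a variation on the proof of the theorem about commutators with
few conjugates. Choose a commutator `[d, e]` with the largest possible class under `G'`; comparing
its class with that of `[d * u, e * v]`, for `u` and `v` in a normal subgroup `M` of bounded index,
shows that `[M, M]` centralizes `G'` modulo a normal subgroup of bounded order. As every element of
`G'` is a product of boundedly many commutators and an element of `[M, M]`, the classes of `G'` are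
bounded, and Neumann's theorem on groups with bounded classes applies to `G'`.
-/

namespace BoundedClasses

open Subgroup
open scoped Pointwise commutatorElement

section Conjugacy

variable {G : Type*} [Group G]

/-- The `H`-conjugacy class `a^H` of an element `a`, which need not lie in `H`. -/
def conjClass (H : Subgroup G) (a : G) : Set G :=
  (fun h ↦ h * a * h⁻¹) '' (H : Set G)

theorem ncard_conjClass (H : Subgroup G) (a : G) :
    (conjClass H a).ncard = (centralizer {a}).relIndex H := by
  let _ : MulAction H G := MulAction.compHom G (MulAut.conj.comp H.subtype)
  have orbit_eq : MulAction.orbit H a = conjClass H a := by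
    ext v
    simp only [MulAction.mem_orbit_iff, Subtype.exists, conjClass, Set.mem_image]
    exact ⟨fun ⟨h, hh, hv⟩ ↦ ⟨h, hh, hv⟩, fun ⟨h, hh, hv⟩ ↦ ⟨h, hh, hv⟩⟩
  have stabilizer_eq : MulAction.stabilizer H a = (centralizer {a}).subgroupOf H := by
    ext h
    rw [MulAction.mem_stabilizer_iff, mem_subgroupOf, mem_centralizer_singleton_iff]
    exact mul_inv_eq_iff_eq_mul
  rw [relIndex, ← stabilizer_eq, MulAction.index_stabilizer, orbit_eq]

theorem natCard_isConj (x : G) : Nat.card {h : G // IsConj x h} = (centralizer {x}).index := by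
  have setOf_isConj_eq : {h : G | IsConj x h} = conjClass ⊤ x := by
    ext h
    simp [conjClass, isConj_iff]
  rw [← relIndex_top_right (centralizer {x}), ← ncard_conjClass, ← setOf_isConj_eq]
  rfl

theorem conj_mem_conjClass {H : Subgroup G} {a v g : G} (hg : g ∈ H) (hv : v ∈ conjClass H a) :
    g * v * g⁻¹ ∈ conjClass H a := by
  obtain ⟨h, hh, rfl⟩ := hv
  exact ⟨g * h, mul_mem hg hh, by simp [mul_assoc]⟩

variable [Finite G]

theorem ncard_conjClass_le_index (H : Subgroup G) (a : G) :
    (conjClass H a).ncard ≤ (centralizer {a}).index := by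
  rw [ncard_conjClass, ← relIndex_top_right (centralizer {a})]
  exact relIndex_le_of_le_right le_top index_ne_zero_of_finite

theorem index_centralizer_le_pow {S : Set G} {n : ℕ}
    (hS : ∀ s ∈ S, (centralizer {s}).index ≤ n) : (centralizer S).index ≤ n ^ S.ncard := by
  have : Fintype S := Fintype.ofFinite S
  rw [centralizer_eq_iInf, iInf_subtype', ← Nat.card_coe_set_eq, Nat.card_eq_fintype_card]
  exact (index_iInf_le _).trans (Finset.prod_le_pow_card _ _ n fun s _ ↦ hS s s.2)

theorem index_normalCore_le_factorial (H : Subgroup G) :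
    H.normalCore.index ≤ H.index.factorial := by
  rw [normalCore_eq_ker, index_ker, index, ← Nat.card_perm]
  exact Finite.card_subtype_le _

/-- The representatives `b` show `a^H x ⊆ (ax)^H`, and maximality forces equality. -/
theorem conjClass_mul_eq_image {H : Subgroup G} {a x : G}
    (hreps : ∀ v ∈ conjClass H a, ∃ b ∈ H, Commute b x ∧ b * a * b⁻¹ = v)
    (hmax : (conjClass H (a * x)).ncard ≤ (conjClass H a).ncard) :
    conjClass H (a * x) = (· * x) '' conjClass H a := by
  refine (Set.eq_of_subset_of_ncard_le ?_ ?_ (Set.toFinite _)).symm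
  · rintro _ ⟨v, hv, rfl⟩
    obtain ⟨b, hb, hbx, rfl⟩ := hreps v hv
    exact ⟨b, hb, by simp only [mul_assoc, hbx.inv_left.eq]⟩
  · rwa [Set.ncard_image_of_injective _ (mul_left_injective x)]

end Conjugacy

section BFC

variable {G : Type*} [Group G] [Finite G]

/-- The bound in Neumann's theorem on groups all of whose conjugacy classes have at most `n`
elements. -/
def bfcBound (n : ℕ) : ℕ := cardCommutatorBound (n ^ n * n * (n * n))

theorem cardCommutatorBound_mono : Monotone cardCommutatorBound := by
  intro a b hab
  unfold cardCommutatorBound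
  rcases Nat.eq_zero_or_pos a with rfl | ha
  · rcases Nat.eq_zero_or_pos b with rfl | hb
    · rfl
    · simpa using Nat.one_le_pow _ _ (Nat.pow_pos hb)
  · have hb : 0 < b := ha.trans_le hab
    gcongr
    exact Nat.one_le_pow _ _ hb

theorem exists_index_le_commutatorElement_mem {n : ℕ}
    (hn : ∀ a : G, (centralizer {a}).index ≤ n) :
    ∃ (a : G) (U : Subgroup G), U.index ≤ n ^ n ∧
      ∀ u ∈ U, ∀ h : G, ⁅h, u⁆ ∈ (conjClass ⊤ a)⁻¹ * conjClass ⊤ a := by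
  obtain ⟨a, ha⟩ := Finite.exists_max fun a : G ↦ (conjClass ⊤ a).ncard
  obtain ⟨B, -, hB⟩ :=
    (Set.surjOn_image (fun b ↦ b * a * b⁻¹) (Set.univ : Set G)).exists_bijOn_subset
  refine ⟨a, centralizer B, ?_, fun u hu h ↦ ?_⟩
  · have hcard : B.ncard ≤ n := by
      have := (ncard_conjClass_le_index ⊤ a).trans (hn a)
      rwa [conjClass, coe_top, ← hB.image_eq, hB.injOn.ncard_image] at this
    have hn_pos : 0 < n := (Nat.pos_of_ne_zero index_ne_zero_of_finite).trans_le (hn 1)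
    exact (index_centralizer_le_pow fun b _ ↦ hn b).trans (Nat.pow_le_pow_right hn_pos hcard)
  · have hclass : conjClass ⊤ (a * u) = (· * u) '' conjClass ⊤ a := by
      refine conjClass_mul_eq_image (fun v hv ↦ ?_) (ha _)
      obtain ⟨b, hb, hbv⟩ := hB.surjOn hv
      exact ⟨b, trivial, mem_centralizer_iff.1 hu b hb, hbv⟩
    obtain ⟨v, hv, hvu⟩ : h * (a * u) * h⁻¹ ∈ (· * u) '' conjClass ⊤ a :=
      hclass ▸ ⟨h, trivial, rfl⟩
    refine ⟨(h * a * h⁻¹)⁻¹, Set.inv_mem_inv.2 ⟨h, trivial, rfl⟩, v, hv, ?_⟩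
    simp only [eq_mul_inv_of_mul_eq hvu, commutatorElement_def]
    group

theorem ncard_commutatorSet_le {n : ℕ} (hn : ∀ a : G, (centralizer {a}).index ≤ n) :
    (commutatorSet G).ncard ≤ n ^ n * n * (n * n) := by
  have hclass (a : G) : (conjClass ⊤ a).ncard ≤ n := (ncard_conjClass_le_index ⊤ a).trans (hn a)
  obtain ⟨a, U, hU, hcomm⟩ := exists_index_le_commutatorElement_mem hn
  set S : Set G := (conjClass ⊤ a)⁻¹ * conjClass ⊤ a
  have hS : S.ncard ≤ n * n := by
    rw [← Nat.card_coe_set_eq]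
    refine Set.natCard_mul_le.trans ?_
    rw [Set.natCard_inv, Nat.card_coe_set_eq]
    exact Nat.mul_le_mul (hclass a) (hclass a)
  have conj_mem_S : ∀ s ∈ S, ∀ g : G, g * s * g⁻¹ ∈ S := by
    rintro _ ⟨v, hv, w, hw, rfl⟩ g
    refine ⟨g * v * g⁻¹, ?_, g * w * g⁻¹, conj_mem_conjClass (mem_top g) hw, by simp⟩
    simpa [mul_assoc] using conj_mem_conjClass (mem_top g) (Set.mem_inv.1 hv)
  have : Fintype (G ⧸ U) := Fintype.ofFinite _
  let T : Set G := ⋃ q ∈ (Finset.univ : Finset (G ⧸ U)), (· * q.out⁻¹) '' conjClass ⊤ q.out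
  have hT : T.ncard ≤ n ^ n * n := by
    refine (Finset.set_ncard_biUnion_le _ _).trans ((Finset.sum_le_card_nsmul _ _ n ?_).trans ?_)
    · exact fun q _ ↦ (Set.ncard_image_le (Set.toFinite _)).trans (hclass _)
    · rw [smul_eq_mul, Finset.card_univ, ← Nat.card_eq_fintype_card]
      exact Nat.mul_le_mul_right _ hU
  have hsub : commutatorSet G ⊆ T * S := by
    rintro _ ⟨g, h, rfl⟩
    obtain ⟨u, hu⟩ := QuotientGroup.mk_out_eq_mul U h
    set t := (QuotientGroup.mk h : G ⧸ U).out
    refine ⟨⁅g, t⁆, ?_, t * ⁅g, (u : G)⁻¹⁆ * t⁻¹, conj_mem_S _ (hcomm _ (inv_mem u.2) g) t, ?_⟩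
    · exact Set.mem_biUnion (Finset.mem_coe.2 (Finset.mem_univ (QuotientGroup.mk h : G ⧸ U)))
        ⟨_, ⟨g, trivial, rfl⟩, rfl⟩
    · rw [eq_mul_inv_of_mul_eq hu.symm, commutatorElement_mul_right_eq_mul_conj]
      simp only [mul_assoc]
  calc (commutatorSet G).ncard ≤ (T * S).ncard := Set.ncard_le_ncard hsub
    _ ≤ T.ncard * S.ncard := by
      simpa only [Nat.card_coe_set_eq] using Set.natCard_mul_le (s := T) (t := S)
    _ ≤ n ^ n * n * (n * n) := Nat.mul_le_mul hT hS

theorem card_commutator_le_bfcBound {n : ℕ} (hn : ∀ a : G, (centralizer {a}).index ≤ n) :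
    Nat.card (commutator G) ≤ bfcBound n :=
  (card_commutator_le_of_finite_commutatorSet G).trans
    (cardCommutatorBound_mono (by simpa using ncard_commutatorSet_le hn))

theorem card_commutator_self_le_bfcBound {H : Subgroup G} {n : ℕ}
    (hn : ∀ a ∈ H, (centralizer {a}).relIndex H ≤ n) : Nat.card ↥⁅H, H⁆ ≤ bfcBound n := by
  rw [← map_subtype_commutator, card_map_of_injective H.subtype_injective]
  refine card_commutator_le_bfcBound fun a ↦ ?_
  have : centralizer {a} = (centralizer {(a : G)}).subgroupOf H := by
    ext h
    simp only [mem_subgroupOf, mem_centralizer_singleton_iff, Subtype.ext_iff, coe_mul]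
  rw [this]
  exact hn a a.2

theorem card_commutator_le_of_index_center_le {n : ℕ} (hn : (center G).index ≤ n) :
    Nat.card (commutator G) ≤ bfcBound n :=
  card_commutator_le_bfcBound fun a ↦ (index_antitone (center_le_centralizer {a})).trans hn

end BFC

section Words

variable {G : Type*} [Group G] [Finite G]

theorem ncard_pow_smul_one_le (X : Set G) (K : Subgroup G) (j : ℕ) :
    (X ^ j • {((1 : G) : G ⧸ K)} : Set (G ⧸ K)).ncard ≤ K.relIndex (closure X) := by
  have orbit_ncard : (MulAction.orbit (closure X) ((1 : G) : G ⧸ K)).ncard =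
      K.relIndex (closure X) := by
    rw [← MulAction.index_stabilizer, relIndex]
    congr 1
    ext h
    simp only [mem_subgroupOf, MulAction.mem_stabilizer_iff, MulAction.compHom_smul_def,
      Subgroup.coe_subtype, ← MulAction.stabilizer_quotient K]
  rw [← orbit_ncard]
  refine Set.ncard_le_ncard ?_
  rintro _ ⟨x, hx, _, rfl, rfl⟩
  exact ⟨⟨x, Subgroup.pow_subset subset_closure hx⟩, rfl⟩

/-- The images of `X ^ j` in the coset space of `K` increase with `j`, and once two consecutive
ones agree they are invariant under `closure X`. -/
theorem closure_subset_pow_mul {X : Set G} (one_mem : 1 ∈ X) {K : Subgroup G} {r : ℕ}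
    (hr : K.relIndex (closure X) ≤ r) : (closure X : Set G) ⊆ X ^ r * K := by
  let P (j : ℕ) : Set (G ⧸ K) := X ^ j • {((1 : G) : G ⧸ K)}
  have P_succ (j : ℕ) : P (j + 1) = X • P j := by simp only [P, pow_succ', mul_smul]
  have P_mono : Monotone P := fun i j hij ↦
    Set.smul_subset_smul_right (Set.pow_subset_pow_right one_mem hij)
  have P_eq {j : ℕ} (h : (P j).ncard = (P (j + 1)).ncard) : P j = P (j + 1) :=
    Set.eq_of_subset_of_ncard_le (P_mono j.le_succ) h.ge
  have stable : P r = X • P r := by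
    rw [← P_succ]
    have card_stable := Nat.stabilises_of_monotone (f := fun j ↦ (P j).ncard)
      (fun i j hij ↦ Set.ncard_le_ncard (P_mono hij))
      (fun j ↦ (ncard_pow_smul_one_le X K j).trans hr)
      (fun j hj ↦ by simp only [P_succ (j + 1), ← P_eq hj, ← P_succ j]) r.le_succ
    exact P_eq card_stable.symm
  have closure_le : closure X ≤ MulAction.stabilizer G (P r) := by
    rw [closure_le]
    refine fun x hx ↦ Set.eq_of_subset_of_ncard_le ?_ (Set.ncard_smul_set x (P r)).ge
    exact (Set.smul_set_subset_smul hx).trans_eq stable.symm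
  intro h hh
  have one_mem_P : ((1 : G) : G ⧸ K) ∈ P r := ⟨1, Set.one_mem_pow one_mem, _, rfl, one_smul G _⟩
  obtain ⟨x, hx, _, rfl, hxh⟩ : h • ((1 : G) : G ⧸ K) ∈ P r :=
    (closure_le hh).le (Set.smul_mem_smul_set one_mem_P)
  refine ⟨x, hx, x⁻¹ * h, QuotientGroup.eq.1 ?_, mul_inv_cancel_left x h⟩
  simpa using hxh

end Words

section Width

open scoped IsMulCommutative

variable {G : Type*} [Group G]

theorem le_comap_center_quotient (A : Subgroup G) [A.Normal] :
    A ≤ (center (G ⧸ ⁅A, (⊤ : Subgroup G)⁆)).comap (QuotientGroup.mk' _) := by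
  rw [← map_le_iff_le_comap, ← centralizer_univ, ← coe_top,
    ← commutator_eq_bot_iff_le_centralizer,
    ← map_top_of_surjective _ (QuotientGroup.mk'_surjective _), ← map_commutator,
    Subgroup.map_eq_bot_iff, QuotientGroup.ker_mk']

variable [Finite G]

theorem commutator_top_subset_pow (A : Subgroup G) [A.Normal] [IsMulCommutative A] :
    ((⁅A, (⊤ : Subgroup G)⁆ : Subgroup G) : Set G) ⊆ commutatorSet G ^ A.index := by
  have : Fintype (G ⧸ A) := Fintype.ofFinite _
  let commMap (t : G) : A →* A := MonoidHom.id A / (MulAut.conjNormal t).toMonoidHom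
  have coe_commMap (t : G) (a : A) : (commMap t a : G) = ⁅(a : G), t⁆ := by
    simp [commMap, div_eq_mul_inv, commutatorElement_def, mul_assoc]
  let Ψ : ((G ⧸ A) → A) →* A := ∏ q : G ⧸ A, (commMap q.out).comp (Pi.evalMonoidHom _ q)
  have Ψ_apply (f : G ⧸ A → A) : Ψ f = ∏ q : G ⧸ A, commMap q.out (f q) := by simp [Ψ]
  have le_range : ⁅A, (⊤ : Subgroup G)⁆ ≤ Ψ.range.map A.subtype := by
    classical
    refine commutator_le.2 fun a ha g _ ↦ ?_
    obtain ⟨u, hu⟩ := QuotientGroup.mk_out_eq_mul A g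
    refine ⟨_, ⟨Pi.mulSingle (g : G ⧸ A) ⟨a, ha⟩, rfl⟩, ?_⟩
    have u_comm : ⁅a, (u : G)⁆ = 1 :=
      commutatorElement_eq_one_iff_commute.2 (congrArg Subtype.val (mul_comm (⟨a, ha⟩ : A) u))
    rw [Ψ_apply, Finset.prod_eq_single (g : G ⧸ A)
      (fun q _ hq ↦ by rw [Pi.mulSingle_eq_of_ne hq, map_one]) (by simp), Pi.mulSingle_eq_same,
      coe_subtype, coe_commMap, hu, commutatorElement_mul_right_eq_mul_conj, u_comm]
    simp
  intro x hx
  obtain ⟨_, ⟨f, rfl⟩, rfl⟩ := le_range hx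
  have mem_pow : Ψ f ∈ (A.subtype ⁻¹' commutatorSet G) ^ A.index := by
    rw [Ψ_apply, index, Nat.card_eq_fintype_card, ← Finset.card_univ, ← Finset.prod_const]
    exact Set.finsetProd_mem_finsetProd _ _ _ fun q _ ↦ ⟨_, _, (coe_commMap _ _).symm⟩
  refine Set.pow_subset_pow_left (Set.image_preimage_subset A.subtype _) ?_
  rw [← Set.image_pow]
  exact Set.mem_image_of_mem _ mem_pow

theorem relIndex_commutator_top_le {A : Subgroup G} [A.Normal] {s : ℕ} (hs : A.index ≤ s) :
    ⁅A, (⊤ : Subgroup G)⁆.relIndex (commutator G) ≤ bfcBound s := by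
  set K : Subgroup G := ⁅A, (⊤ : Subgroup G)⁆
  have index_center : (center (G ⧸ K)).index ≤ s := by
    rw [← index_comap_of_surjective _ (QuotientGroup.mk'_surjective K)]
    exact (index_antitone (le_comap_center_quotient A)).trans hs
  have : (commutator G).map (QuotientGroup.mk' K) = commutator (G ⧸ K) := by
    rw [commutator_def, map_commutator, ← MonoidHom.range_eq_map, QuotientGroup.range_mk']
    rfl
  rw [← QuotientGroup.ker_mk' K, relIndex_ker, this]
  exact card_commutator_le_of_index_center_le index_center

theorem commutator_subset_pow_of_isMulCommutative {A : Subgroup G} [A.Normal] [IsMulCommutative A]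
    {s : ℕ} (hs : A.index ≤ s) :
    (commutator G : Set G) ⊆ commutatorSet G ^ (bfcBound s + s) := by
  have relIndex_le := relIndex_commutator_top_le hs
  rw [commutator_eq_closure] at relIndex_le ⊢
  refine (closure_subset_pow_mul (one_mem_commutatorSet G) relIndex_le).trans ?_
  rw [pow_add]
  refine Set.mul_subset_mul_left ((commutator_top_subset_pow A).trans ?_)
  exact Set.pow_subset_pow_right (one_mem_commutatorSet G) hs

theorem commutator_subset_pow_mul {M : Subgroup G} [M.Normal] {s : ℕ} (hs : M.index ≤ s) :
    (commutator G : Set G) ⊆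
      commutatorSet G ^ (bfcBound s + s) * ((⁅M, M⁆ : Subgroup G) : Set G) := by
  let π := QuotientGroup.mk' ⁅M, M⁆
  have π_surj : Function.Surjective π := QuotientGroup.mk'_surjective _
  have comap_map : (M.map π).comap π = M :=
    comap_map_eq_self ((QuotientGroup.ker_mk' _).trans_le (commutator_le_left M M))
  have : (M.map π).Normal := Normal.map inferInstance π π_surj
  have : IsMulCommutative (M.map π) := by
    rw [← le_centralizer_iff_isMulCommutative, ← commutator_eq_bot_iff_le_centralizer,
      ← map_commutator, Subgroup.map_eq_bot_iff, QuotientGroup.ker_mk']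
  have index_map : (M.map π).index ≤ s := by
    rwa [← index_comap_of_surjective _ π_surj, comap_map]
  have commutatorSet_subset : commutatorSet (G ⧸ ⁅M, M⁆) ⊆ π '' commutatorSet G := by
    rintro _ ⟨a, b, rfl⟩
    obtain ⟨a, rfl⟩ := π_surj a
    obtain ⟨b, rfl⟩ := π_surj b
    exact ⟨⁅a, b⁆, ⟨a, b, rfl⟩, map_commutatorElement π a b⟩
  intro g hg
  have hπg : π g ∈ commutator (G ⧸ ⁅M, M⁆) :=
    commutator_mono le_top le_top (map_commutator ⊤ ⊤ π ▸ mem_map_of_mem π hg)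
  have := Set.pow_subset_pow_left commutatorSet_subset
    (commutator_subset_pow_of_isMulCommutative index_map hπg)
  rw [← Set.image_pow] at this
  obtain ⟨x, hx, hxg⟩ := this
  exact ⟨x, hx, x⁻¹ * g, QuotientGroup.eq.1 hxg, mul_inv_cancel_left x g⟩

end Width

section BoundedClassMod

variable {G : Type*} [Group G]

/-- The elements of `H` having at most `n` conjugates in `G`, taken modulo the centralizer of `H`.
Unlike the elements with at most `n` conjugates, these sets absorb the centralizer of `H`, while
still having few conjugates under `H`. -/
def boundedClassMod (H : Subgroup G) (n : ℕ) : Set G :=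
  {w | w ∈ H ∧ (centralizer {w}).index ≤ n} * (centralizer (H : Set G) : Set G)

variable {H : Subgroup G} {n k : ℕ} {a b c : G}

theorem index_centralizer_inv (a : G) : (centralizer {a⁻¹}).index = (centralizer {a}).index := by
  congr 1
  ext g
  simp only [mem_centralizer_singleton_iff]
  exact Commute.inv_right_iff

theorem index_centralizer_conj (g a : G) :
    (centralizer {g * a * g⁻¹}).index = (centralizer {a}).index := by
  rw [← natCard_isConj, ← natCard_isConj]
  refine Nat.card_congr (Equiv.subtypeEquivRight fun h ↦ ?_)
  have conj : IsConj a (g * a * g⁻¹) := isConj_iff.2 ⟨g, rfl⟩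
  exact ⟨conj.trans, conj.symm.trans⟩

theorem conj_mem_boundedClassMod [H.Normal] (g : G) (ha : a ∈ boundedClassMod H n) :
    g * a * g⁻¹ ∈ boundedClassMod H n := by
  obtain ⟨w, ⟨hw, hwn⟩, c, hc, rfl⟩ := ha
  refine ⟨g * w * g⁻¹, ⟨Normal.conj_mem inferInstance w hw g, ?_⟩, g * c * g⁻¹,
    Normal.conj_mem inferInstance c hc g, by group⟩
  rwa [index_centralizer_conj]

theorem inv_mem_boundedClassMod (ha : a ∈ boundedClassMod H n) : a⁻¹ ∈ boundedClassMod H n := by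
  obtain ⟨w, ⟨hw, hwn⟩, c, hc, rfl⟩ := ha
  have commute : Commute w c := mem_centralizer_iff.1 hc w hw
  refine ⟨w⁻¹, ⟨inv_mem hw, (index_centralizer_inv w).trans_le hwn⟩, c⁻¹, inv_mem hc, ?_⟩
  exact commute.mul_inv.symm

theorem centralizer_subset_boundedClassMod (hn : 0 < n) :
    (centralizer (H : Set G) : Set G) ⊆ boundedClassMod H n :=
  Set.subset_mul_right _ ⟨one_mem H, by
    rwa [centralizer_eq_top_iff_subset.2 (Set.singleton_subset_iff.2 (one_mem _)), index_top]⟩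

theorem mem_boundedClassMod (ha : a ∈ H) (han : (centralizer {a}).index ≤ n) :
    a ∈ boundedClassMod H n :=
  Set.subset_mul_left _ (one_mem _) ⟨ha, han⟩

theorem conjClass_mul_of_mem_centralizer (w : G) (hc : c ∈ centralizer (H : Set G)) :
    conjClass H (w * c) = (· * c) '' conjClass H w := by
  rw [conjClass, conjClass, Set.image_image]
  refine Set.image_congr fun h hh ↦ ?_
  have hc_comm : Commute h⁻¹ c := mem_centralizer_iff.1 hc h⁻¹ (inv_mem hh)
  simp only [mul_assoc, hc_comm.eq]

variable [Finite G]

theorem index_centralizer_mul_le (a b : G) :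
    (centralizer {a * b}).index ≤ (centralizer {a}).index * (centralizer {b}).index := by
  refine (index_antitone fun g hg ↦ ?_).trans index_inf_le
  obtain ⟨hga, hgb⟩ := mem_inf.1 hg
  rw [mem_centralizer_singleton_iff] at hga hgb ⊢
  exact Commute.mul_right hga hgb

theorem mul_mem_boundedClassMod (ha : a ∈ boundedClassMod H n) (hb : b ∈ boundedClassMod H k) :
    a * b ∈ boundedClassMod H (n * k) := by
  obtain ⟨w, ⟨hw, hwn⟩, c, hc, rfl⟩ := ha
  obtain ⟨w', ⟨hw', hwk⟩, c', hc', rfl⟩ := hb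
  refine ⟨w * w', ⟨mul_mem hw hw', ?_⟩, c * c', mul_mem hc hc', ?_⟩
  · exact (index_centralizer_mul_le w w').trans (Nat.mul_le_mul hwn hwk)
  · exact Commute.mul_mul_mul_comm (mem_centralizer_iff.1 hc w' hw') w c'

theorem pow_subset_boundedClassMod {S : Set G} (hS : S ⊆ boundedClassMod H n) (l : ℕ) :
    S ^ l ⊆ boundedClassMod H (n ^ l) := by
  induction l with
  | zero =>
    rw [pow_zero, pow_zero, Set.one_subset]
    exact centralizer_subset_boundedClassMod one_pos (one_mem _)
  | succ l ih =>
    rw [pow_succ, pow_succ]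
    rintro _ ⟨a, ha, b, hb, rfl⟩
    exact mul_mem_boundedClassMod (ih ha) (hS hb)

theorem ncard_conjClass_le_of_mem_boundedClassMod (ha : a ∈ boundedClassMod H n) :
    (conjClass H a).ncard ≤ n := by
  obtain ⟨w, ⟨-, hwn⟩, c, hc, rfl⟩ := ha
  rw [conjClass_mul_of_mem_centralizer w hc, Set.ncard_image_of_injective _ (mul_left_injective c)]
  exact (ncard_conjClass_le_index H w).trans hwn

end BoundedClassMod

section CentralizerMod

variable {G : Type*} [Group G]

/-- The preimage in `G` of the centralizer of `HR/R` in `G/R`. -/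
def centralizerMod (H R : Subgroup G) [R.Normal] : Subgroup G :=
  (centralizer (H.map (QuotientGroup.mk' R) : Set (G ⧸ R))).comap (QuotientGroup.mk' R)

variable {H R : Subgroup G} [R.Normal]

theorem mem_centralizerMod {z : G} : z ∈ centralizerMod H R ↔ ∀ h ∈ H, ⁅h, z⁆ ∈ R := by
  have commute_iff (h : G) : (h : G ⧸ R) * z = z * h ↔ ⁅h, z⁆ ∈ R := by
    rw [← commutatorElement_eq_one_iff_mul_comm, ← QuotientGroup.eq_one_iff]
    rfl
  simp [centralizerMod, mem_centralizer_iff, commute_iff]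

instance centralizerMod_normal [H.Normal] : (centralizerMod H R).Normal :=
  have : (H.map (QuotientGroup.mk' R)).Normal :=
    Normal.map inferInstance _ (QuotientGroup.mk'_surjective R)
  inferInstanceAs ((centralizer _).comap _).Normal

theorem ncard_conjClass_mul_le [Finite G] {p z : G} (hz : z ∈ centralizerMod H R) :
    (conjClass H (p * z)).ncard ≤ (conjClass H p).ncard * Nat.card R := by
  have subset : conjClass H (p * z) ⊆ conjClass H p * ((R : Set G) * {z}) := by
    rintro _ ⟨h, hh, rfl⟩
    refine ⟨h * p * h⁻¹, ⟨h, hh, rfl⟩, h * z * h⁻¹, ?_, by simp [mul_assoc]⟩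
    exact ⟨⁅h, z⁆, mem_centralizerMod.1 hz h hh, z, rfl, by simp [commutatorElement_def]⟩
  have ncard_coset : ((R : Set G) * {z}).ncard = Nat.card R := by
    rw [Set.mul_singleton, Set.ncard_image_of_injective _ (mul_left_injective z)]
    exact (Nat.card_coe_set_eq _).symm
  rw [← ncard_coset]
  refine (Set.ncard_le_ncard subset).trans ?_
  simpa only [Nat.card_coe_set_eq] using
    Set.natCard_mul_le (s := conjClass H p) (t := (R : Set G) * {z})

end CentralizerMod

section FewConjugates

variable {G : Type*} [Group G]

theorem commutator_le_of_commutatorElement_mul_mem {M N : Subgroup G} [N.Normal] {d e : G}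
    (h : ∀ u ∈ M, ∀ v ∈ M, ⁅d * u, e * v⁆ ∈ N) : ⁅M, M⁆ ≤ N := by
  have commute_mul {u v : G} (hu : u ∈ M) (hv : v ∈ M) :
      Commute ((d : G ⧸ N) * u) ((e : G ⧸ N) * v) := by
    rw [← commutatorElement_eq_one_iff_commute]
    exact (QuotientGroup.eq_one_iff _).2 (h u hu v hv)
  have commute_right {u v : G} (hu : u ∈ M) (hv : v ∈ M) : Commute ((d : G ⧸ N) * u) v := by
    have commute_e : Commute ((d : G ⧸ N) * u) e := by simpa using commute_mul hu (one_mem M)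
    simpa using commute_e.inv_right.mul_right (commute_mul hu hv)
  refine commutator_le.2 fun u hu v hv ↦ (QuotientGroup.eq_one_iff _).1 ?_
  have commute_d : Commute (d : G ⧸ N) v := by simpa using commute_right (one_mem M) hv
  exact commutatorElement_eq_one_iff_commute.2
    (by simpa using commute_d.inv_left.mul_left (commute_right hu hv))

variable [Finite G]

theorem card_commutator_normalClosure_le {S : Set G} {k : ℕ}
    (hk : (centralizer S).normalCore.index ≤ k) :
    Nat.card ↥⁅normalClosure S, normalClosure S⁆ ≤ bfcBound k := by
  have normalClosure_le : normalClosure S ≤ centralizer ((centralizer S).normalCore : Set G) :=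
    normalClosure_le_normal fun s hs m hm ↦ (normalCore_le _ hm s hs).symm
  refine card_commutator_self_le_bfcBound fun a ha ↦ ?_
  rw [← ncard_conjClass]
  refine (ncard_conjClass_le_index _ a).trans ((index_antitone fun m hm ↦ ?_).trans hk)
  exact mem_centralizer_singleton_iff.2 (normalClosure_le ha m hm)

theorem commutatorElement_mul_mem {H L : Subgroup G} {w c x h : G}
    (hc : c ∈ centralizer (H : Set G)) (hw : w ∈ L)
    (hreps : ∀ v ∈ conjClass H (w * c), ∃ b ∈ H ⊓ L, Commute b x ∧ b * (w * c) * b⁻¹ = v)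
    (hmax : (conjClass H (w * c * x)).ncard ≤ (conjClass H (w * c)).ncard) (hh : h ∈ H) :
    ⁅h, w * c * x⁆ ∈ ⁅L, L⁆ := by
  have hclass : conjClass H (w * c * x) = (· * x) '' conjClass H (w * c) := by
    refine conjClass_mul_eq_image (fun v hv ↦ ?_) hmax
    obtain ⟨b, hb, hbv⟩ := hreps v hv
    exact ⟨b, hb.1, hbv⟩
  obtain ⟨v, hv, hvx⟩ : h * (w * c * x) * h⁻¹ ∈ (· * x) '' conjClass H (w * c) :=
    hclass ▸ ⟨h, hh, rfl⟩
  obtain ⟨b, hb, -, rfl⟩ := hreps v hv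
  have hcb : b⁻¹ * c = c * b⁻¹ := mem_centralizer_iff.1 hc b⁻¹ (inv_mem hb.1)
  have : ⁅h, w * c * x⁆ = ⁅b, w⁆ :=
    calc ⁅h, w * c * x⁆ = b * w * (c * b⁻¹) * c⁻¹ * w⁻¹ := by
          rw [commutatorElement_def, ← hvx]; group
      _ = ⁅b, w⁆ := by rw [← hcb, commutatorElement_def]; group
  rw [this]
  exact commutator_mem_commutator hb.2 hw

variable {n : ℕ}

theorem exists_conj_eq_of_mem_conjClass (hn : commutatorSet G ⊆ boundedClassMod (commutator G) n)
    {y v : G} (hy : y ∈ commutatorSet G) (hv : v ∈ conjClass (commutator G) y) :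
    ∃ b ∈ commutator G, (centralizer {b}).index ≤ n ^ n ∧ b * y * b⁻¹ = v := by
  obtain ⟨h, hh, rfl⟩ := hv
  have relIndex_le : (centralizer {y}).relIndex (closure (commutatorSet G)) ≤ n := by
    rw [← commutator_eq_closure, ← ncard_conjClass]
    exact ncard_conjClass_le_of_mem_boundedClassMod (hn hy)
  obtain ⟨p, hp, k, hk, rfl⟩ := closure_subset_pow_mul (one_mem_commutatorSet G) relIndex_le
    (commutator_eq_closure G ▸ hh)
  obtain ⟨b, ⟨hb, hbn⟩, c, hc, rfl⟩ := pow_subset_boundedClassMod hn n hp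
  refine ⟨b, hb, hbn, ?_⟩
  have hky : k * y = y * k := mem_centralizer_singleton_iff.1 hk
  have hcy : c * y = y * c := (mem_centralizer_iff.1 hc y
    (commutator_eq_closure G ▸ subset_closure hy)).symm
  have hcky : Commute (c * k) y := Commute.mul_left hcy hky
  calc b * y * b⁻¹ = b * (y * (c * k)) * (c * k)⁻¹ * b⁻¹ := by group
    _ = b * c * k * y * (b * c * k)⁻¹ := by rw [← hcky.eq]; group

/-- A bound for the index of the normal subgroup provided by `exists_commutator_le_centralizerMod`
when commutators lie in `boundedClassMod _ n`. -/
def coreIndexBound (n : ℕ) : ℕ := ((n ^ n) ^ (n + 1)).factorial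

theorem index_normalCore_le_coreIndexBound {w : G} {B : Set G} (hw : (centralizer {w}).index ≤ n)
    (hB : ∀ b ∈ B, (centralizer {b}).index ≤ n ^ n) (hcard : B.ncard ≤ n) :
    (centralizer (insert w B)).normalCore.index ≤ coreIndexBound n := by
  have hn : 0 < n := (Nat.pos_of_ne_zero index_ne_zero_of_finite).trans_le hw
  have index_le : ∀ s ∈ insert w B, (centralizer {s}).index ≤ n ^ n := by
    rintro s (rfl | hs)
    · exact hw.trans (Nat.le_self_pow hn.ne' n)
    · exact hB s hs
  have ncard_le : (insert w B).ncard ≤ n + 1 :=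
    (Set.ncard_insert_le w B).trans (Nat.add_le_add_right hcard 1)
  exact (index_normalCore_le_factorial _).trans (Nat.factorial_le
    ((index_centralizer_le_pow index_le).trans (Nat.pow_le_pow_right (pow_pos hn n) ncard_le)))

theorem exists_commutator_le_centralizerMod
    (hn : commutatorSet G ⊆ boundedClassMod (commutator G) n) :
    ∃ (M R : Subgroup G) (_ : M.Normal) (_ : R.Normal), M.index ≤ coreIndexBound n ∧
      Nat.card R ≤ bfcBound (coreIndexBound n) ∧ ⁅M, M⁆ ≤ centralizerMod (commutator G) R := by
  obtain ⟨⟨d, e⟩, hmax⟩ := Finite.exists_max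
    fun q : G × G ↦ (conjClass (commutator G) ⁅q.1, q.2⁆).ncard
  obtain ⟨w, ⟨-, hwn⟩, c, hc, hwc : w * c = ⁅d, e⁆⟩ := hn ⟨d, e, rfl⟩
  choose! β hβ using fun v ↦ exists_conj_eq_of_mem_conjClass hn (v := v) ⟨d, e, rfl⟩
  let S : Set G := insert w (β '' conjClass (commutator G) ⁅d, e⁆)
  let M := (centralizer S).normalCore
  let L := normalClosure S
  have hM : M.index ≤ coreIndexBound n := index_normalCore_le_coreIndexBound hwn
    (Set.forall_mem_image.2 fun v hv ↦ (hβ v hv).2.1)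
    ((Set.ncard_image_le).trans (ncard_conjClass_le_of_mem_boundedClassMod (hn ⟨d, e, rfl⟩)))
  have hwL : w ∈ L := subset_normalClosure (Set.mem_insert w _)
  have hβL : ∀ v ∈ conjClass (commutator G) ⁅d, e⁆, β v ∈ L := fun v hv ↦
    subset_normalClosure (Set.mem_insert_of_mem w (Set.mem_image_of_mem β hv))
  refine ⟨M, ⁅L, L⁆, inferInstance, inferInstance, hM, card_commutator_normalClosure_le hM,
    commutator_le_of_commutatorElement_mul_mem (d := d) (e := e) fun u hu v hv ↦ ?_⟩
  obtain ⟨x, hx, hxuv⟩ : ∃ x ∈ M, ⁅d, e⁆ * x = ⁅d * u, e * v⁆ := by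
    refine ⟨⁅d, e⁆⁻¹ * ⁅d * u, e * v⁆, QuotientGroup.eq.1 ?_, mul_inv_cancel_left _ _⟩
    simp only [← QuotientGroup.mk'_apply, map_commutatorElement, map_mul]
    simp only [QuotientGroup.mk'_apply, (QuotientGroup.eq_one_iff _).2 hu,
      (QuotientGroup.eq_one_iff _).2 hv, mul_one]
  rw [mem_centralizerMod, ← hxuv, ← hwc]
  intro h hh
  refine commutatorElement_mul_mem hc hwL ?_ ?_ hh
  · rw [hwc]
    exact fun v hv ↦ ⟨β v, ⟨(hβ v hv).1, hβL v hv⟩,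
      normalCore_le _ hx _ (Set.mem_insert_of_mem w (Set.mem_image_of_mem β hv)), (hβ v hv).2.2⟩
  · rw [hwc, hxuv]
    exact hmax (d * u, e * v)

/-- A bound for the order of `G''` when commutators lie in `boundedClassMod _ n`. -/
def secondDerivedBound (n : ℕ) : ℕ :=
  bfcBound (n ^ (bfcBound (coreIndexBound n) + coreIndexBound n) * bfcBound (coreIndexBound n))

theorem card_commutator_commutator_le (hn : commutatorSet G ⊆ boundedClassMod (commutator G) n) :
    Nat.card ↥⁅commutator G, commutator G⁆ ≤ secondDerivedBound n := by
  obtain ⟨M, R, _, _, hM, hR, hMR⟩ := exists_commutator_le_centralizerMod hn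
  refine card_commutator_self_le_bfcBound fun a ha ↦ ?_
  obtain ⟨p, hp, z, hz, rfl⟩ := commutator_subset_pow_mul hM ha
  rw [← ncard_conjClass]
  refine (ncard_conjClass_mul_le (hMR hz)).trans (Nat.mul_le_mul ?_ hR)
  exact ncard_conjClass_le_of_mem_boundedClassMod (pow_subset_boundedClassMod hn _ hp)

end FewConjugates

section Generation

variable {G : Type*} [Group G]

theorem mem_Xset_iff {z : G} : z ∈ Xset G ↔ ∃ (p : ℕ) (_ : Fact p.Prime) (P : Sylow p G),
    z ∈ P ∧ ∃ x ∈ P, ∃ y, ⁅x, y⁆ = z := by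
  constructor
  · rintro ⟨p, hp, P, x, y, hz, hx, hzP⟩
    exact ⟨p, hp, P, hzP, x⁻¹, inv_mem hx, y⁻¹, by rw [hz, commutatorElement_def, inv_inv, inv_inv]⟩
  · rintro ⟨p, hp, P, hzP, x, hx, y, rfl⟩
    exact ⟨p, hp, P, x⁻¹, y⁻¹, by rw [commutatorElement_def, inv_inv, inv_inv], inv_mem hx, hzP⟩

theorem Xset_subset_commutator : Xset G ⊆ commutator G := by
  intro z hz
  obtain ⟨_, _, _, _, x, _, y, rfl⟩ := mem_Xset_iff.1 hz
  exact commutator_mem_commutator (mem_top x) (mem_top y)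

theorem one_mem_Xset : (1 : G) ∈ Xset G :=
  mem_Xset_iff.2 ⟨2, ⟨Nat.prime_two⟩, default, one_mem _, 1, one_mem _, 1,
    commutatorElement_one_left 1⟩

variable [Finite G]

theorem commutator_inf_sylow_le_closure_Xset {p : ℕ} [hp : Fact p.Prime] (P : Sylow p G) :
    commutator G ⊓ P ≤ closure (Xset G) := by
  rw [commutator_inf_eq_focalSubgroup, focalSubgroup_def]
  exact closure_mono fun z ⟨hz, x, hx, y, hxy⟩ ↦ mem_Xset_iff.2 ⟨p, hp, P, hz, x, hx, y, hxy.symm⟩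

theorem commutator_le_closure_Xset : commutator G ≤ closure (Xset G) := by
  rw [← relIndex_eq_one, Nat.eq_one_iff_not_exists_prime_dvd]
  intro p hp hdvd
  have : Fact p.Prime := ⟨hp⟩
  obtain ⟨Q⟩ : Nonempty (Sylow p (commutator G)) := inferInstance
  obtain ⟨P, hQP⟩ := (Q.isPGroup'.map (commutator G).subtype).exists_le_sylow
  have hQ : (Q : Subgroup (commutator G)) ≤ (closure (Xset G)).subgroupOf (commutator G) :=
    map_le_iff_le_comap.1 <| (le_inf (map_subtype_le _) hQP).trans
      (commutator_inf_sylow_le_closure_Xset P)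
  exact Q.not_dvd_index (hdvd.trans (index_dvd_of_le hQ))

end Generation

section PowerSubgroups

variable {G : Type*} [Group G]

/-- The subgroup generated by the `p`-th powers of the elements of `S`. -/
def powSubgroup (p : ℕ) (S : Subgroup G) : Subgroup G :=
  closure ((· ^ p) '' (S : Set G))

/-- The last term of the series that starts with `S` and in which each term is generated by the
`p`-th powers of the previous one, where `p` runs through `ps` from right to left. -/
def iteratedPowSubgroup (ps : List ℕ) (S : Subgroup G) : Subgroup G :=
  ps.foldr powSubgroup S

variable {p : ℕ} {ps qs : List ℕ} {S T : Subgroup G}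

theorem pow_mem_powSubgroup {x : G} (hx : x ∈ S) : x ^ p ∈ powSubgroup p S :=
  subset_closure ⟨x, hx, rfl⟩

theorem powSubgroup_le_iff : powSubgroup p S ≤ T ↔ ∀ x ∈ S, x ^ p ∈ T := by
  rw [powSubgroup, closure_le, Set.image_subset_iff]
  rfl

theorem powSubgroup_mono (hST : S ≤ T) : powSubgroup p S ≤ powSubgroup p T :=
  closure_mono (Set.image_mono hST)

theorem powSubgroup_le : powSubgroup p S ≤ S :=
  powSubgroup_le_iff.2 fun _ hx ↦ pow_mem hx p

theorem map_powSubgroup {Q : Type*} [Group Q] (φ : G →* Q) :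
    (powSubgroup p S).map φ = powSubgroup p (S.map φ) := by
  simp only [powSubgroup, MonoidHom.map_closure, coe_map, Set.image_image, map_pow]

instance powSubgroup_normal [S.Normal] : (powSubgroup p S).Normal := by
  refine ⟨fun x hx g ↦ ?_⟩
  have hgx : g * x * g⁻¹ ∈ (powSubgroup p S).map (MulAut.conj g).toMonoidHom := ⟨x, hx, rfl⟩
  rw [map_powSubgroup] at hgx
  refine powSubgroup_mono (map_le_iff_le_comap.2 fun y hy ↦ ?_) hgx
  exact Normal.conj_mem inferInstance y hy g

theorem map_iteratedPowSubgroup {Q : Type*} [Group Q] (φ : G →* Q) :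
    (iteratedPowSubgroup ps S).map φ = iteratedPowSubgroup ps (S.map φ) := by
  induction ps with
  | nil => rfl
  | cons p ps ih =>
    rw [iteratedPowSubgroup, List.foldr_cons, map_powSubgroup]
    exact congrArg (powSubgroup p) ih

instance iteratedPowSubgroup_normal [S.Normal] : (iteratedPowSubgroup ps S).Normal := by
  induction ps with
  | nil => assumption
  | cons p ps ih => exact powSubgroup_normal (S := iteratedPowSubgroup ps S)

theorem iteratedPowSubgroup_append :
    iteratedPowSubgroup (ps ++ qs) S = iteratedPowSubgroup ps (iteratedPowSubgroup qs S) :=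
  List.foldr_append

theorem iteratedPowSubgroup_le : iteratedPowSubgroup ps S ≤ S := by
  induction ps with
  | nil => exact le_rfl
  | cons p ps ih => exact powSubgroup_le.trans ih

theorem iteratedPowSubgroup_le_powSubgroup (hp : p ∈ ps) :
    iteratedPowSubgroup ps S ≤ powSubgroup p S := by
  induction ps with
  | nil => cases hp
  | cons q ps ih =>
    obtain rfl | hp := List.mem_cons.1 hp
    · exact powSubgroup_mono iteratedPowSubgroup_le
    · exact powSubgroup_le.trans (ih hp)

theorem range_powMonoidHom_ne_top {A : Type*} [CommGroup A] [Finite A] [Fact p.Prime]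
    (hp : p ∣ Nat.card A) : (powMonoidHom p : A →* A).range ≠ ⊤ := by
  intro range_eq_top
  have injective : Function.Injective (powMonoidHom p : A →* A) :=
    Finite.injective_iff_surjective.2 (MonoidHom.range_eq_top.1 range_eq_top)
  obtain ⟨a, ha⟩ := exists_prime_orderOf_dvd_card' p hp
  have ha_one : a = 1 := injective (by
    rw [map_one, powMonoidHom_apply, ← ha, pow_orderOf_eq_one])
  rw [ha_one, orderOf_one] at ha
  exact (Fact.out : p.Prime).one_lt.ne ha

theorem exists_powSubgroup_top_lt (H : Type*) [Group H] [Finite H] [Nontrivial H]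
    [Group.IsSolvable H] :
    ∃ p, p.Prime ∧ p ∣ Nat.card H ∧ powSubgroup p (⊤ : Subgroup H) < ⊤ := by
  have card_ne_one : Nat.card (Abelianization H) ≠ 1 := fun h ↦
    (Group.IsSolvable.commutator_lt_top_of_nontrivial H).ne (index_eq_one.1 h)
  obtain ⟨p, hp, hdvd⟩ := Nat.exists_prime_and_dvd card_ne_one
  have : Fact p.Prime := ⟨hp⟩
  refine ⟨p, hp, hdvd.trans (card_quotient_dvd_card _), lt_top_iff_ne_top.2 fun h ↦ ?_⟩
  have comap_range_eq_top :
      (powMonoidHom p : Abelianization H →* _).range.comap Abelianization.of = ⊤ :=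
    top_le_iff.1 <| h ▸ powSubgroup_le_iff.2 fun x _ ↦ ⟨Abelianization.of x, rfl⟩
  refine range_powMonoidHom_ne_top hdvd ?_
  exact comap_injective (QuotientGroup.mk'_surjective (commutator H)) comap_range_eq_top

theorem exists_powSubgroup_lt [Finite S] [Group.IsSolvable S] (hS : S ≠ ⊥) :
    ∃ p, p.Prime ∧ p ∣ Nat.card S ∧ powSubgroup p S < S := by
  have : Nontrivial S := (nontrivial_iff_ne_bot S).2 hS
  obtain ⟨p, hp, hdvd, hlt⟩ := exists_powSubgroup_top_lt S
  have map_lt := map_lt_map_iff_of_injective S.subtype_injective |>.2 hlt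
  rw [map_powSubgroup, ← MonoidHom.range_eq_map, range_subtype] at map_lt
  exact ⟨p, hp, hdvd, map_lt⟩

theorem iteratedPowSubgroup_flatten_replicate_eq_bot [Finite G] [Group.IsSolvable G]
    (hps : ∀ p, p.Prime → p ≤ Nat.card G → p ∈ ps) {j : ℕ} (hS : Nat.card S ≤ j + 1) :
    iteratedPowSubgroup (List.replicate j ps).flatten S = ⊥ := by
  induction j generalizing S with
  | zero => exact (card_le_one_iff_eq_bot S).1 hS
  | succ j ih =>
    by_cases hbot : S = ⊥
    · exact eq_bot_iff.2 (iteratedPowSubgroup_le.trans hbot.le)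
    · obtain ⟨p, hp, hdvd, hlt⟩ := exists_powSubgroup_lt hbot
      have hpG : p ≤ Nat.card G :=
        (Nat.le_of_dvd Nat.card_pos hdvd).trans (card_le_card_group S)
      have iterated_lt : iteratedPowSubgroup ps S < S :=
        (iteratedPowSubgroup_le_powSubgroup (hps p hp hpG)).trans_lt hlt
      have card_lt : Nat.card (iteratedPowSubgroup ps S) < Nat.card S :=
        Set.ncard_lt_ncard iterated_lt
      rw [List.replicate_succ', List.flatten_append, List.flatten_singleton,
        iteratedPowSubgroup_append]
      exact ih (Nat.le_of_lt_succ (card_lt.trans_le hS))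

/-- The primes up to `N`, repeated `N` times: long enough for the iterated power subgroups of every
soluble group of order at most `N` to reach `⊥`. -/
def primeCycle (N : ℕ) : List ℕ :=
  (List.replicate N ((List.range (N + 1)).filter Nat.Prime)).flatten

theorem prime_of_mem_primeCycle {N : ℕ} (hp : p ∈ primeCycle N) : p.Prime := by
  obtain ⟨l, hl, hpl⟩ := List.mem_flatten.1 hp
  rw [List.eq_of_mem_replicate hl] at hpl
  exact of_decide_eq_true (List.mem_filter.1 hpl).2

theorem iteratedPowSubgroup_primeCycle_le_ker {Q : Type*} [Group Q] [Finite Q]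
    [Group.IsSolvable Q] (φ : G →* Q) {N : ℕ} (hN : Nat.card Q ≤ N) :
    iteratedPowSubgroup (primeCycle N) S ≤ φ.ker := by
  rw [← Subgroup.map_eq_bot_iff, map_iteratedPowSubgroup]
  refine iteratedPowSubgroup_flatten_replicate_eq_bot (fun p hp hpQ ↦ ?_) ?_
  · exact List.mem_filter.2
      ⟨List.mem_range.2 (Nat.lt_succ_of_le (hpQ.trans hN)), decide_eq_true hp⟩
  · exact (card_le_card_group _).trans (hN.trans N.le_succ)

end PowerSubgroups

section SylowCover

variable {G : Type*} [Group G] {p : ℕ} [hp : Fact p.Prime]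

theorem commutatorElement_mem_Xset_of_mem_normalizer {B : Subgroup G} (hB : IsPGroup p B)
    {b u : G} (hb : b ∈ B) (hu : u ∈ normalizer (B : Set G)) : ⁅b, u⁆ ∈ Xset G := by
  obtain ⟨P, hBP⟩ := hB.exists_le_sylow
  refine mem_Xset_iff.2 ⟨p, hp, P, hBP ?_, b, hBP hb, u, rfl⟩
  rw [commutatorElement_def, mul_assoc b u, mul_assoc b]
  exact mul_mem hb ((mem_normalizer_iff.1 hu b⁻¹).1 (inv_mem hb))

variable [Finite G]

theorem sylow_sup_eq_top (P : Sylow p G) {K : Subgroup G} [K.Normal] (hK : ∀ x, x ^ p ∈ K) :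
    ↑P ⊔ K = ⊤ := by
  rw [← index_eq_one, Nat.eq_one_iff_not_exists_prime_dvd]
  intro q hq hdvd
  have : Fact q.Prime := ⟨hq⟩
  obtain ⟨x, hx⟩ := exists_prime_orderOf_dvd_card' (G := G ⧸ K) q
    (hdvd.trans (index_dvd_of_le le_sup_right))
  have pow_eq_one : x ^ p = 1 := by
    induction x using QuotientGroup.induction_on with
    | H x => rw [← QuotientGroup.mk_pow, QuotientGroup.eq_one_iff]; exact hK x
  obtain rfl : q = p :=
    (Nat.prime_dvd_prime_iff_eq hq hp.out).1 (hx ▸ orderOf_dvd_of_pow_eq_one pow_eq_one)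
  exact P.not_dvd_index (hdvd.trans (index_dvd_of_le le_sup_left))

theorem exists_isPGroup_le_sup (L N K : Subgroup G) [N.Normal] [K.Normal]
    (hNK : ∀ x ∈ N, x ^ p ∈ K) :
    ∃ B ≤ L, IsPGroup p B ∧ L ≤ (L ⊓ normalizer (B : Set G)) ⊔ N ∧ L ⊓ N ≤ B ⊔ K := by
  obtain ⟨P⟩ : Nonempty (Sylow p (N.subgroupOf L)) := inferInstance
  let PL : Subgroup L := (P : Subgroup (N.subgroupOf L)).map (N.subgroupOf L).subtype
  refine ⟨PL.map L.subtype, map_subtype_le _, (P.isPGroup'.map _).map _, ?_, ?_⟩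
  · have frattini : normalizer (PL : Set L) ⊔ N.subgroupOf L = ⊤ := Sylow.normalizer_sup_eq_top P
    have := congrArg (map L.subtype) frattini
    rw [Subgroup.map_sup, ← MonoidHom.range_eq_map, range_subtype] at this
    refine this.ge.trans (sup_le_sup (le_inf (map_subtype_le _) (le_normalizer_map _)) ?_)
    exact (subgroupOf_map_subtype N L).le.trans inf_le_left
  · have hK : ∀ x, x ^ p ∈ (K.subgroupOf L).subgroupOf (N.subgroupOf L) := fun x ↦ hNK _ x.2
    have cover : ⊤ ≤ (PL.map L.subtype ⊔ K).comap (L.subtype.comp (N.subgroupOf L).subtype) :=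
      sylow_sup_eq_top P hK ▸ sup_le (fun b hb ↦ mem_sup_left ⟨b, ⟨b, hb, rfl⟩, rfl⟩)
        fun x hx ↦ mem_sup_right hx
    exact fun z ⟨hzL, hzN⟩ ↦ cover (mem_top (⟨⟨z, hzL⟩, hzN⟩ : N.subgroupOf L))

theorem exists_subset_pow_mul_iteratedPowSubgroup {ps : List ℕ} (hps : ∀ p ∈ ps, p.Prime)
    (L : Subgroup G) :
    ∃ U ⊆ (L : Set G), (∀ u ∈ U, ∀ v ∈ U, ⁅u, v⁆ ∈ Xset G ∨ ⁅v, u⁆ ∈ Xset G) ∧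
      (L : Set G) ⊆ U ^ ps.length * (iteratedPowSubgroup ps (⊤ : Subgroup G) : Set G) := by
  induction ps generalizing L with
  | nil => exact ⟨∅, by simp, by simp, by simp [iteratedPowSubgroup]⟩
  | cons p ps ih =>
    rw [List.forall_mem_cons] at hps
    have : Fact p.Prime := ⟨hps.1⟩
    obtain ⟨B, hBL, hB, hL, hLN⟩ := exists_isPGroup_le_sup (p := p) L (iteratedPowSubgroup ps ⊤)
      (iteratedPowSubgroup (p :: ps) ⊤) fun x hx ↦ pow_mem_powSubgroup hx
    obtain ⟨U, hUL, hUU, hU⟩ := ih hps.2 (L ⊓ normalizer (B : Set G))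
    refine ⟨U ∪ B, Set.union_subset (hUL.trans inf_le_left) hBL, ?_, fun g hg ↦ ?_⟩
    · rintro u (hu | hu) v (hv | hv)
      · exact hUU u hu v hv
      · exact .inr (commutatorElement_mem_Xset_of_mem_normalizer hB hv (hUL hu).2)
      · exact .inl (commutatorElement_mem_Xset_of_mem_normalizer hB hu (hUL hv).2)
      · exact .inl (commutatorElement_mem_Xset_of_mem_normalizer hB hu (le_normalizer hv))
    · obtain ⟨n, hn, x, hx, rfl⟩ := mem_sup_of_normal_right.1 (hL hg)
      obtain ⟨w, hw, y, hy, rfl⟩ := hU hn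
      have hwL : w ∈ L := Subgroup.pow_subset (hUL.trans inf_le_left) hw
      have hyx : y * x ∈ L := by
        rwa [SetLike.mem_coe, mul_assoc, mul_mem_cancel_left hwL] at hg
      obtain ⟨b, hb, z, hz, hbz⟩ := mem_sup_of_normal_right.1 (hLN ⟨hyx, mul_mem hy hx⟩)
      refine ⟨w * b, ?_, z, hz, ?_⟩
      · rw [List.length_cons, pow_succ]
        exact Set.mul_mem_mul (Set.pow_subset_pow_left Set.subset_union_left hw) (.inr hb)
      · simp only [mul_assoc, hbz]

end SylowCover

section SolubleGroups

variable {G : Type*} [Group G] [Finite G]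

theorem commutatorElement_mem_boundedClassMod_of_mem_pow_left {H : Subgroup G} [H.Normal]
    {V : Set G} {n : ℕ} {h : G} (hV : ∀ v ∈ V, ⁅v, h⁆ ∈ boundedClassMod H n) {g : G} {l : ℕ}
    (hg : g ∈ V ^ l) : ⁅g, h⁆ ∈ boundedClassMod H (n ^ l) := by
  induction l generalizing g with
  | zero =>
    rw [Set.mem_one.1 hg, commutatorElement_one_left]
    exact centralizer_subset_boundedClassMod one_pos (one_mem _)
  | succ l ih =>
    rw [pow_succ'] at hg
    obtain ⟨v, hv, w, hw, rfl⟩ := hg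
    rw [commutatorElement_mul_left_eq_conj_mul, pow_succ]
    exact mul_mem_boundedClassMod (conj_mem_boundedClassMod v (ih hw)) (hV v hv)

theorem commutatorElement_mem_boundedClassMod_of_mem_pow {H : Subgroup G} [H.Normal] {V : Set G}
    {n : ℕ} (hV : ∀ u ∈ V, ∀ v ∈ V, ⁅u, v⁆ ∈ boundedClassMod H n) {g h : G} {l : ℕ}
    (hg : g ∈ V ^ l) (hh : h ∈ V ^ l) : ⁅g, h⁆ ∈ boundedClassMod H ((n ^ l) ^ l) := by
  refine commutatorElement_mem_boundedClassMod_of_mem_pow_left (fun u hu ↦ ?_) hg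
  rw [← commutatorElement_inv]
  exact inv_mem_boundedClassMod
    (commutatorElement_mem_boundedClassMod_of_mem_pow_left (fun v hv ↦ hV v hv u hu) hh)

theorem iteratedPowSubgroup_primeCycle_le_centralizer_commutator [Group.IsSolvable G] {m : ℕ}
    (hm : ∀ x ∈ Xset G, (centralizer {x}).index ≤ m) :
    iteratedPowSubgroup (primeCycle m.factorial) ⊤ ≤ centralizer (commutator G : Set G) := by
  have le_centralizer_singleton : ∀ x ∈ Xset G,
      iteratedPowSubgroup (primeCycle m.factorial) ⊤ ≤ centralizer {x} := by
    intro x hx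
    have index_le : (centralizer {x}).normalCore.index ≤ m.factorial :=
      (index_normalCore_le_factorial _).trans (Nat.factorial_le (hm x hx))
    refine le_trans ?_ (normalCore_le (centralizer {x}))
    rw [← QuotientGroup.ker_mk' (centralizer {x}).normalCore]
    exact iteratedPowSubgroup_primeCycle_le_ker _ index_le
  calc iteratedPowSubgroup (primeCycle m.factorial) ⊤
      ≤ centralizer (Xset G) := by
        rw [centralizer_eq_iInf]
        exact le_iInf₂ le_centralizer_singleton
    _ = centralizer (closure (Xset G) : Set G) := (centralizer_closure _).symm
    _ ≤ centralizer (commutator G : Set G) := centralizer_le commutator_le_closure_Xset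

/-- A bound, modulo the centralizer of `G'`, for the number of conjugates of a commutator in a
finite soluble group `G` in which elements of `Xset G` have at most `m` conjugates. -/
def commutatorClassBound (m : ℕ) : ℕ :=
  let l := (primeCycle m.factorial).length + 1
  (m ^ l) ^ l

theorem commutatorSet_subset_boundedClassMod [Group.IsSolvable G] {m : ℕ}
    (hm : ∀ x ∈ Xset G, (centralizer {x}).index ≤ m) :
    commutatorSet G ⊆ boundedClassMod (commutator G) (commutatorClassBound m) := by
  have hm_pos : 0 < m := (Nat.pos_of_ne_zero index_ne_zero_of_finite).trans_le (hm 1 one_mem_Xset)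
  have mem_of_mem_Xset : ∀ x ∈ Xset G, x ∈ boundedClassMod (commutator G) m := fun x hx ↦
    mem_boundedClassMod (Xset_subset_commutator hx) (hm x hx)
  obtain ⟨U, -, hUU, hU⟩ := exists_subset_pow_mul_iteratedPowSubgroup
    (fun _ hp ↦ prime_of_mem_primeCycle hp) (⊤ : Subgroup G) (ps := primeCycle m.factorial)
  let C := centralizer (commutator G : Set G)
  have mem_of_mem_C {c : G} (hc : c ∈ C) : c ∈ boundedClassMod (commutator G) m :=
    centralizer_subset_boundedClassMod hm_pos hc
  let V : Set G := U ∪ C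
  have mem_pow (g : G) : g ∈ V ^ ((primeCycle m.factorial).length + 1) := by
    obtain ⟨w, hw, c, hc, rfl⟩ := hU (mem_top g)
    rw [pow_succ]
    exact Set.mul_mem_mul (Set.pow_subset_pow_left Set.subset_union_left hw)
      (.inr (iteratedPowSubgroup_primeCycle_le_centralizer_commutator hm hc))
  rintro _ ⟨g, h, rfl⟩
  refine commutatorElement_mem_boundedClassMod_of_mem_pow ?_ (mem_pow g) (mem_pow h)
  rintro u (hu | hu) v (hv | hv)
  · obtain huv | hvu := hUU u hu v hv
    · exact mem_of_mem_Xset _ huv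
    · rw [← commutatorElement_inv]
      exact inv_mem_boundedClassMod (mem_of_mem_Xset _ hvu)
  · exact mem_of_mem_C (commutator_le_right ⊤ C (commutator_mem_commutator (mem_top u) hv))
  all_goals exact mem_of_mem_C (commutator_le_left C ⊤ (commutator_mem_commutator hu (mem_top v)))

end SolubleGroups

end BoundedClasses

open BoundedClasses in
theorem second_derived_bounded_soluble_general {G : Type*} [Group G] [Finite G] [Group.IsSolvable G]
    {m : ℕ} (hm : ∀ x ∈ Xset G, Nat.card {h : G // IsConj x h} ≤ m) :
    Nat.card (derivedSeries G 2) ≤ secondDerivedBound (commutatorClassBound m) :=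
  card_commutator_commutator_le <| commutatorSet_subset_boundedClassMod fun x hx ↦
    (natCard_isConj x).symm.trans_le (hm x hx)

/-- If `G` is a finite soluble group with `|x^G| ≤ m` for all `x ∈ Xset G`, then the
second derived subgroup `G''` has `m`-bounded order. -/
theorem second_derived_bounded_soluble :
    ∃ f : ℕ → ℕ, ∀ (G : Type) (_ : Group G) (_ : Finite G), IsSolvable G →
      ∀ m : ℕ, 0 < m →
      (∀ x ∈ Xset G, Nat.card {h : G // IsConj x h} ≤ m) →
      Nat.card (derivedSeries G 2) ≤ f m :=
  ⟨fun m ↦ BoundedClasses.secondDerivedBound (BoundedClasses.commutatorClassBound m),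
    fun _ _ _ (_ : Group.IsSolvable _) _ _ hm ↦ second_derived_bounded_soluble_general hm⟩
end

section
/- Let m be a positive integer and G a finite group such that |x^G| ≤ m for every x ∈ X(G). Let R be the soluble radical of G. Then the order of G/R is bounded by a function of m only. -/
/-!
By lifting through `G → G ⧸ R` one may assume `R = 1`, i.e. that `G` has no nontrivial abelian
normal subgroup. A minimal normal subgroup `M` is then perfect, so by Burnside's transfer theorem
it contains a nontrivial `p`-element of `X(G)` for every prime `p` dividing `|M|`. Its centralizer
has index at most `m`, the core of that centralizer has index at most `m!` and centralizes `M`, and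
`M` embeds in `G ⧸ C_G(M)`. In particular only primes `p ≤ m!` occur.

For a fixed `p`, the product of two `p`-elements of `X(G)` lying in commuting normal subgroups is
again one. Take `N_p` maximal among the normal subgroups `N` containing a `p`-element of `X(N)` such
that every normal subgroup of `G` centralizing this one element centralizes `N`. Again
`|G : C_G(N_p)| ≤ m!`, and by maximality `C_G(N_p)` contains no minimal normal subgroup of order
divisible by `p`. Therefore the intersection of the `C_G(N_p)` over the primes `p ≤ m!` is trivial,
and `|G| ≤ (m!) ^ π(m!)`.
-/

open Subgroup
open scoped Nat Nat.Prime

section Centralizers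

variable {G : Type*} [Group G]

theorem card_isConj_eq_index_centralizer (x : G) :
    Nat.card {h : G // IsConj x h} = (centralizer {x}).index := by
  have horbit : MulAction.orbit (ConjAct G) x = {h | IsConj x h} :=
    Set.ext fun h => ConjAct.mem_orbit_conjAct.trans isConj_comm
  calc Nat.card {h : G // IsConj x h} = (MulAction.orbit (ConjAct G) x).ncard := by
        rw [horbit]; rfl
    _ = (MulAction.stabilizer (ConjAct G) x).index := (MulAction.index_stabilizer _ x).symm
    _ = ((MulAction.stabilizer (ConjAct G) x).comap
          (ConjAct.toConjAct : G ≃* ConjAct G).toMonoidHom).index :=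
        (index_comap_of_surjective _ ConjAct.toConjAct.surjective).symm
    _ = (centralizer {x}).index := congrArg index (centralizer_eq_comap_stabilizer x).symm

theorem index_normalCore_dvd_factorial (H : Subgroup G) [H.FiniteIndex] :
    H.normalCore.index ∣ H.index ! := by
  rw [normalCore_eq_ker, index_ker, index_eq_card, ← Nat.card_perm]
  exact card_subgroup_dvd_card (MulAction.toPermHom G (G ⧸ H)).range

theorem index_centralizer_map_le_of_surjective {H : Type*} [Group H] {f : G →* H}
    (hf : Function.Surjective f) (x : G) [(centralizer {x}).FiniteIndex] :
    (centralizer {f x}).index ≤ (centralizer {x}).index := by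
  have hmap : (centralizer {x}).map f ≤ centralizer {f x} := by
    simpa only [Set.image_singleton] using map_centralizer_le_centralizer_image {x} f
  exact Nat.le_of_dvd (Nat.pos_of_ne_zero FiniteIndex.index_ne_zero)
    ((index_dvd_of_le hmap).trans (index_map_dvd _ hf))

theorem card_dvd_index_of_disjoint {M K : Subgroup G} [K.Normal] (h : Disjoint K M) :
    Nat.card M ∣ K.index := by
  rw [← relIndex_bot_left, ← h.eq_bot, inf_relIndex_right]
  exact relIndex_dvd_index_of_normal K M

theorem centralizer_mul_le_of_disjoint {M N : Subgroup G} [M.Normal] [N.Normal]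
    (h : Disjoint M N) {z x : G} (hz : z ∈ M) (hx : x ∈ N) :
    centralizer {z * x} ≤ centralizer {z} ⊓ centralizer {x} := by
  intro c hc
  rw [mem_centralizer_singleton_iff, ← mul_inv_eq_iff_eq_mul] at hc
  have hzx : c * z * c⁻¹ * (c * x * c⁻¹) = z * x := by rw [← hc]; group
  have hfactors := mul_injective_of_disjoint h
    (a₁ := (⟨c * z * c⁻¹, Normal.conj_mem ‹_› z hz c⟩, ⟨c * x * c⁻¹, Normal.conj_mem ‹_› x hx c⟩))
    (a₂ := (⟨z, hz⟩, ⟨x, hx⟩)) hzx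
  simpa only [Prod.mk.injEq, Subtype.mk.injEq, mul_inv_eq_iff_eq_mul, mem_inf,
    mem_centralizer_singleton_iff] using hfactors

end Centralizers

section Lifting

variable {G H : Type*} [Group G] [Group H]

theorem isPGroup_subgroup_prod {p : ℕ} {Q : Subgroup G} {S : Subgroup H} (hQ : IsPGroup p Q)
    (hS : IsPGroup p S) : IsPGroup p (Q.prod S) := by
  rintro ⟨⟨a, b⟩, ha, hb⟩
  obtain ⟨k, hk⟩ := hQ ⟨a, ha⟩
  obtain ⟨l, hl⟩ := hS ⟨b, hb⟩
  simp only [Subtype.ext_iff, SubmonoidClass.mk_pow, OneMemClass.coe_one] at hk hl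
  refine ⟨k + l, Subtype.ext (Prod.ext ?_ ?_)⟩
  · change a ^ p ^ (k + l) = 1
    rw [pow_add, pow_mul, hk, one_pow]
  · change b ^ p ^ (k + l) = 1
    rw [pow_add, mul_comm, pow_mul, hl, one_pow]

theorem sylow_map_eq_top_of_surjective [Finite G] {p : ℕ} [Fact p.Prime] {f : G →* H}
    (hf : Function.Surjective f) (hH : IsPGroup p H) (P : Sylow p G) :
    (P : Subgroup G).map f = ⊤ :=
  ((P.mapSurjective hf).is_maximal' (hH.to_subgroup ⊤) le_top).symm

/-- If `G / ker f` is a `p`-group, then `G = P ker f` for a Sylow subgroup `P`, so elements of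
`ker f` suffice to conjugate all `p`-elements into `P`. -/
theorem exists_mem_ker_conj_mem_sylow [Finite G] {p : ℕ} [Fact p.Prime] {f : G →* H}
    (hf : Function.Surjective f) (hH : IsPGroup p H) (P : Sylow p G)
    {A : Subgroup G} (hA : IsPGroup p A) : ∃ n ∈ f.ker, ∀ b ∈ A, n * b * n⁻¹ ∈ P := by
  obtain ⟨S, hS⟩ := hA.exists_le_sylow
  obtain ⟨g, rfl⟩ := MulAction.exists_smul_eq G S P
  obtain ⟨c, hc, hcg⟩ : f g ∈ ((g • S : Sylow p G) : Subgroup G).map f := by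
    rw [sylow_map_eq_top_of_surjective hf hH]
    exact mem_top _
  refine ⟨c⁻¹ * g, ?_, fun b hb => ?_⟩
  · rw [MonoidHom.mem_ker, map_mul, map_inv, hcg, inv_mul_cancel]
  · have hgb : g * b * g⁻¹ ∈ g • S :=
      smul_mem_pointwise_smul b (MulAut.conj g) (S : Subgroup G) (hS hb)
    have hconj : c⁻¹ * g * b * (c⁻¹ * g)⁻¹ = c⁻¹ * (g * b * g⁻¹) * c := by group
    rw [hconj]
    exact mul_mem (mul_mem (inv_mem hc) hgb) hc

end Lifting

section PCommutators

variable {G H : Type*} [Group G] [Group H] {p : ℕ}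

/-- The part of `X(G)` belonging to the prime `p`: commutators `[a, y]` with `a` and `a ^ y` (and
hence `[a, y]`) in a common `p`-subgroup. -/
def pCommutators (p : ℕ) (G : Type*) [Group G] : Set G :=
  {z | ∃ Q : Subgroup G, IsPGroup p Q ∧
    ∃ a ∈ Q, ∃ y : G, y⁻¹ * a * y ∈ Q ∧ z = a⁻¹ * (y⁻¹ * a * y)}

theorem mem_Xset_iff {z : G} : z ∈ Xset G ↔ ∃ p : ℕ, p.Prime ∧ z ∈ pCommutators p G := by
  constructor
  · rintro ⟨p, hp, P, a, y, rfl, ha, hz⟩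
    refine ⟨p, hp.out, P, P.2, a, ha, y, ?_, by group⟩
    simpa only [mul_assoc, mul_inv_cancel_left] using mul_mem ha hz
  · rintro ⟨p, hp, Q, hQ, a, ha, y, hay, rfl⟩
    obtain ⟨P, hQP⟩ := hQ.exists_le_sylow
    exact ⟨p, ⟨hp⟩, P, a, y, by group, hQP ha, hQP (mul_mem (inv_mem ha) hay)⟩

theorem one_mem_pCommutators : (1 : G) ∈ pCommutators p G :=
  ⟨⊥, IsPGroup.of_bot, 1, one_mem _, 1, by simp, by simp⟩

theorem map_mem_pCommutators (f : G →* H) {z : G} (hz : z ∈ pCommutators p G) :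
    f z ∈ pCommutators p H := by
  obtain ⟨Q, hQ, a, ha, y, hay, rfl⟩ := hz
  exact ⟨Q.map f, hQ.map f, f a, mem_map_of_mem f ha, f y,
    by simpa only [map_mul, map_inv] using mem_map_of_mem f hay, by simp only [map_mul, map_inv]⟩

theorem prodMk_mem_pCommutators {z : G} {x : H} (hz : z ∈ pCommutators p G)
    (hx : x ∈ pCommutators p H) : (z, x) ∈ pCommutators p (G × H) := by
  obtain ⟨Q, hQ, a, ha, y, hay, rfl⟩ := hz
  obtain ⟨S, hS, b, hb, w, hbw, rfl⟩ := hx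
  exact ⟨Q.prod S, isPGroup_subgroup_prod hQ hS, (a, b), ⟨ha, hb⟩, (y, w), ⟨hay, hbw⟩, rfl⟩

theorem mul_mem_pCommutators_sup {M N : Subgroup G} (hcomm : ∀ z ∈ M, ∀ x ∈ N, Commute z x)
    {z : M} {x : N} (hz : z ∈ pCommutators p M) (hx : x ∈ pCommutators p N) :
    (⟨z * x, mul_mem_sup z.2 x.2⟩ : ↥(M ⊔ N)) ∈ pCommutators p ↥(M ⊔ N) :=
  map_mem_pCommutators
    ((inclusion le_sup_left).noncommCoprod (inclusion le_sup_right)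
      fun z x => Subtype.ext (hcomm z z.2 x x.2).eq)
    (prodMk_mem_pCommutators hz hx)

theorem surjOn_pCommutators [Finite G] [Fact p.Prime] {f : G →* H}
    (hf : Function.Surjective f) : Set.SurjOn f (pCommutators p G) (pCommutators p H) := by
  rintro _ ⟨Q, hQ, a', ha', y', hay', rfl⟩
  let L := Q.comap f
  have hfL : Function.Surjective (f.subgroupComap Q) :=
    f.subgroupComap_surjective_of_surjective Q hf
  let P : Sylow p L := default
  obtain ⟨a, ha, haa'⟩ : ⟨a', ha'⟩ ∈ (P : Subgroup L).map (f.subgroupComap Q) := by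
    rw [sylow_map_eq_top_of_surjective hfL hQ]
    exact mem_top _
  obtain rfl : f a = a' := congrArg Subtype.val haa'
  obtain ⟨y, rfl⟩ := hf y'
  let b : L := ⟨y⁻¹ * a * y, by simpa only [L, mem_comap, map_mul, map_inv] using hay'⟩
  let A : Subgroup L :=
    (((P : Subgroup L).map L.subtype).map (MulAut.conj y⁻¹).toMonoidHom).subgroupOf L
  have hA : IsPGroup p A := ((P.2.map L.subtype).map _).comap_subtype
  have hbA : b ∈ A := ⟨a, mem_map_of_mem L.subtype ha, by simp [b]⟩
  obtain ⟨n, hn, hnP⟩ := exists_mem_ker_conj_mem_sylow hfL hQ P hA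
  have hfn : f n = 1 := congrArg Subtype.val hn
  have hconj : (y * (n : G)⁻¹)⁻¹ * a * (y * (n : G)⁻¹) = (n * b * n⁻¹ : L) := by
    simp only [b, coe_mul, coe_inv]
    group
  refine ⟨a⁻¹ * ((y * (n : G)⁻¹)⁻¹ * a * (y * (n : G)⁻¹)),
    ⟨(P : Subgroup L).map L.subtype, P.2.map _, a, mem_map_of_mem L.subtype ha, y * (n : G)⁻¹,
      hconj ▸ mem_map_of_mem L.subtype (hnP b hbA), rfl⟩, ?_⟩
  simp only [coe_inv, map_mul, map_inv, hfn, inv_one, mul_one]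

theorem surjOn_Xset [Finite G] {f : G →* H} (hf : Function.Surjective f) :
    Set.SurjOn f (Xset G) (Xset H) := by
  intro w hw
  obtain ⟨p, hp, hwp⟩ := mem_Xset_iff.1 hw
  have : Fact p.Prime := ⟨hp⟩
  obtain ⟨z, hz, rfl⟩ := surjOn_pCommutators hf hwp
  exact ⟨z, mem_Xset_iff.2 ⟨p, hp, hz⟩, rfl⟩

/-- If all `p`-commutators are trivial, then a Sylow `p`-subgroup is central in its normalizer, and
Burnside's transfer theorem yields a normal `p`-complement, which perfectness forbids. -/
theorem exists_ne_one_mem_pCommutators_of_isPerfect [Finite G] [Group.IsPerfect G] [Fact p.Prime]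
    (hp : p ∣ Nat.card G) : ∃ z ∈ pCommutators p G, z ≠ 1 := by
  by_contra! htriv
  let P : Sylow p G := default
  have hP : normalizer (P : Set G) ≤ centralizer (P : Set G) := by
    intro y hy a ha
    have hay : y⁻¹ * a * y ∈ P := (mem_normalizer_iff''.1 hy a).1 ha
    have hone := htriv _ ⟨P, P.2, a, ha, y, hay, rfl⟩
    rw [inv_mul_eq_one, mul_assoc, eq_inv_mul_iff_mul_eq] at hone
    exact hone.symm
  have hcomm : IsMulCommutative P := le_centralizer_iff_isMulCommutative.1 (le_normalizer.trans hP)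
  apply MonoidHom.not_dvd_card_ker_transferSylow P hP
  have hker : (MonoidHom.transferSylow P hP).ker = ⊤ := by
    open scoped IsMulCommutative in
    rw [eq_top_iff, ← Group.IsPerfect.commutator_eq_top (G := G)]
    exact Abelianization.commutator_subset_ker (MonoidHom.transferSylow P hP)
  rwa [hker, card_top]

end PCommutators

section MinimalNormal

variable {G : Type*} [Group G]

/-- `G` has no nontrivial abelian normal subgroup. For finite `G` this is the condition `R(G) = 1`,
in the form in which it is used: the last nontrivial derived subgroup of a soluble normal subgroup
is abelian and normal in `G`. -/
def AbelianNormalFree (G : Type*) [Group G] : Prop :=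
  ∀ ⦃A : Subgroup G⦄, A.Normal → IsMulCommutative A → A = ⊥

theorem AbelianNormalFree.disjoint_of_le_centralizer (hG : AbelianNormalFree G) {M N : Subgroup G}
    [M.Normal] [N.Normal] (h : M ≤ centralizer (N : Set G)) : Disjoint M N :=
  disjoint_iff.2 <| hG inferInstance <| le_centralizer_iff_isMulCommutative.1 <|
    inf_le_left.trans <| h.trans <| centralizer_le <| SetLike.coe_subset_coe.2 inf_le_right

theorem isSolvable_comap {H : Type*} [Group H] (f : G →* H) [Group.IsSolvable f.ker]
    (K : Subgroup H) [Group.IsSolvable K] : Group.IsSolvable (K.comap f) :=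
  Group.isSolvable_of_ker_le_range (inclusion (f.ker_le_comap K)) (f.subgroupComap K)
    fun g hg => ⟨⟨g, congrArg Subtype.val hg⟩, rfl⟩

theorem abelianNormalFree_quotient_of_isGreatest {R : Subgroup G} [R.Normal]
    (hR : IsGreatest {H : Subgroup G | H.Normal ∧ Group.IsSolvable H} R) :
    AbelianNormalFree (G ⧸ R) := by
  intro A _ hA
  have hker : Group.IsSolvable (QuotientGroup.mk' R).ker := by
    rw [QuotientGroup.ker_mk']
    exact hR.1.2
  have hAsolv : Group.IsSolvable A := Group.isSolvable_of_comm fun a b => mul_comm' a b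
  have hle : A.comap (QuotientGroup.mk' R) ≤ R := hR.2 ⟨inferInstance, isSolvable_comap _ A⟩
  rw [eq_bot_iff, ← map_comap_eq_self_of_surjective (QuotientGroup.mk'_surjective R) A]
  exact (map_mono hle).trans (QuotientGroup.map_mk'_self R).le

/-- A minimal normal subgroup of `G`: a minimal element among the nontrivial normal subgroups. -/
def IsMinimalNormal (M : Subgroup G) : Prop :=
  Minimal (fun K : Subgroup G => K.Normal ∧ K ≠ ⊥) M

namespace IsMinimalNormal

variable {M : Subgroup G}

theorem normal (hM : IsMinimalNormal M) : M.Normal := hM.prop.1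

theorem ne_bot (hM : IsMinimalNormal M) : M ≠ ⊥ := hM.prop.2

theorem le_of_mem_of_ne_one (hM : IsMinimalNormal M) {K : Subgroup G} [K.Normal] {x : G}
    (hxM : x ∈ M) (hxK : x ∈ K) (hx : x ≠ 1) : M ≤ K := by
  have := hM.normal
  refine (hM.le_of_le ⟨inferInstance, fun hbot => hx ?_⟩ inf_le_left).trans inf_le_right
  exact mem_bot.1 (hbot ▸ mem_inf.2 ⟨hxM, hxK⟩)

theorem normalCore_centralizer_le (hM : IsMinimalNormal M) {x : G} (hxM : x ∈ M) (hx : x ≠ 1) :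
    (centralizer {x}).normalCore ≤ centralizer (M : Set G) := by
  rw [le_centralizer_iff]
  refine hM.le_of_mem_of_ne_one hxM ?_ hx
  exact fun c hc => mem_centralizer_singleton_iff.1 (normalCore_le _ hc)

theorem isPerfect (hM : IsMinimalNormal M) (hG : AbelianNormalFree G) : Group.IsPerfect M := by
  have := hM.normal
  rw [isPerfect_iff]
  refine hM.eq_of_le ⟨inferInstance, fun hbot => hM.ne_bot ?_⟩ (commutator_le_left M M)
  exact hG hM.normal (le_centralizer_iff_isMulCommutative.1
    (commutator_eq_bot_iff_le_centralizer.1 hbot))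

end IsMinimalNormal

theorem exists_isMinimalNormal_le [Finite G] {D : Subgroup G} (hD : D.Normal) (hne : D ≠ ⊥) :
    ∃ M ≤ D, IsMinimalNormal M :=
  exists_minimal_le_of_wellFoundedLT _ D ⟨hD, hne⟩

end MinimalNormal

section Detection

variable {G : Type*} [Group G] {p m : ℕ} {M N : Subgroup G}

/-- A normal subgroup `N` of `G` is `p`-detected if some element `x` of `X(N)` belonging to the
prime `p` is such that every normal subgroup of `G` centralizing `x` centralizes `N`. This is what
turns a bound for `|x^G|` into one for `|G : C_G(N)|`. -/
structure IsPDetected (p : ℕ) (N : Subgroup G) : Prop where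
  normal : N.Normal
  exists_mem_pCommutators : ∃ x ∈ pCommutators p N,
    (centralizer {(x : G)}).normalCore ≤ centralizer (N : Set G)

theorem isPDetected_bot : IsPDetected p (⊥ : Subgroup G) :=
  ⟨inferInstance, 1, one_mem_pCommutators, le_centralizer_iff.2 bot_le⟩

theorem IsPDetected.sup (hM : IsPDetected p M) (hN : IsPDetected p N) (h : Disjoint M N) :
    IsPDetected p (M ⊔ N) := by
  obtain ⟨_, z, hz, hzM⟩ := hM
  obtain ⟨_, x, hx, hxN⟩ := hN
  have hcomm : ∀ z ∈ M, ∀ x ∈ N, Commute z x := fun z hz x hx =>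
    commute_of_normal_of_disjoint M N ‹_› ‹_› h z x hz hx
  refine ⟨inferInstance, ⟨z * x, mul_mem_sup z.2 x.2⟩, mul_mem_pCommutators_sup hcomm hz hx, ?_⟩
  have hcore := normalCore_mono (centralizer_mul_le_of_disjoint h z.2 x.2)
  exact le_centralizer_iff.2 <| sup_le
    (le_centralizer_iff.1 <| hcore.trans <| (normalCore_mono inf_le_left).trans hzM)
    (le_centralizer_iff.1 <| hcore.trans <| (normalCore_mono inf_le_right).trans hxN)

theorem IsMinimalNormal.isPDetected [Finite G] [Fact p.Prime] (hM : IsMinimalNormal M)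
    (hG : AbelianNormalFree G) (hp : p ∣ Nat.card M) : IsPDetected p M := by
  have := hM.isPerfect hG
  obtain ⟨z, hz, hz1⟩ := exists_ne_one_mem_pCommutators_of_isPerfect hp
  exact ⟨hM.normal, z, hz,
    hM.normalCore_centralizer_le z.2 fun h => hz1 (OneMemClass.coe_eq_one.1 h)⟩

theorem exists_isPDetected_forall_le_centralizer_eq_bot [Finite G] (hG : AbelianNormalFree G)
    (p : ℕ) : ∃ N : Subgroup G, IsPDetected p N ∧
      ∀ M : Subgroup G, IsPDetected p M → M ≤ centralizer (N : Set G) → M = ⊥ := by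
  obtain ⟨N, hN, hmax⟩ := (Set.toFinite {N : Subgroup G | IsPDetected p N}).exists_maximal
    ⟨⊥, isPDetected_bot⟩
  refine ⟨N, hN, fun M hM hMN => ?_⟩
  have := hM.normal
  have := hN.normal
  have hdisj : Disjoint M N := hG.disjoint_of_le_centralizer hMN
  exact hdisj.eq_bot_of_le (le_sup_left.trans (hmax (hM.sup hN hdisj) le_sup_right))

theorem IsPDetected.index_centralizer_le [Finite G] (hp : p.Prime) (hN : IsPDetected p N)
    (hm : ∀ x ∈ Xset G, (centralizer {x}).index ≤ m) :
    (centralizer (N : Set G)).index ≤ m ! := by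
  obtain ⟨_, x, hx, hxN⟩ := hN
  have hxG : (x : G) ∈ Xset G := mem_Xset_iff.2 ⟨p, hp, map_mem_pCommutators N.subtype hx⟩
  calc (centralizer (N : Set G)).index
      ≤ (centralizer {(x : G)}).normalCore.index := index_antitone hxN
    _ ≤ (centralizer {(x : G)}).index ! :=
        Nat.le_of_dvd (Nat.factorial_pos _) (index_normalCore_dvd_factorial _)
    _ ≤ m ! := Nat.factorial_le (hm x hxG)

theorem IsMinimalNormal.card_le_factorial [Finite G] (hM : IsMinimalNormal M)
    (hG : AbelianNormalFree G) (hm : ∀ x ∈ Xset G, (centralizer {x}).index ≤ m) :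
    Nat.card M ≤ m ! := by
  have := hM.normal
  have hprime : (Nat.card M).minFac.Prime := Nat.minFac_prime (mt card_eq_one.1 hM.ne_bot)
  have : Fact (Nat.card M).minFac.Prime := ⟨hprime⟩
  have hdvd : Nat.card M ∣ (centralizer (M : Set G)).index :=
    card_dvd_index_of_disjoint (hG.disjoint_of_le_centralizer le_rfl)
  exact (Nat.le_of_dvd (Nat.pos_of_ne_zero index_ne_zero_of_finite) hdvd).trans
    ((hM.isPDetected hG (Nat.minFac_dvd _)).index_centralizer_le hprime hm)

theorem AbelianNormalFree.card_le [Finite G] (hG : AbelianNormalFree G)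
    (hm : ∀ x ∈ Xset G, (centralizer {x}).index ≤ m) : Nat.card G ≤ m ! ^ π (m !) := by
  choose N hN hNmax using exists_isPDetected_forall_le_centralizer_eq_bot hG
  let D : Subgroup G := ⨅ p : (m !).primesLE, centralizer (N p : Set G)
  have hD : D = ⊥ := by
    by_contra hne
    have hDnormal : D.Normal := normal_iInf_normal fun p =>
      have := (hN p).normal
      inferInstance
    obtain ⟨M, hMD, hM⟩ := exists_isMinimalNormal_le hDnormal hne
    let p := (Nat.card M).minFac
    have hp : p.Prime := Nat.minFac_prime (mt card_eq_one.1 hM.ne_bot)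
    have : Fact p.Prime := ⟨hp⟩
    have hpm : p ∈ (m !).primesLE :=
      Nat.mem_primesLE.2 ⟨(Nat.minFac_le Nat.card_pos).trans (hM.card_le_factorial hG hm), hp⟩
    exact hM.ne_bot (hNmax p M (hM.isPDetected hG (Nat.minFac_dvd _))
      (hMD.trans (iInf_le _ (⟨p, hpm⟩ : (m !).primesLE))))
  calc Nat.card G = D.index := by rw [hD, index_bot]
    _ ≤ ∏ p : (m !).primesLE, (centralizer (N p : Set G)).index := index_iInf_le _
    _ ≤ m ! ^ (Finset.univ : Finset (m !).primesLE).card :=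
        Finset.prod_le_pow_card _ _ _ fun p _ =>
          (hN p).index_centralizer_le (Nat.prime_of_mem_primesLE p.2) hm
    _ = m ! ^ π (m !) := by
        rw [Finset.card_univ, Fintype.card_coe, Nat.primesLE_card_eq_primeCounting]

end Detection

theorem soluble_radical_index_bounded_general {G : Type*} [Group G] [Finite G] {m : ℕ}
    (hm : ∀ x ∈ Xset G, Nat.card {h : G // IsConj x h} ≤ m) {R : Subgroup G}
    (hR : IsGreatest {H : Subgroup G | H.Normal ∧ Group.IsSolvable H} R) :
    R.index ≤ m ! ^ π (m !) := by
  have hRnormal : R.Normal := hR.1.1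
  rw [index_eq_card]
  refine (abelianNormalFree_quotient_of_isGreatest hR).card_le fun z hz => ?_
  obtain ⟨x, hx, rfl⟩ := surjOn_Xset (QuotientGroup.mk'_surjective R) hz
  calc (centralizer {QuotientGroup.mk' R x}).index
      ≤ (centralizer {x}).index :=
        index_centralizer_map_le_of_surjective (QuotientGroup.mk'_surjective R) x
    _ = Nat.card {h : G // IsConj x h} := (card_isConj_eq_index_centralizer x).symm
    _ ≤ m := hm x hx

/-- If `G` is a finite group with `|x^G| ≤ m` for all `x ∈ Xset G` and `R` is the
soluble radical of `G` (the largest soluble normal subgroup), then the index of `R`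
(that is, `|G/R|`) is `m`-bounded. -/
theorem soluble_radical_index_bounded :
    ∃ f : ℕ → ℕ, ∀ (G : Type) (_ : Group G) (_ : Finite G) (m : ℕ), 0 < m →
      (∀ x ∈ Xset G, Nat.card {h : G // IsConj x h} ≤ m) →
      ∀ R : Subgroup G,
        IsGreatest {H : Subgroup G | H.Normal ∧ IsSolvable H} R →
        R.index ≤ f m :=
  ⟨fun m => m ! ^ π (m !), fun _ _ _ _ _ hm _ hR => soluble_radical_index_bounded_general hm hR⟩
end

section
/- Let m be a positive integer and G a finite group in which |x^G| ≤ m whenever x is a commutator of prime power order. Then the second derived subgroup G'' has order bounded by a function of m only. -/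
/-!
Call a pair `d, e` focal for a prime `p` if `d` and `[d, e]` lie in a common `p`-subgroup. By the
focal subgroup theorem the commutators of focal pairs generate `G'`; unlike the commutators of prime
power order, they lift along quotient maps and multiply in direct products.

If `x` lies in a normal set `X` of elements with at most `m` conjugates, then `[⟨X⟩, ⟨x^G⟩]` has
bounded order, so `x` centralizes `⟨X⟩` modulo a bounded normal subgroup. Applied to an element of
`X` with the largest orbit under `⟨X⟩`, this yields a normal subgroup `U` of bounded index such that
`[O_p(G) ⊓ U, U]` centralizes `G'` modulo a bounded normal subgroup. Only the primes `p ≤ m` matter,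
as `G'` centralizes `O_p(G)` for `p > m`.

If `O_p(G) = 1` for all `p`, then some bounded normal subgroup contains a non-central focal
commutator for a prime `p`, and in the centralizer of that subgroup the bound for `p` is halved.
Hence in general `G` has a solvable normal subgroup of bounded index, and by the above a normal
subgroup `K` of bounded index with `[K, K]` nilpotent. Covering `G'` by `K` and boundedly many focal
commutators shows that `G'` is nilpotent modulo a bounded normal subgroup. If `G'` is nilpotent,
then modulo its `p'`-part every commutator is a product of two conjugates of focal commutators or of
their inverses, and a group all of whose commutators have boundedly many conjugates has bounded
second derived subgroup.
-/

open Subgroup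
open scoped commutatorElement

section Counting

theorem prod_le_pow_of_card_le {ι : Type*} [Fintype ι] {f : ι → ℕ} {c k : ℕ} (hc : 0 < c)
    (hf : ∀ i, f i ≤ c) (hk : Nat.card ι ≤ k) : ∏ i, f i ≤ c ^ k := by
  refine (Finset.prod_le_pow_card _ _ _ fun i _ ↦ hf i).trans (Nat.pow_le_pow_right hc ?_)
  rwa [Finset.card_univ, ← Nat.card_eq_fintype_card]

theorem card_primesLE_le (n : ℕ) : Nat.card (Nat.primesLE n) ≤ n := by
  rw [Nat.card_eq_finsetCard]
  refine (Finset.card_le_card fun p hp ↦ ?_).trans_eq (Nat.card_Icc 1 n)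
  exact Finset.mem_Icc.2 ⟨(Nat.mem_primesLE.1 hp).2.one_le, (Nat.mem_primesLE.1 hp).1⟩

variable {G : Type*} [Group G]

theorem card_le_card_map_mk'_mul_card (K L : Subgroup G) [L.Normal] [Finite L] :
    Nat.card K ≤ Nat.card (K.map (QuotientGroup.mk' L)) * Nat.card L := by
  rw [← relIndex_ker, QuotientGroup.ker_mk', ← (L.subgroupOf K).index_mul_card]
  refine Nat.mul_le_mul_left _ (Nat.card_le_card_of_injective
    (fun x : L.subgroupOf K ↦ (⟨x, mem_subgroupOf.1 x.2⟩ : L)) fun x y h ↦ ?_)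
  simpa only [Subtype.mk.injEq, SetLike.coe_eq_coe] using h

theorem card_sup_le_mul_card (L M : Subgroup G) [M.Normal] :
    Nat.card (L ⊔ M : Subgroup G) ≤ Nat.card L * Nat.card M := by
  change Nat.card ((L ⊔ M : Subgroup G) : Set G) ≤ _
  rw [mul_normal]
  exact Set.natCard_mul_le

theorem card_iSup_le_prod_card {ι : Type*} [Fintype ι] (L : ι → Subgroup G)
    [∀ i, (L i).Normal] : Nat.card (⨆ i, L i : Subgroup G) ≤ ∏ i, Nat.card (L i) := by
  classical
  suffices h : ∀ s : Finset ι, Nat.card (⨆ i ∈ s, L i : Subgroup G) ≤ ∏ i ∈ s, Nat.card (L i) by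
    simpa only [Finset.mem_univ, iSup_true] using h Finset.univ
  intro s
  induction s using Finset.induction_on with
  | empty => simp
  | insert i s hi ih =>
    rw [Finset.iSup_insert, Finset.prod_insert hi]
    exact (card_sup_le_mul_card _ _).trans (Nat.mul_le_mul_left _ ih)

theorem iInf_centralizer_singleton (S : Set G) :
    ⨅ s : S, centralizer {(s : G)} = centralizer S := by
  ext g
  simp only [mem_iInf, mem_centralizer_iff, Subtype.forall, Set.mem_singleton_iff, forall_eq]

theorem index_centralizer_le_pow {S : Set G} [Finite S] {m : ℕ}
    (h : ∀ s ∈ S, (centralizer {s}).index ≤ m) : (centralizer S).index ≤ m ^ S.ncard := by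
  have := Fintype.ofFinite S
  calc (centralizer S).index
      ≤ ∏ s : S, (centralizer {(s : G)}).index := iInf_centralizer_singleton S ▸ index_iInf_le _
    _ ≤ ∏ _s : S, m := Finset.prod_le_prod' fun s _ ↦ h s s.2
    _ = m ^ S.ncard := by
      rw [Finset.prod_const, Finset.card_univ, ← Nat.card_coe_set_eq, Nat.card_eq_fintype_card]

theorem index_normalCore_le_factorial (K : Subgroup G) [K.FiniteIndex] :
    K.normalCore.index ≤ K.index.factorial := by
  rw [normalCore_eq_ker, index_ker, K.index_eq_card, ← Nat.card_perm]
  exact Nat.card_le_card_of_injective _ Subtype.val_injective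

theorem ncard_conjugatesOf (x : G) : (conjugatesOf x).ncard = (centralizer {x}).index := by
  have h : conjugatesOf x = MulAction.orbit (ConjAct G) x := by
    ext y
    rw [ConjAct.mem_orbit_conjAct, isConj_comm]
    rfl
  rw [h, ← MulAction.index_stabilizer, ConjAct.stabilizer_eq_centralizer]
  rfl

theorem exists_subset_closure_le_closure_sup (X : Set G) (N : Subgroup G) [N.Normal]
    [N.FiniteIndex] :
    ∃ Y ⊆ X, Y.Finite ∧ Y.ncard ≤ N.index ∧ closure X ≤ closure Y ⊔ N := by
  let q : G → G ⧸ N := QuotientGroup.mk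
  choose s hsX hsq using fun z : q '' X ↦ z.2
  refine ⟨Set.range s, Set.range_subset_iff.2 hsX, Set.finite_range s, ?_, ?_⟩
  · rw [← Nat.card_coe_set_eq]
    exact (Nat.card_le_card_of_surjective _ Set.rangeFactorization_surjective).trans
      (Nat.card_le_card_of_injective _ Subtype.val_injective)
  · refine (closure_le _).2 fun x hx ↦ ?_
    have hxs : (s ⟨q x, x, hx, rfl⟩)⁻¹ * x ∈ N := QuotientGroup.eq.1 (hsq ⟨q x, x, hx, rfl⟩)
    rw [← mul_inv_cancel_left (s ⟨q x, x, hx, rfl⟩) x]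
    exact mul_mem (mem_sup_left (subset_closure ⟨_, rfl⟩)) (mem_sup_right hxs)

end Counting

section Schur

/-- The bound for the order of the derived subgroup in Schur's theorem, as a function of the index
of the centre. -/
def schurBound (n : ℕ) : ℕ := n ^ (n * n ^ 2 + 1)

theorem schurBound_mono : Monotone schurBound := by
  intro a b h
  rcases Nat.eq_zero_or_pos a with rfl | ha
  · simp [schurBound]
  · exact (Nat.pow_le_pow_left h _).trans (Nat.pow_le_pow_right (ha.trans_le h) (by gcongr))

variable {G : Type*} [Group G]

theorem commutatorElement_eq_of_mk_center_eq {a b c d : G}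
    (hab : (a : G ⧸ center G) = b) (hcd : (c : G ⧸ center G) = d) : ⁅a, c⁆ = ⁅b, d⁆ := by
  obtain ⟨z, hz, rfl⟩ : ∃ z ∈ center G, b = a * z := ⟨_, QuotientGroup.eq.1 hab, by simp⟩
  obtain ⟨w, hw, rfl⟩ : ∃ w ∈ center G, d = c * w := ⟨_, QuotientGroup.eq.1 hcd, by simp⟩
  rw [commutatorElement_mul_left_eq_conj_mul,
    commutatorElement_eq_one_iff_mul_comm.2 (mem_center_iff.1 hz _).symm,
    commutatorElement_mul_right_eq_mul_conj,
    commutatorElement_eq_one_iff_mul_comm.2 (mem_center_iff.1 hw _)]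
  group

theorem commutatorSet_eq_range_quotient_center :
    commutatorSet G =
      Set.range fun q : (G ⧸ center G) × (G ⧸ center G) ↦ ⁅q.1.out, q.2.out⁆ := by
  refine Set.Subset.antisymm ?_ (Set.range_subset_iff.2 fun q ↦ commutator_mem_commutatorSet _ _)
  rintro _ ⟨a, b, rfl⟩
  exact ⟨(a, b), commutatorElement_eq_of_mk_center_eq
    (QuotientGroup.out_eq' _) (QuotientGroup.out_eq' _)⟩

theorem card_commutator_le_schurBound [(center G).FiniteIndex] :
    Nat.card (commutator G) ≤ schurBound (center G).index := by
  have hfinite : Finite (commutatorSet G) := by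
    rw [commutatorSet_eq_range_quotient_center]
    exact Set.finite_range _
  have hcard : Nat.card (commutatorSet G) ≤ (center G).index ^ 2 := by
    rw [commutatorSet_eq_range_quotient_center, sq, index_eq_card, ← Nat.card_prod]
    exact Finite.card_range_le _
  have hpos : 0 < (center G).index := Nat.pos_of_ne_zero FiniteIndex.index_ne_zero
  refine (Nat.le_of_dvd (by positivity) (card_commutator_dvd_index_center_pow G)).trans ?_
  exact Nat.pow_le_pow_right hpos (by gcongr)

end Schur

section CentralizerMod

variable {G : Type*} [Group G]

/-- The subgroup of the elements of `G` that centralize `H` modulo the normal subgroup `L`: the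
preimage in `G` of the centralizer of `HL/L` in `G/L`. -/
def centralizerMod (H L : Subgroup G) [L.Normal] : Subgroup G :=
  (centralizer (H.map (QuotientGroup.mk' L) : Set (G ⧸ L))).comap (QuotientGroup.mk' L)

variable {H K L : Subgroup G} [L.Normal]

theorem mk_commutatorElement_eq_one_iff {a b : G} :
    ⁅(a : G ⧸ L), (b : G ⧸ L)⁆ = 1 ↔ ⁅a, b⁆ ∈ L := by
  rw [← QuotientGroup.eq_one_iff]
  rfl

theorem mem_centralizerMod {g : G} : g ∈ centralizerMod H L ↔ ∀ h ∈ H, ⁅h, g⁆ ∈ L := by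
  simp only [centralizerMod, mem_comap, mem_centralizer_iff, coe_map,
    ← commutatorElement_eq_one_iff_mul_comm, QuotientGroup.coe_mk', Set.forall_mem_image,
    SetLike.mem_coe]
  exact forall₂_congr fun h _ ↦ mk_commutatorElement_eq_one_iff

theorem le_centralizerMod_iff : K ≤ centralizerMod H L ↔ ⁅H, K⁆ ≤ L := by
  rw [commutator_le]
  exact ⟨fun h a ha b hb ↦ mem_centralizerMod.1 (h hb) a ha,
    fun h b hb ↦ mem_centralizerMod.2 fun a ha ↦ h a ha b hb⟩

instance centralizerMod_normal [H.Normal] : (centralizerMod H L).Normal := by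
  have : (H.map (QuotientGroup.mk' L)).Normal :=
    Normal.map inferInstance _ (QuotientGroup.mk'_surjective L)
  unfold centralizerMod
  infer_instance

theorem centralizerMod_mono {M : Subgroup G} [M.Normal] (h : L ≤ M) :
    centralizerMod H L ≤ centralizerMod H M :=
  le_centralizerMod_iff.2 ((le_centralizerMod_iff.1 le_rfl).trans h)

end CentralizerMod

section Commutator

variable {G : Type*} [Group G]

theorem commutator_closure_closure_le {X Y : Set G} {M : Subgroup G} [M.Normal]
    (h : ∀ x ∈ X, ∀ y ∈ Y, ⁅x, y⁆ ∈ M) : ⁅closure X, closure Y⁆ ≤ M := by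
  rw [← QuotientGroup.ker_mk' M, ← Subgroup.map_eq_bot_iff, map_commutator, MonoidHom.map_closure,
    MonoidHom.map_closure, commutator_eq_bot_iff_le_centralizer, centralizer_closure, closure_le]
  rintro _ ⟨x, hx, rfl⟩
  rw [SetLike.mem_coe, mem_centralizer_iff]
  rintro _ ⟨y, hy, rfl⟩
  exact (commutatorElement_eq_one_iff_mul_comm.1
    (mk_commutatorElement_eq_one_iff.2 (h x hx y hy))).symm

theorem closure_normal_of_conj_mem {X : Set G} (hX : ∀ x ∈ X, ∀ g : G, g * x * g⁻¹ ∈ X) :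
    (closure X).Normal :=
  ⟨fun _ hn g ↦ (closure_le ((closure X).comap (MulAut.conj g).toMonoidHom)).2
    (fun x hx ↦ subset_closure (hX x hx g)) hn⟩

theorem card_commutator_self_le [Finite G] (K : Subgroup G) :
    Nat.card (⁅K, K⁆ : Subgroup G) ≤ schurBound ((centralizer (K : Set G)).relIndex K) := by
  have hcenter : (centralizer (K : Set G)).subgroupOf K ≤ center K := fun g hg ↦
    mem_center_iff.2 fun h ↦ Subtype.ext (mem_centralizer_iff.1 (mem_subgroupOf.1 hg) h h.2)
  rw [← map_subtype_commutator, card_map_of_injective K.subtype_injective]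
  exact card_commutator_le_schurBound.trans (schurBound_mono (index_antitone hcenter))

theorem card_commutator_self_le_mul_card [Finite G] (H L : Subgroup G) [L.Normal] :
    Nat.card (⁅H, H⁆ : Subgroup G) ≤ schurBound ((centralizerMod H L).relIndex H) * Nat.card L := by
  refine (card_le_card_map_mk'_mul_card _ L).trans (Nat.mul_le_mul_right _ ?_)
  rw [map_commutator, centralizerMod, relIndex_comap]
  exact card_commutator_self_le _

theorem relIndex_le_index [Finite G] (H K : Subgroup G) : H.relIndex K ≤ H.index := by
  rw [← relIndex_top_right]
  exact relIndex_le_of_le_right le_top (by simp [index_ne_zero_of_finite])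

theorem card_commutator_closure_self_le [Finite G] (S : Set G) :
    Nat.card (⁅closure S, closure S⁆ : Subgroup G) ≤ schurBound (centralizer S).index := by
  refine (card_commutator_self_le _).trans (schurBound_mono ?_)
  rw [centralizer_closure]
  exact relIndex_le_index _ _

theorem commutator_closure_eq_closure {H : Subgroup G} [H.Normal] {S : Set G}
    (hS : ∀ s ∈ S, ∀ g : G, g * s * g⁻¹ ∈ S) :
    ⁅H, closure S⁆ = closure {z | ∃ h ∈ H, ∃ s ∈ S, ⁅h, s⁆ = z} := by
  have hnormal : (closure {z | ∃ h ∈ H, ∃ s ∈ S, ⁅h, s⁆ = z}).Normal := by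
    refine closure_normal_of_conj_mem ?_
    rintro _ ⟨h, hh, s, hs, rfl⟩ g
    exact ⟨g * h * g⁻¹, Normal.conj_mem ‹_› h hh g, g * s * g⁻¹, hS s hs g,
      (conjugate_commutatorElement h s g).symm⟩
  refine le_antisymm ?_ ((closure_le _).2 ?_)
  · conv_lhs => rw [← H.closure_eq]
    exact commutator_closure_closure_le fun h hh s hs ↦ subset_closure ⟨h, hh, s, hs, rfl⟩
  · rintro _ ⟨h, hh, s, hs, rfl⟩
    exact commutator_mem_commutator hh (subset_closure hs)

theorem rank_commutator_closure_le [Finite G] {H : Subgroup G} [H.Normal] {S : Set G}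
    (hS : ∀ s ∈ S, ∀ g : G, g * s * g⁻¹ ∈ S) :
    Group.rank (⁅H, closure S⁆ : Subgroup G) ≤ S.ncard ^ 2 := by
  rw [rank_congr (commutator_closure_eq_closure hS), sq, ← Set.ncard_prod]
  refine (rank_closure_finite_le_nat_card _).trans ?_
  rw [Nat.card_coe_set_eq]
  refine (Set.ncard_le_ncard (t := (fun p : G × G ↦ p.1 * p.2⁻¹) '' S ×ˢ S) ?_).trans
    (Set.ncard_image_le (Set.toFinite _))
  rintro _ ⟨h, -, s, hs, rfl⟩
  exact ⟨(h * s * h⁻¹, s), ⟨hS s hs h, hs⟩, rfl⟩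

theorem exists_normal_mem_iff_pow_eq_one (T : Subgroup G) [T.Normal] [IsMulCommutative T] (n : ℕ) :
    ∃ M : Subgroup G, M.Normal ∧ ∀ g, g ∈ M ↔ g ∈ T ∧ g ^ n = 1 := by
  refine ⟨⟨⟨⟨{g | g ∈ T ∧ g ^ n = 1}, ?_⟩, ⟨T.one_mem, one_pow n⟩⟩, ?_⟩, ⟨?_⟩, fun g ↦ Iff.rfl⟩
  · rintro a b ⟨haT, ha⟩ ⟨hbT, hb⟩
    have hab : Commute a b := setLike_mul_comm haT hbT
    exact ⟨mul_mem haT hbT, by rw [hab.mul_pow, ha, hb, one_mul]⟩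
  · rintro a ⟨haT, ha⟩
    exact ⟨inv_mem haT, by rw [inv_pow, ha, inv_one]⟩
  · rintro a ⟨haT, ha⟩ g
    exact ⟨Normal.conj_mem ‹_› a haT g, by rw [conj_pow, ha]; group⟩

open scoped IsMulCommutative in
theorem card_commutator_closure_le_pow [Finite G] {X S : Set G} {n : ℕ} (hn : 0 < n)
    (hX : ∀ x ∈ X, ∀ g : G, g * x * g⁻¹ ∈ X) (hS : ∀ s ∈ S, ∀ g : G, g * s * g⁻¹ ∈ S)
    [IsMulCommutative (closure S)] (hpow : ∀ x ∈ X, ∀ s ∈ S, ⁅x, s⁆ ^ n = 1) :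
    Nat.card (⁅closure X, closure S⁆ : Subgroup G) ≤ n ^ S.ncard ^ 2 := by
  have := closure_normal_of_conj_mem hX
  have := closure_normal_of_conj_mem hS
  have hle : ⁅closure X, closure S⁆ ≤ closure S := commutator_le_right _ _
  obtain ⟨M, hM, hmem⟩ := exists_normal_mem_iff_pow_eq_one (closure S) n
  have hexp : ⁅closure X, closure S⁆ ≤ M := commutator_closure_closure_le fun x hx s hs ↦
    (hmem _).2 ⟨hle (commutator_mem_commutator (subset_closure hx) (subset_closure hs)),
      hpow x hx s hs⟩
  have : IsMulCommutative (⁅closure X, closure S⁆ : Subgroup G) :=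
    .of_setLike_mul_comm fun _ ha _ hb ↦ setLike_mul_comm (hle ha) (hle hb)
  refine (Nat.le_of_dvd (by positivity) (card_dvd_exponent_pow_rank' _ fun g ↦
    Subtype.ext ((hmem _).1 (hexp g.2)).2)).trans ?_
  exact Nat.pow_le_pow_right hn (rank_commutator_closure_le hS)

theorem conj_mem_image_of_surjective {G' : Type*} [Group G'] {f : G →* G'}
    (hf : Function.Surjective f) {X : Set G} (hX : ∀ x ∈ X, ∀ g : G, g * x * g⁻¹ ∈ X) :
    ∀ y ∈ f '' X, ∀ g : G', g * y * g⁻¹ ∈ f '' X := by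
  rintro _ ⟨x, hx, rfl⟩ g
  obtain ⟨g, rfl⟩ := hf g
  exact ⟨g * x * g⁻¹, hX x hx g, by simp only [map_mul, map_inv]⟩

theorem card_commutator_closure_le_pow_mul [Finite G] {X S : Set G} {n : ℕ} (hn : 0 < n)
    (hX : ∀ x ∈ X, ∀ g : G, g * x * g⁻¹ ∈ X) (hS : ∀ s ∈ S, ∀ g : G, g * s * g⁻¹ ∈ S)
    (hpow : ∀ x ∈ X, ∀ s ∈ S, ⁅x, s⁆ ^ n = 1) :
    Nat.card (⁅closure X, closure S⁆ : Subgroup G) ≤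
      n ^ S.ncard ^ 2 * Nat.card (⁅closure S, closure S⁆ : Subgroup G) := by
  have := closure_normal_of_conj_mem hS
  let π := QuotientGroup.mk' (⁅closure S, closure S⁆ : Subgroup G)
  have hπ : Function.Surjective π := QuotientGroup.mk'_surjective _
  refine (card_le_card_map_mk'_mul_card _ ⁅closure S, closure S⁆).trans (Nat.mul_le_mul_right _ ?_)
  rw [map_commutator, MonoidHom.map_closure, MonoidHom.map_closure]
  have hcomm : IsMulCommutative (closure (π '' S)) := by
    rw [← commutator_self_eq_bot_iff, ← MonoidHom.map_closure, ← map_commutator,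
      Subgroup.map_eq_bot_iff, QuotientGroup.ker_mk']
  refine (card_commutator_closure_le_pow hn (conj_mem_image_of_surjective hπ hX)
    (conj_mem_image_of_surjective hπ hS) ?_).trans
    (Nat.pow_le_pow_right hn (Nat.pow_le_pow_left (Set.ncard_image_le (Set.toFinite S)) 2))
  rintro _ ⟨x, hx, rfl⟩ _ ⟨s, hs, rfl⟩
  rw [← map_commutatorElement, ← map_pow, hpow x hx s hs, map_one]

end Commutator

section BoundedNormalSet

variable {G : Type*} [Group G] {X : Set G} {m : ℕ}

/-- A union `X` of conjugacy classes of `G` each of which has at most `m` elements; the class sizes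
are expressed as indices of centralizers. -/
structure IsBoundedNormalSet (X : Set G) (m : ℕ) : Prop where
  conj_mem : ∀ x ∈ X, ∀ g : G, g * x * g⁻¹ ∈ X
  index_centralizer_le : ∀ x ∈ X, (centralizer {x}).index ≤ m

/-- The bound for the order of `[⟨X⟩, ⟨x^G⟩]` when `x` belongs to an `m`-bounded normal set `X`. -/
def commutatorBound (m : ℕ) : ℕ :=
  (schurBound (m ^ 2)).factorial ^ m ^ 2 * schurBound (m ^ m)

theorem commutatorBound_pos : 0 < commutatorBound m :=
  Nat.mul_pos (pow_pos (Nat.factorial_pos _) _) (pow_pos Nat.pow_self_pos _)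

/-- The bound for the index of the subgroup found by the maximality argument in an `m`-bounded
normal set. -/
def indexBound (m : ℕ) : ℕ := (m ^ m.factorial).factorial

theorem commutatorElement_pow_eq_one [Finite G] {a b : G} (ha : (centralizer {a}).index ≤ m)
    (hb : (centralizer {b}).index ≤ m) : ⁅a, b⁆ ^ (schurBound (m ^ 2)).factorial = 1 := by
  let D : Subgroup G := ⁅closure {a, b}, closure {a, b}⁆
  have hmem : ⁅a, b⁆ ∈ D :=
    commutator_mem_commutator (subset_closure (.inl rfl)) (subset_closure (.inr rfl))
  have hm : 0 < m := (Nat.pos_of_ne_zero index_ne_zero_of_finite).trans_le ha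
  have hindex : (centralizer {a, b}).index ≤ m ^ 2 :=
    (index_centralizer_le_pow (by rintro s (rfl | rfl) <;> assumption)).trans
      (Nat.pow_le_pow_right hm ((Set.ncard_insert_le a {b}).trans (by simp)))
  have hcard : Nat.card D ≤ schurBound (m ^ 2) :=
    (card_commutator_closure_self_le _).trans (schurBound_mono hindex)
  exact orderOf_dvd_iff_pow_eq_one.1 <| (D.orderOf_dvd_natCard hmem).trans <|
    Nat.dvd_factorial Nat.card_pos hcard

theorem conj_mem_conjugatesOf {x s : G} (hs : s ∈ conjugatesOf x) (g : G) :
    g * s * g⁻¹ ∈ conjugatesOf x :=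
  IsConj.trans hs (isConj_iff.2 ⟨g, rfl⟩)

namespace IsBoundedNormalSet

theorem normal_closure (hX : IsBoundedNormalSet X m) : (closure X).Normal :=
  closure_normal_of_conj_mem hX.conj_mem

theorem conjugatesOf_subset (hX : IsBoundedNormalSet X m) {x : G} (hx : x ∈ X) :
    conjugatesOf x ⊆ X := by
  intro y hy
  obtain ⟨g, rfl⟩ := isConj_iff.1 hy
  exact hX.conj_mem x hx g

variable [Finite G]

theorem card_commutator_conjugatesOf_le (hX : IsBoundedNormalSet X m) {x : G} (hx : x ∈ X) :
    Nat.card (⁅closure X, closure (conjugatesOf x)⁆ : Subgroup G) ≤ commutatorBound m := by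
  have hxX := hX.conjugatesOf_subset hx
  have hm : 0 < m :=
    (Nat.pos_of_ne_zero index_ne_zero_of_finite).trans_le (hX.index_centralizer_le x hx)
  have hcard : (conjugatesOf x).ncard ≤ m :=
    (ncard_conjugatesOf x).trans_le (hX.index_centralizer_le x hx)
  have hindex : (centralizer (conjugatesOf x)).index ≤ m ^ m :=
    (index_centralizer_le_pow fun s hs ↦ hX.index_centralizer_le s (hxX hs)).trans
      (Nat.pow_le_pow_right hm hcard)
  refine (card_commutator_closure_le_pow_mul (Nat.factorial_pos (schurBound (m ^ 2)))
    hX.conj_mem (fun s hs ↦ conj_mem_conjugatesOf hs) fun a ha b hb ↦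
      commutatorElement_pow_eq_one (hX.index_centralizer_le a ha)
        (hX.index_centralizer_le b (hxX hb))).trans (Nat.mul_le_mul ?_ ?_)
  · exact Nat.pow_le_pow_right (Nat.factorial_pos _) (Nat.pow_le_pow_left hcard 2)
  · exact (card_commutator_closure_self_le _).trans (schurBound_mono hindex)

theorem exists_normal_card_le (hX : IsBoundedNormalSet X m) {x : G} (hx : x ∈ X) :
    ∃ (L : Subgroup G) (_ : L.Normal), Nat.card L ≤ commutatorBound m ∧
      x ∈ centralizerMod (closure X) L := by
  have := hX.normal_closure
  have : (closure (conjugatesOf x)).Normal :=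
    closure_normal_of_conj_mem fun s hs ↦ conj_mem_conjugatesOf hs
  exact ⟨_, inferInstance, hX.card_commutator_conjugatesOf_le hx, mem_centralizerMod.2 fun h hh ↦
    commutator_mem_commutator hh (subset_closure mem_conjugatesOf_self)⟩

end IsBoundedNormalSet

end BoundedNormalSet

section Maximality

variable {G : Type*} [Group G] {H K L N : Subgroup G} {a u : G}

/-- The set of conjugates `h a h⁻¹` of `a` by the elements of the subgroup `H`. -/
def conjugatesBy (H : Subgroup G) (a : G) : Set G := (fun h ↦ h * a * h⁻¹) '' H

theorem conjugatesBy_mono (h : H ≤ K) : conjugatesBy H a ⊆ conjugatesBy K a := Set.image_mono h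

theorem conjugatesBy_subset_of_le_sup [N.Normal] (hH : H ≤ K ⊔ N) (hN : N ≤ centralizer {a}) :
    conjugatesBy H a ⊆ conjugatesBy K a := by
  rintro _ ⟨h, hh, rfl⟩
  have hKN : h ∈ (K ⊔ N : Subgroup G) := hH hh
  rw [← SetLike.mem_coe, mul_normal] at hKN
  obtain ⟨k, hk, n, hn, rfl⟩ := hKN
  refine ⟨k, hk, ?_⟩
  have hna : n * a * n⁻¹ = a := mul_inv_eq_of_eq_mul (mem_centralizer_singleton_iff.1 (hN hn))
  calc k * a * k⁻¹ = k * (n * a * n⁻¹) * k⁻¹ := by rw [hna]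
    _ = k * n * a * (k * n)⁻¹ := by group

theorem image_mul_left_conjugatesBy_subset (hu : u ∈ centralizer (K : Set G)) :
    (u * ·) '' conjugatesBy K a ⊆ conjugatesBy K (u * a) := by
  rintro _ ⟨_, ⟨k, hk, rfl⟩, rfl⟩
  refine ⟨k, hk, ?_⟩
  simp only [← mul_assoc, mem_centralizer_iff.1 hu k hk]

theorem mem_centralizerMod_of_conjugatesBy_subset [L.Normal] (ha : a ∈ centralizerMod H L)
    (hsub : conjugatesBy H (u * a) ⊆ (u * ·) '' conjugatesBy H a) : u ∈ centralizerMod H L := by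
  refine mem_centralizerMod.2 fun h hh ↦ ?_
  obtain ⟨_, ⟨k, hk, rfl⟩, hk'⟩ := hsub ⟨h, hh, rfl⟩
  have hconj : h * u * h⁻¹ = u * (k * a * k⁻¹) * (h * a * h⁻¹)⁻¹ :=
    eq_mul_inv_of_mul_eq ((by group : _ = h * (u * a) * h⁻¹).trans hk'.symm)
  have hfactor : ⁅h, u⁆ = u * (⁅k, a⁆ * ⁅h, a⁆⁻¹) * u⁻¹ := by
    rw [commutatorElement_def, hconj]
    simp only [commutatorElement_def]
    group
  rw [hfactor]
  exact Normal.conj_mem ‹_› _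
    (mul_mem (mem_centralizerMod.1 ha k hk) (inv_mem (mem_centralizerMod.1 ha h hh))) u

variable {X : Set G} {m : ℕ}

/- Choose `a ∈ Y` with the largest orbit under `⟨X⟩`. If `u` centralizes a finite subset of `X` that
realizes this orbit, then `u` times the orbit of `a` lies in the orbit of `u * a`; when `u * a ∈ Y`
both have the same size, so the two orbits coincide up to translation by `u`. -/
theorem IsBoundedNormalSet.exists_mem_forall_mul_mem [Finite G] (hX : IsBoundedNormalSet X m)
    {Y : Set G} (hYX : Y ⊆ X) (hY : Y.Nonempty) :
    ∃ a ∈ Y, ∃ (U L : Subgroup G) (_ : U.Normal) (_ : L.Normal), U.index ≤ indexBound m ∧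
      Nat.card L ≤ commutatorBound m ∧ ∀ u ∈ U, u * a ∈ Y → u ∈ centralizerMod (closure X) L := by
  obtain ⟨a, haY, hmax⟩ :=
    Set.exists_max_image Y (fun a ↦ (conjugatesBy (closure X) a).ncard) (Set.toFinite Y) hY
  obtain ⟨L, hL, hcard, haL⟩ := hX.exists_normal_card_le (hYX haY)
  obtain ⟨Z, hZX, -, hZcard, hXZ⟩ :=
    exists_subset_closure_le_closure_sup X (centralizer {a}).normalCore
  have ham := hX.index_centralizer_le a (hYX haY)
  have hm : 0 < m := (Nat.pos_of_ne_zero index_ne_zero_of_finite).trans_le ham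
  have hindex : (centralizer Z).index ≤ m ^ m.factorial :=
    (index_centralizer_le_pow fun z hz ↦ hX.index_centralizer_le z (hZX hz)).trans <|
      Nat.pow_le_pow_right hm <| hZcard.trans <|
        (index_normalCore_le_factorial _).trans (Nat.factorial_le ham)
  refine ⟨a, haY, (centralizer Z).normalCore, L, inferInstance, hL,
    (index_normalCore_le_factorial _).trans (Nat.factorial_le hindex), hcard, fun u hu hua ↦ ?_⟩
  have huZ : u ∈ centralizer (closure Z : Set G) := by
    rw [centralizer_closure]
    exact normalCore_le _ hu
  have hsub : (u * ·) '' conjugatesBy (closure X) a ⊆ conjugatesBy (closure X) (u * a) :=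
    (Set.image_mono (conjugatesBy_subset_of_le_sup hXZ (normalCore_le _))).trans <|
      (image_mul_left_conjugatesBy_subset huZ).trans (conjugatesBy_mono (closure_mono hZX))
  have heq := Set.eq_of_subset_of_ncard_le hsub
    ((hmax _ hua).trans_eq (Set.ncard_image_of_injective _ (mul_right_injective u)).symm)
  exact mem_centralizerMod_of_conjugatesBy_subset haL heq.ge

end Maximality

section DerivedSubgroup

variable {G : Type*} [Group G] {X : Set G} {m : ℕ}

theorem conj_mem_iff {N : Subgroup G} [N.Normal] {n g : G} : g * n * g⁻¹ ∈ N ↔ n ∈ N :=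
  ⟨fun h ↦ by simpa [mul_assoc] using Normal.conj_mem ‹_› _ h g⁻¹,
    fun h ↦ Normal.conj_mem ‹_› n h g⟩

theorem commutatorElement_mem_left {N : Subgroup G} [N.Normal] {n : G} (hn : n ∈ N) (g : G) :
    ⁅n, g⁆ ∈ N :=
  commutator_le_left N ⊤ (commutator_mem_commutator hn (mem_top g))

theorem commutatorElement_mem_right {N : Subgroup G} [N.Normal] {n : G} (hn : n ∈ N) (g : G) :
    ⁅g, n⁆ ∈ N :=
  commutator_le_right ⊤ N (commutator_mem_commutator (mem_top g) hn)

theorem map_mk'_commutator (N : Subgroup G) [N.Normal] :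
    (commutator G).map (QuotientGroup.mk' N) = commutator (G ⧸ N) := by
  rw [commutator_def, commutator_def, map_commutator,
    map_top_of_surjective _ (QuotientGroup.mk'_surjective N)]

namespace IsBoundedNormalSet

variable [Finite G]

/- The maximality argument is applied to the set of the commutators `⁅d, e⁆` with `d ∈ V`, which
contains with `⁅d, e⁆` also `⁅d * v, e * w⁆` for `v ∈ V`. -/
theorem exists_commutator_le_centralizerMod (hX : IsBoundedNormalSet X m) {V : Subgroup G}
    (hV : ∀ d ∈ V, ∀ e, ⁅d, e⁆ ∈ X) :
    ∃ (U L : Subgroup G) (_ : U.Normal) (_ : L.Normal), U.index ≤ indexBound m ∧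
      Nat.card L ≤ commutatorBound m ∧ ⁅V ⊓ U, U⁆ ≤ centralizerMod (closure X) L := by
  have hnormal := hX.normal_closure
  obtain ⟨_, ⟨d, hd, e, rfl⟩, U, L, hU, hL, hindex, hcard, hmem⟩ :=
    hX.exists_mem_forall_mul_mem (Y := {z | ∃ d ∈ V, ∃ e, ⁅d, e⁆ = z})
      (by rintro _ ⟨d, hd, e, rfl⟩; exact hV d hd e) ⟨_, 1, V.one_mem, 1, rfl⟩
  refine ⟨U, L, hU, hL, hindex, hcard, commutator_le.2 fun v ⟨hvV, hvU⟩ w hw ↦ ?_⟩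
  let C := centralizerMod (closure X) L
  have hleft : ∀ v ∈ V, v ∈ U → d * ⁅v, e⁆ * d⁻¹ ∈ C := fun v hvV hvU ↦
    hmem _ (conj_mem_iff.2 (commutatorElement_mem_left hvU e))
      ⟨d * v, mul_mem hd hvV, e, commutatorElement_mul_left_eq_conj_mul d v e⟩
  have hright : ∀ v ∈ V, v ∈ U → ⁅d * v, w⁆ ∈ C := by
    intro v hvV hvU
    have hfactor : ⁅d * v, e * w⁆ =
        d * ⁅v, e⁆ * d⁻¹ * (⁅d, e⁆ * e * ⁅d * v, w⁆ * (⁅d, e⁆ * e)⁻¹) * ⁅d, e⁆ := by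
      rw [commutatorElement_mul_right_eq_mul_conj, commutatorElement_mul_left_eq_conj_mul d v e]
      group
    have hprod := hmem _ (mul_mem (conj_mem_iff.2 (commutatorElement_mem_left hvU e))
      (conj_mem_iff.2 (commutatorElement_mem_right hw _)))
      ⟨d * v, mul_mem hd hvV, e * w, hfactor⟩
    exact conj_mem_iff.1 ((mul_mem_cancel_left (hleft v hvV hvU)).1 hprod)
  have hdw : ⁅d, w⁆ ∈ C := by simpa only [mul_one] using hright 1 V.one_mem U.one_mem
  have hdvw := hright v hvV hvU
  rw [commutatorElement_mul_left_eq_conj_mul, mul_mem_cancel_right hdw] at hdvw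
  exact conj_mem_iff.1 hdvw

theorem exists_commutatorElement_mem_centralizerMod (hX : IsBoundedNormalSet X m) {t : G}
    (ht : ∀ d : G, ⁅d, t⁆ ∈ X) :
    ∃ (U L : Subgroup G) (_ : U.Normal) (_ : L.Normal), U.index ≤ indexBound m ∧
      Nat.card L ≤ commutatorBound m ∧ ∀ u ∈ U, ⁅u, t⁆ ∈ centralizerMod (closure X) L := by
  have hnormal := hX.normal_closure
  obtain ⟨_, ⟨d, rfl⟩, U, L, hU, hL, hindex, hcard, hmem⟩ :=
    hX.exists_mem_forall_mul_mem (Y := Set.range fun d ↦ ⁅d, t⁆) (Set.range_subset_iff.2 ht)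
      (Set.range_nonempty _)
  refine ⟨U, L, hU, hL, hindex, hcard, fun u hu ↦ (conj_mem_iff (g := d)).1 ?_⟩
  exact hmem _ (conj_mem_iff.2 (commutatorElement_mem_left hu t))
    ⟨d * u, commutatorElement_mul_left_eq_conj_mul d u t⟩

end IsBoundedNormalSet

/-- The bound for the index of a normal subgroup `U`, and with `c = commutatorBound m` in place of
`c = indexBound m` for the order of a normal subgroup `L`, such that `[U, G]` centralizes `G'`
modulo `L`. -/
def cosetwiseBound (m c : ℕ) : ℕ := c * c ^ indexBound m

theorem isBoundedNormalSet_commutatorSet (h : ∀ a b : G, (centralizer {⁅a, b⁆}).index ≤ m) :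
    IsBoundedNormalSet (commutatorSet G) m where
  conj_mem := by
    rintro _ ⟨a, b, rfl⟩ g
    exact ⟨_, _, (conjugate_commutatorElement a b g).symm⟩
  index_centralizer_le := by
    rintro _ ⟨a, b, rfl⟩
    exact h a b

variable [Finite G]

theorem exists_commutator_top_le_centralizerMod (h : ∀ a b : G, (centralizer {⁅a, b⁆}).index ≤ m) :
    ∃ (U L : Subgroup G) (_ : U.Normal) (_ : L.Normal),
      U.index ≤ cosetwiseBound m (indexBound m) ∧
      Nat.card L ≤ cosetwiseBound m (commutatorBound m) ∧
      ⁅U, ⊤⁆ ≤ centralizerMod (commutator G) L := by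
  have hX := isBoundedNormalSet_commutatorSet h
  obtain ⟨U₀, L₀, hU₀, hL₀, hindex₀, hcard₀, hle₀⟩ :=
    hX.exists_commutator_le_centralizerMod (V := ⊤) fun d _ e ↦ commutator_mem_commutatorSet d e
  choose U L hU hL hindex hcard hmem using fun t : G ↦
    hX.exists_commutatorElement_mem_centralizerMod fun d ↦ commutator_mem_commutatorSet d t
  rw [← commutator_eq_closure] at hle₀
  simp only [← commutator_eq_closure] at hmem
  have := Fintype.ofFinite (G ⧸ U₀)
  have hUpos : 0 < indexBound m := Nat.factorial_pos _
  have hUnormal : (⨅ q : G ⧸ U₀, U q.out).Normal := normal_iInf_normal fun q ↦ hU _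
  have hLnormal : (⨆ q : G ⧸ U₀, L q.out).Normal := iSup_normal _
  refine ⟨U₀ ⊓ ⨅ q : G ⧸ U₀, U q.out, L₀ ⊔ ⨆ q : G ⧸ U₀, L q.out, inferInstance, inferInstance,
    ?_, ?_, ?_⟩
  · exact index_inf_le.trans (Nat.mul_le_mul hindex₀ <| (index_iInf_le _).trans <|
      prod_le_pow_of_card_le hUpos (fun q ↦ hindex _) hindex₀)
  · exact (card_sup_le_mul_card _ _).trans (Nat.mul_le_mul hcard₀ <|
      (card_iSup_le_prod_card _).trans <|
        prod_le_pow_of_card_le commutatorBound_pos (fun q ↦ hcard _) hindex₀)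
  refine commutator_le.2 fun u ⟨huU₀, huU⟩ g _ ↦ ?_
  let t : G := (g : G ⧸ U₀).out
  have hwU₀ : t⁻¹ * g ∈ U₀ := QuotientGroup.eq.1 (QuotientGroup.out_eq' _)
  have hfactor : ⁅u, g⁆ = ⁅u, t⁆ * t * ⁅u, t⁻¹ * g⁆ * t⁻¹ := by
    rw [← commutatorElement_mul_right_eq_mul_conj, mul_inv_cancel_left]
  rw [hfactor, mul_assoc, mul_assoc, ← mul_assoc t]
  refine mul_mem (centralizerMod_mono ?_ (hmem t u ?_)) (conj_mem_iff.2 ?_)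
  · exact le_sup_of_le_right (le_iSup (fun q : G ⧸ U₀ ↦ L q.out) g)
  · exact mem_iInf.1 huU g
  · exact centralizerMod_mono le_sup_left
      (hle₀ (commutator_mem_commutator ⟨mem_top u, huU₀⟩ hwU₀))

theorem relIndex_commutator_le_schurBound {U C : Subgroup G} [C.Normal] (h : ⁅U, ⊤⁆ ≤ C) :
    C.relIndex (commutator G) ≤ schurBound U.index := by
  have hcenter : U.map (QuotientGroup.mk' C) ≤ center (G ⧸ C) := by
    rw [← commutator_top_right_eq_bot_iff_le_center,
      ← map_top_of_surjective _ (QuotientGroup.mk'_surjective C), ← map_commutator,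
      Subgroup.map_eq_bot_iff, QuotientGroup.ker_mk']
    exact h
  have hindex : (U.map (QuotientGroup.mk' C)).index ≤ U.index :=
    Nat.le_of_dvd (Nat.pos_of_ne_zero index_ne_zero_of_finite)
      (index_map_dvd U (QuotientGroup.mk'_surjective C))
  rw [← QuotientGroup.ker_mk' C, relIndex_ker, map_mk'_commutator]
  exact card_commutator_le_schurBound.trans
    (schurBound_mono ((index_antitone hcenter).trans hindex))

/-- The bound for the order of `G''` when every commutator of `G` has at most `m` conjugates. -/
def allCommutatorsBound (m : ℕ) : ℕ :=
  schurBound (schurBound (cosetwiseBound m (indexBound m))) *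
    cosetwiseBound m (commutatorBound m)

theorem card_commutator_commutator_le_allCommutatorsBound
    (h : ∀ a b : G, (centralizer {⁅a, b⁆}).index ≤ m) :
    Nat.card (⁅commutator G, commutator G⁆ : Subgroup G) ≤ allCommutatorsBound m := by
  obtain ⟨U, L, _, hL, hindex, hcard, hle⟩ := exists_commutator_top_le_centralizerMod h
  exact (card_commutator_self_le_mul_card _ L).trans <| Nat.mul_le_mul (schurBound_mono <|
    (relIndex_commutator_le_schurBound hle).trans (schurBound_mono hindex)) hcard

end DerivedSubgroup

section CentralizerIndex

variable {G G' : Type*} [Group G] [Group G']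

theorem index_centralizer_inv (x : G) :
    (centralizer {x⁻¹}).index = (centralizer {x}).index := by
  congr 1
  ext g
  rw [mem_centralizer_singleton_iff, mem_centralizer_singleton_iff]
  exact Commute.inv_right_iff

theorem index_centralizer_conj (x g : G) :
    (centralizer {g * x * g⁻¹}).index = (centralizer {x}).index := by
  rw [← ncard_conjugatesOf, ← ncard_conjugatesOf,
    (isConj_iff.2 ⟨g, rfl⟩ : IsConj x (g * x * g⁻¹)).conjugatesOf_eq]

theorem index_centralizer_le_of_injective [Finite G'] {f : G →* G'} (hf : Function.Injective f)
    (x : G) : (centralizer {x}).index ≤ (centralizer {f x}).index := by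
  have hle : (centralizer {f x}).comap f ≤ centralizer {x} := fun g hg ↦ by
    rw [mem_comap, mem_centralizer_singleton_iff, ← map_mul, ← map_mul] at hg
    exact mem_centralizer_singleton_iff.2 (hf hg)
  have : Finite G := Finite.of_injective f hf
  refine (index_antitone hle).trans ?_
  rw [index_comap]
  exact relIndex_le_index _ _

theorem index_centralizer_prod (x : G) (y : G') :
    (centralizer {(x, y)}).index = (centralizer {x}).index * (centralizer {y}).index := by
  rw [← index_prod]
  congr 1
  ext ⟨g, g'⟩
  simp only [mem_prod, mem_centralizer_singleton_iff, Prod.mk_mul_mk, Prod.mk_inj]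

variable [Finite G]

theorem index_centralizer_mul_le (x y : G) :
    (centralizer {x * y}).index ≤ (centralizer {x}).index * (centralizer {y}).index := by
  refine (index_antitone fun g hg ↦ ?_).trans index_inf_le
  have hx := mem_centralizer_singleton_iff.1 hg.1
  have hy := mem_centralizer_singleton_iff.1 hg.2
  exact mem_centralizer_singleton_iff.2 (Commute.mul_right hx hy)

theorem index_centralizer_map_le {f : G →* G'} (hf : Function.Surjective f) (x : G) :
    (centralizer {f x}).index ≤ (centralizer {x}).index := by
  have hle : (centralizer {x}).map f ≤ centralizer {f x} := by
    simpa only [Set.image_singleton] using map_centralizer_le_centralizer_image {x} f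
  have : Finite G' := Finite.of_surjective f hf
  exact (index_antitone hle).trans
    (Nat.le_of_dvd (Nat.pos_of_ne_zero index_ne_zero_of_finite) (index_map_dvd _ hf))

theorem index_centralizer_le_pow_self {M : Subgroup G} [M.Normal] {c : ℕ} (hM : Nat.card M ≤ c) :
    (centralizer (M : Set G)).index ≤ c ^ c := by
  refine (index_centralizer_le_pow fun x hx ↦ ?_).trans
    (Nat.pow_le_pow_right (Nat.card_pos.trans_le hM) hM)
  refine le_trans ?_ hM
  rw [← ncard_conjugatesOf]
  refine Set.ncard_le_ncard (fun y hy ↦ ?_) (Set.toFinite _)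
  obtain ⟨g, rfl⟩ := isConj_iff.1 hy
  exact Normal.conj_mem ‹_› x hx g

end CentralizerIndex

theorem le_of_forall_isPGroup_le {G : Type*} [Group G] [Finite G] {H T : Subgroup G}
    (h : ∀ p : ℕ, p.Prime → ∀ P ≤ H, IsPGroup p P → P ≤ T) : H ≤ T := by
  rw [← relIndex_eq_one]
  by_contra hne
  obtain ⟨p, hp, hdvd⟩ := Nat.exists_prime_and_dvd hne
  have : Fact p.Prime := ⟨hp⟩
  obtain ⟨P⟩ : Nonempty (Sylow p H) := inferInstance
  have hle : (P : Subgroup H) ≤ T.subgroupOf H :=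
    map_le_iff_le_comap.1 (h p hp _ (map_subtype_le _) (P.2.map H.subtype))
  exact P.not_dvd_index (hdvd.trans (index_dvd_of_le hle))

theorem exists_conj_mem_sylow {G : Type*} [Group G] [Finite G] {p : ℕ} [Fact p.Prime]
    (P : Sylow p G) {x : G} (hx : IsPGroup p (zpowers x)) : ∃ g, g * x * g⁻¹ ∈ P := by
  obtain ⟨T, hT⟩ := hx.exists_le_sylow
  obtain ⟨g, rfl⟩ := MulAction.exists_smul_eq G T P
  exact ⟨g, smul_mem_pointwise_smul x (MulAut.conj g) T (hT (mem_zpowers x))⟩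

section FocalPair

variable {G G' : Type*} [Group G] [Group G'] {p : ℕ} {d e : G}

/-- The pairs whose commutators generate the focal subgroups of the Sylow `p`-subgroups: `d` and
its conjugate by `e`, or equivalently `d` and `[d, e]`, lie in a common `p`-subgroup. -/
def IsFocalPair (p : ℕ) (d e : G) : Prop :=
  ∃ P : Subgroup G, IsPGroup p P ∧ d ∈ P ∧ ⁅d, e⁆ ∈ P

namespace IsFocalPair

theorem map (h : IsFocalPair p d e) (f : G →* G') : IsFocalPair p (f d) (f e) := by
  obtain ⟨P, hP, hd, hde⟩ := h
  exact ⟨P.map f, hP.map f, mem_map_of_mem f hd, map_commutatorElement f d e ▸ mem_map_of_mem f hde⟩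

theorem prod {d' e' : G'} (h : IsFocalPair p d e) (h' : IsFocalPair p d' e') :
    IsFocalPair p (d, d') (e, e') := by
  obtain ⟨P, hP, hd, hde⟩ := h
  obtain ⟨P', hP', hd', hde'⟩ := h'
  refine ⟨P.prod P', ?_, ⟨hd, hd'⟩, hde, hde'⟩
  rintro ⟨⟨x, y⟩, hx, hy⟩
  obtain ⟨k, hk⟩ := hP ⟨x, hx⟩
  obtain ⟨l, hl⟩ := hP' ⟨y, hy⟩
  rw [Subtype.ext_iff] at hk hl
  refine ⟨k + l, Subtype.ext (Prod.ext ?_ ?_)⟩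
  · simpa [pow_add, pow_mul] using congrArg (· ^ p ^ l) hk
  · simpa [pow_add, pow_mul, pow_right_comm] using congrArg (· ^ p ^ k) hl

theorem of_normal {P : Subgroup G} [P.Normal] (hP : IsPGroup p P) (hd : d ∈ P) (e : G) :
    IsFocalPair p d e :=
  ⟨P, hP, hd, commutatorElement_mem_left hd e⟩

/- Lift `d` into a Sylow subgroup `P`. A conjugate of `e * d * e⁻¹` by an element `q` of `P * ker f`
lies in `P`, and `q` agrees modulo `ker f` with an element of `P`. -/
theorem exists_lift [Finite G] [Fact p.Prime] {f : G →* G'} (hf : Function.Surjective f)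
    {d' e' : G'} (h : IsFocalPair p d' e') :
    ∃ d e : G, IsFocalPair p d e ∧ f d = d' ∧ f e = e' := by
  obtain ⟨P', hP', hd', hde'⟩ := h
  obtain ⟨S, hS⟩ := hP'.exists_le_sylow
  obtain ⟨P, rfl⟩ := Sylow.mapSurjective_surjective hf p S
  obtain ⟨d, hd, rfl⟩ : ∃ d ∈ P, f d = d' := hS hd'
  obtain ⟨e, rfl⟩ := hf e'
  have hPQ : (P : Subgroup G) ≤ ((P : Subgroup G).map f).comap f := le_comap_map f _
  have hconj : e * d * e⁻¹ ∈ ((P : Subgroup G).map f).comap f := by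
    have hmem := mul_mem (inv_mem (hS hde')) (hS hd')
    rw [← map_commutatorElement, ← map_inv, ← map_mul, commutatorElement_def] at hmem
    simpa [mul_assoc] using hmem
  have hpgroup :
      IsPGroup p (zpowers (⟨e * d * e⁻¹, hconj⟩ : ((P : Subgroup G).map f).comap f)) := by
    obtain ⟨k, hk⟩ := P.2 ⟨d, hd⟩
    refine IsPGroup.of_card_dvd_pow (n := k) ?_
    rw [Nat.card_zpowers, orderOf_dvd_iff_pow_eq_one, Subtype.ext_iff, coe_pow, conj_pow]
    simpa [Subtype.ext_iff] using hk
  obtain ⟨q, hq⟩ := exists_conj_mem_sylow (P.subtype hPQ) hpgroup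
  obtain ⟨t, ht, hft⟩ : ∃ t ∈ P, f t = f q := q.2
  refine ⟨d, t⁻¹ * q * e, ⟨P, P.2, hd, ?_⟩, rfl, by simp [hft]⟩
  have hfactor : ⁅d, t⁻¹ * q * e⁆ = d * (t⁻¹ * (q * (e * d * e⁻¹) * (q : G)⁻¹) * t)⁻¹ := by
    rw [commutatorElement_def]
    group
  rw [hfactor]
  exact mul_mem hd (inv_mem (mul_mem (mul_mem (inv_mem ht) hq) ht))

end IsFocalPair

/-- The commutators `[d, e]` of all focal pairs, for all primes. -/
def focalCommutators (G : Type*) [Group G] : Set G :=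
  {x | ∃ p : ℕ, p.Prime ∧ ∃ d e : G, IsFocalPair p d e ∧ ⁅d, e⁆ = x}

theorem conj_mem_focalCommutators {x : G} (hx : x ∈ focalCommutators G) (g : G) :
    g * x * g⁻¹ ∈ focalCommutators G := by
  obtain ⟨p, hp, d, e, hde, rfl⟩ := hx
  exact ⟨p, hp, _, _, hde.map (MulAut.conj g).toMonoidHom, (conjugate_commutatorElement d e g).symm⟩

theorem closure_focalCommutators [Finite G] : closure (focalCommutators G) = commutator G := by
  refine le_antisymm ((closure_le _).2 ?_) (le_of_forall_isPGroup_le fun p hp P hP hpP ↦ ?_)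
  · rintro _ ⟨p, -, d, e, -, rfl⟩
    exact commutator_mem_commutator (mem_top d) (mem_top e)
  have : Fact p.Prime := ⟨hp⟩
  obtain ⟨S, hS⟩ := hpP.exists_le_sylow
  refine (le_inf hP hS).trans ?_
  rw [commutator_inf_eq_focalSubgroup, focalSubgroup_def]
  refine closure_mono ?_
  rintro _ ⟨hde, d, hd, e, rfl⟩
  exact ⟨p, hp, d, e, ⟨S, S.2, hd, hde⟩, rfl⟩

/-- For every prime `p`, the commutator of a focal pair for `p` has at most `μ p` conjugates. This
is the form of the hypothesis that passes to subgroups and quotients. -/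
def HasFocalBound (G : Type*) [Group G] (μ : ℕ → ℕ) : Prop :=
  ∀ p : ℕ, p.Prime → ∀ d e : G, IsFocalPair p d e → (centralizer {⁅d, e⁆}).index ≤ μ p

namespace HasFocalBound

variable {μ ν : ℕ → ℕ} {m : ℕ}

theorem mono (h : HasFocalBound G μ) (hle : ∀ p, μ p ≤ ν p) : HasFocalBound G ν :=
  fun p hp d e hde ↦ (h p hp d e hde).trans (hle p)

theorem isBoundedNormalSet (h : HasFocalBound G fun _ ↦ m) :
    IsBoundedNormalSet (focalCommutators G) m where
  conj_mem _ := conj_mem_focalCommutators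
  index_centralizer_le := by
    rintro _ ⟨p, hp, d, e, hde, rfl⟩
    exact h p hp d e hde

variable [Finite G]

theorem subgroup (h : HasFocalBound G μ) (K : Subgroup G) : HasFocalBound K μ :=
  fun p hp d e hde ↦ (index_centralizer_le_of_injective K.subtype_injective ⁅d, e⁆).trans <|
    h p hp d e (hde.map K.subtype)

theorem quotient (h : HasFocalBound G μ) (N : Subgroup G) [N.Normal] :
    HasFocalBound (G ⧸ N) μ := by
  intro p hp d' e' hde'
  have : Fact p.Prime := ⟨hp⟩
  obtain ⟨d, e, hde, rfl, rfl⟩ := hde'.exists_lift (QuotientGroup.mk'_surjective N)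
  rw [← map_commutatorElement]
  exact (index_centralizer_map_le (QuotientGroup.mk'_surjective N) _).trans (h p hp d e hde)

/- The index of `C_P(x)` in `P` is a power of `p` which is at most `m < p`. -/
theorem commutator_le_centralizer (h : HasFocalBound G fun _ ↦ m) {p : ℕ} [Fact p.Prime]
    (hmp : m < p) {P : Subgroup G} (hP : IsPGroup p P) :
    commutator G ≤ centralizer (P : Set G) := by
  rw [← closure_focalCommutators, closure_le]
  intro x hx
  have hindex : (centralizer {x}).relIndex P ≤ m :=
    (relIndex_le_index _ _).trans (h.isBoundedNormalSet.index_centralizer_le x hx)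
  obtain ⟨n, hn⟩ := hP.index ((centralizer {x}).subgroupOf P)
  have hn₀ : n = 0 := by
    by_contra hn₀
    exact (hmp.trans_le (Nat.le_self_pow hn₀ p)).not_ge (hn ▸ hindex)
  have hle : P ≤ centralizer {x} := by rw [← relIndex_eq_one, relIndex, hn, hn₀, pow_zero]
  exact mem_centralizer_iff.2 fun y hy ↦ mem_centralizer_singleton_iff.1 (hle hy)

end HasFocalBound

end FocalPair

section NilpotentComplement

variable {G : Type*} [Group G] [Finite G] {p : ℕ} [Fact p.Prime]

theorem exists_surjective_sylow [Group.IsNilpotent G] (P : Sylow p G) :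
    ∃ f : G →* P, Function.Surjective f := by
  by_cases hdvd : p ∣ Nat.card G
  · obtain ⟨φ⟩ := ((Group.isNilpotent_of_finite_tfae (G := G)).out 0 4).1 ‹_›
    let q : (Nat.card G).primeFactors :=
      ⟨p, Nat.mem_primeFactors.2 ⟨Fact.out, hdvd, Nat.card_pos.ne'⟩⟩
    refine ⟨(Pi.evalMonoidHom (fun P : Sylow p G ↦ P) P).comp
      ((Pi.evalMonoidHom (fun q : (Nat.card G).primeFactors ↦ ∀ P : Sylow q G, P) q).comp
        φ.symm.toMonoidHom), ?_⟩
    exact (Function.surjective_eval P).comp ((Function.surjective_eval q).comp φ.symm.surjective)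
  · refine ⟨1, fun x ↦ ⟨1, ?_⟩⟩
    by_contra hne
    exact hdvd <| (P.2.dvd_orderOf (Ne.symm hne)).trans <|
      (_root_.orderOf_dvd_natCard x).trans (card_subgroup_dvd_card (P : Subgroup G))

theorem mem_ker_iff_not_dvd_orderOf {P : Sylow p G} {f : G →* P} (hf : Function.Surjective f)
    {g : G} : g ∈ f.ker ↔ ¬ p ∣ orderOf g := by
  refine ⟨fun hg hdvd ↦ P.not_dvd_index ?_, fun hg ↦ ?_⟩
  · have hcard : Nat.card f.ker = (P : Subgroup G).index := by
      refine Nat.eq_of_mul_eq_mul_left (Nat.card_pos (α := P)) ?_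
      rw [card_mul_index, mul_comm, ← card_mul_index f.ker, index_ker,
        MonoidHom.range_eq_top.2 hf, card_top]
    exact hcard ▸ hdvd.trans (Subgroup.orderOf_dvd_natCard f.ker hg)
  · rw [MonoidHom.mem_ker]
    by_contra hne
    exact hg ((P.2.dvd_orderOf hne).trans (orderOf_map_dvd f g))

theorem exists_normal_not_dvd_card (H : Subgroup G) [H.Normal] [Group.IsNilpotent H] :
    ∃ (Q : Subgroup G) (_ : Q.Normal), ¬ p ∣ Nat.card Q ∧
      IsPGroup p (H.map (QuotientGroup.mk' Q)) := by
  obtain ⟨P⟩ : Nonempty (Sylow p H) := inferInstance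
  obtain ⟨f, hf⟩ := exists_surjective_sylow P
  have hchar : f.ker.Characteristic := characteristic_iff_comap_le.2 fun φ h hh ↦ by
    rw [mem_comap, mem_ker_iff_not_dvd_orderOf hf] at hh
    rw [mem_ker_iff_not_dvd_orderOf hf]
    simpa using hh
  refine ⟨f.ker.map H.subtype, inferInstance, fun hdvd ↦ ?_, ?_⟩
  · rw [card_map_of_injective H.subtype_injective] at hdvd
    obtain ⟨x, hx⟩ := exists_prime_orderOf_dvd_card' p hdvd
    refine mem_ker_iff_not_dvd_orderOf hf |>.1 x.2 ?_
    rw [orderOf_coe, hx]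
  · rintro ⟨_, h, hh, rfl⟩
    obtain ⟨k, hk⟩ := P.2 (f ⟨h, hh⟩)
    refine ⟨k, Subtype.ext ?_⟩
    rw [← map_pow, ← MonoidHom.mem_ker] at hk
    exact (QuotientGroup.eq_one_iff _).2 (mem_map_of_mem H.subtype hk)

end NilpotentComplement

section NilpotentDerivedSubgroup

variable {G : Type*} [Group G] [Finite G] {p m : ℕ}

/- By Schur–Zassenhaus `G` is the product of a normal Sylow `p`-subgroup `P` containing `G'` and an
abelian complement `A`, so a commutator is a product of two commutators of focal pairs. -/
theorem HasFocalBound.index_centralizer_commutatorElement_le [Fact p.Prime]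
    (h : HasFocalBound G fun _ ↦ m) (hG : IsPGroup p (commutator G)) (g k : G) :
    (centralizer {⁅g, k⁆}).index ≤ m * m := by
  obtain ⟨P, hP⟩ := hG.exists_le_sylow
  have hnormal : (P : Subgroup G).Normal := Normal.of_commutator_le G hP
  obtain ⟨A, hA⟩ := exists_right_complement'_of_coprime P.card_coprime_index
  have hfactor : ∀ g : G, ∃ x ∈ (P : Subgroup G), ∃ a ∈ A, x * a = g := by
    intro g
    obtain ⟨⟨x, a⟩, hxa, -⟩ := (isComplement'_def.1 hA).existsUnique g
    exact ⟨x, x.2, a, a.2, hxa⟩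
  obtain ⟨x, hx, a, ha, rfl⟩ := hfactor g
  obtain ⟨y, hy, b, hb, rfl⟩ := hfactor k
  have hab : ⁅a, b⁆ = 1 := hA.disjoint.le_bot
    ⟨hP (commutator_mem_commutator (mem_top a) (mem_top b)),
      A.mul_mem (A.mul_mem (A.mul_mem ha hb) (A.inv_mem ha)) (A.inv_mem hb)⟩
  have hcommutator : ⁅x * a, y * b⁆ = x * ⁅y, a⁆⁻¹ * x⁻¹ * ⁅x, y * b⁆ := by
    rw [commutatorElement_mul_left_eq_conj_mul, commutatorElement_mul_right_eq_mul_conj a, hab,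
      mul_one, mul_inv_cancel_right, commutatorElement_inv]
  rw [hcommutator]
  refine (index_centralizer_mul_le _ _).trans (Nat.mul_le_mul ?_ ?_)
  · rw [index_centralizer_conj, index_centralizer_inv]
    exact h p Fact.out y a (.of_normal P.2 hy a)
  · exact h p Fact.out x _ (.of_normal P.2 hx _)

theorem HasFocalBound.exists_relIndex_le [Fact p.Prime] [Group.IsNilpotent (commutator G)]
    (h : HasFocalBound G fun _ ↦ m) :
    ∃ Q : Subgroup G, ¬ p ∣ Nat.card Q ∧
      Q.relIndex ⁅commutator G, commutator G⁆ ≤ allCommutatorsBound (m * m) ∧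
      (m < p → ⁅commutator G, commutator G⁆ ≤ Q) := by
  obtain ⟨Q, hQ, hdvd, hpgroup⟩ := exists_normal_not_dvd_card (p := p) (commutator G)
  have hmap : (⁅commutator G, commutator G⁆ : Subgroup G).map (QuotientGroup.mk' Q) =
      ⁅commutator (G ⧸ Q), commutator (G ⧸ Q)⁆ := by rw [map_commutator, map_mk'_commutator]
  rw [map_mk'_commutator] at hpgroup
  refine ⟨Q, hdvd, ?_, fun hmp ↦ ?_⟩
  · rw [← QuotientGroup.ker_mk' Q, relIndex_ker, hmap]
    exact card_commutator_commutator_le_allCommutatorsBound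
      ((h.quotient Q).index_centralizer_commutatorElement_le hpgroup)
  · rw [← QuotientGroup.ker_mk' Q, ← Subgroup.map_eq_bot_iff, hmap,
      commutator_eq_bot_iff_le_centralizer]
    exact (h.quotient Q).commutator_le_centralizer hmp hpgroup

theorem HasFocalBound.card_commutator_commutator_le_pow [Group.IsNilpotent (commutator G)]
    (h : HasFocalBound G fun _ ↦ m) :
    Nat.card (⁅commutator G, commutator G⁆ : Subgroup G) ≤ allCommutatorsBound (m * m) ^ m := by
  have hQ : ∀ p : ℕ, p.Prime → ∃ Q : Subgroup G, ¬ p ∣ Nat.card Q ∧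
      Q.relIndex ⁅commutator G, commutator G⁆ ≤ allCommutatorsBound (m * m) ∧
      (m < p → ⁅commutator G, commutator G⁆ ≤ Q) := fun p hp ↦
    have : Fact p.Prime := ⟨hp⟩
    h.exists_relIndex_le
  choose! Q hdvd hindex hle using hQ
  have hdisjoint :
      (⨅ p : Nat.primesLE m, Q p) ⊓ (⁅commutator G, commutator G⁆ : Subgroup G) = ⊥ := by
    rw [← card_eq_one]
    by_contra hne
    obtain ⟨p, hp, hpdvd⟩ := Nat.exists_prime_and_dvd hne
    refine hdvd p hp (hpdvd.trans (card_dvd_of_le ?_))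
    obtain hpm | hmp := le_or_gt p m
    · exact inf_le_left.trans (iInf_le (fun p : Nat.primesLE m ↦ Q p)
        ⟨p, Nat.mem_primesLE.2 ⟨hpm, hp⟩⟩)
    · exact inf_le_right.trans (hle p hp hmp)
  rw [← relIndex_bot_left, ← hdisjoint, inf_relIndex_right]
  have hpos : 0 < (Q 2).relIndex ⁅commutator G, commutator G⁆ :=
    Nat.pos_of_ne_zero index_ne_zero_of_finite
  exact (relIndex_iInf_le _).trans <|
    prod_le_pow_of_card_le (hpos.trans_le (hindex 2 Nat.prime_two))
      (fun p ↦ hindex p (Nat.mem_primesLE.1 p.2).2) (card_primesLE_le m)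

end NilpotentDerivedSubgroup

section PCore

variable {G : Type*} [Group G] {p : ℕ}

/-- The `p`-core `O_p(G)`, the largest normal `p`-subgroup. -/
def pCore (p : ℕ) (G : Type*) [Group G] : Subgroup G :=
  sSup {P : Subgroup G | P.Normal ∧ IsPGroup p P}

theorem isPGroup_pCore : IsPGroup p (pCore p G) :=
  Sylow.sSup_of_normal _ (fun _ hP ↦ hP.2) fun _ hP ↦ hP.1

theorem le_pCore {P : Subgroup G} [P.Normal] (hP : IsPGroup p P) : P ≤ pCore p G :=
  le_sSup ⟨‹_›, hP⟩

instance pCore_characteristic : (pCore p G).Characteristic :=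
  characteristic_iff_map_le.2 fun φ ↦ map_le_iff_le_comap.2 <| sSup_le fun _ hP ↦
    map_le_iff_le_comap.1 <| le_sSup ⟨hP.1.map _ φ.surjective, hP.2.map _⟩

theorem pCore_eq_bot_of_normal (h : pCore p G = ⊥) (N : Subgroup G) [N.Normal] :
    pCore p N = ⊥ := by
  rw [← map_eq_bot_iff_of_injective _ N.subtype_injective, ← le_bot_iff, ← h]
  exact le_pCore (isPGroup_pCore.map N.subtype)

theorem le_pCore_of_isNilpotent [Finite G] [Fact p.Prime] {N P : Subgroup G} [N.Normal]
    [Group.IsNilpotent N] (hP : IsPGroup p P) (hPN : P ≤ N) : P ≤ pCore p G := by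
  obtain ⟨S, hS⟩ := (hP.comap_subtype (K := N)).exists_le_sylow
  have := S.characteristic_of_normal inferInstance
  rw [← map_subgroupOf_eq_of_le hPN]
  exact (map_mono hS).trans (le_pCore (S.2.map N.subtype))

variable [Finite G]

theorem eq_bot_of_isNilpotent (h : ∀ p : ℕ, p.Prime → pCore p G = ⊥) (N : Subgroup G) [N.Normal]
    [Group.IsNilpotent N] : N = ⊥ :=
  le_bot_iff.1 <| le_of_forall_isPGroup_le fun p hp _ hPN hP ↦
    have : Fact p.Prime := ⟨hp⟩
    (le_pCore_of_isNilpotent hP hPN).trans (h p hp).le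

theorem eq_bot_of_commutator_eq_bot (h : ∀ p : ℕ, p.Prime → pCore p G = ⊥) (N : Subgroup G)
    [N.Normal] (hN : ⁅N, N⁆ = ⊥) : N = ⊥ :=
  have : Group.IsNilpotent N := isNilpotent_of_lowerCentralSeries_eq_bot (n := 1) hN
  eq_bot_of_isNilpotent h N

theorem exists_focalCommutators_notMem_centralizer [Nontrivial G]
    (h : ∀ p : ℕ, p.Prime → pCore p G = ⊥) :
    ∃ x ∈ focalCommutators G, x ∉ centralizer (commutator G : Set G) := by
  by_contra! hcentral
  refine top_ne_bot (α := Subgroup G) (eq_bot_of_commutator_eq_bot h ⊤ ?_)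
  refine eq_bot_of_commutator_eq_bot h (commutator G) ?_
  rw [commutator_eq_bot_iff_le_centralizer]
  conv_lhs => rw [← closure_focalCommutators]
  exact (closure_le _).2 hcentral

variable (G) in
theorem exists_isSolvable_pCore_quotient_eq_bot :
    ∃ (R : Subgroup G) (_ : R.Normal), Group.IsSolvable R ∧
      ∀ p : ℕ, p.Prime → pCore p (G ⧸ R) = ⊥ := by
  obtain ⟨R, ⟨hR, hsolvable⟩, hmax⟩ :=
    (Set.toFinite {R : Subgroup G | R.Normal ∧ Group.IsSolvable R}).exists_maximal
      ⟨⊥, inferInstance, inferInstance⟩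
  refine ⟨R, hR, hsolvable, fun p hp ↦ le_bot_iff.1 fun a ha ↦ ?_⟩
  have : Fact p.Prime := ⟨hp⟩
  have := (isPGroup_pCore (p := p) (G := G ⧸ R)).isNilpotent
  let S : Subgroup G := (pCore p (G ⧸ R)).comap (QuotientGroup.mk' R)
  have hle : R ≤ S := QuotientGroup.le_comap_mk' R _
  have hS : Group.IsSolvable S :=
    Group.isSolvable_of_ker_le_range (inclusion hle) ((QuotientGroup.mk' R).subgroupComap _)
      fun g hg ↦ ⟨⟨g, (QuotientGroup.eq_one_iff _).1 (Subtype.ext_iff.1 hg)⟩, rfl⟩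
  obtain ⟨g, rfl⟩ := QuotientGroup.mk'_surjective R a
  exact (QuotientGroup.eq_one_iff g).2 (hmax ⟨inferInstance, hS⟩ hle ha)

end PCore

section SolvableRadical

variable {G : Type*} [Group G] [Finite G] {μ : ℕ → ℕ} {p m : ℕ}

/- The product of the two commutators is again the commutator of a focal pair, and the number of its
conjugates under `M * N` is the product of the numbers of conjugates of the factors. -/
theorem HasFocalBound.two_mul_index_centralizer_le (h : HasFocalBound G μ) {M N : Subgroup G}
    (hMN : N ≤ centralizer M) (hdisj : Disjoint M N) (hp : p.Prime) {d e : M} {d' e' : N}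
    (hde : IsFocalPair p d e) (hne : ⁅d, e⁆ ∉ center M) (hde' : IsFocalPair p d' e') :
    2 * (centralizer {⁅d', e'⁆}).index ≤ μ p := by
  have hcomm : ∀ (x : M) (y : N), Commute (M.subtype x) (N.subtype y) := fun x y ↦
    mem_centralizer_iff.1 (hMN y.2) x x.2
  have hinj : Function.Injective (M.subtype.noncommCoprod N.subtype hcomm) := by
    rw [MonoidHom.noncommCoprod_injective, range_subtype, range_subtype]
    exact ⟨M.subtype_injective, N.subtype_injective, hdisj⟩
  have hindex : (centralizer {⁅d, e⁆}).index ≠ 1 := by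
    rw [Ne, index_eq_one, centralizer_eq_top_iff_subset, Set.singleton_subset_iff]
    exact hne
  calc 2 * (centralizer {⁅d', e'⁆}).index
      ≤ (centralizer {⁅d, e⁆}).index * (centralizer {⁅d', e'⁆}).index :=
        Nat.mul_le_mul_right _ ((Nat.two_le_iff _).2 ⟨index_ne_zero_of_finite, hindex⟩)
    _ = (centralizer {⁅(d, d'), (e, e')⁆}).index := (index_centralizer_prod _ _).symm
    _ ≤ _ := index_centralizer_le_of_injective hinj _
    _ ≤ μ p := by
      rw [map_commutatorElement]
      exact h p hp _ _ ((hde.prod hde').map _)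

theorem HasFocalBound.exists_update_half [Nontrivial G] (h : HasFocalBound G μ)
    (hμ : ∀ p, μ p ≤ m) (hcore : ∀ p : ℕ, p.Prime → pCore p G = ⊥) :
    ∃ (p : ℕ) (N : Subgroup G) (_ : N.Normal), p ≤ m ∧ 0 < μ p ∧
      N.index ≤ commutatorBound m ^ commutatorBound m ∧
      HasFocalBound N (Function.update μ p (μ p / 2)) := by
  have hm : HasFocalBound G fun _ ↦ m := h.mono hμ
  obtain ⟨x, hx, hcentral⟩ := exists_focalCommutators_notMem_centralizer hcore
  obtain ⟨M, hM, hcard, hxM⟩ := hm.isBoundedNormalSet.exists_normal_card_le hx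
  rw [closure_focalCommutators, mem_centralizerMod] at hxM
  have : Nontrivial M := by
    rw [nontrivial_iff_ne_bot]
    rintro rfl
    exact hcentral <| mem_centralizer_iff.2 fun w hw ↦
      commutatorElement_eq_one_iff_mul_comm.1 (mem_bot.1 (hxM w hw))
  obtain ⟨_, ⟨p, hp, d, e, hde, rfl⟩, hcentral'⟩ :=
    exists_focalCommutators_notMem_centralizer fun p hp ↦ pCore_eq_bot_of_normal (hcore p hp) M
  have : Fact p.Prime := ⟨hp⟩
  have hdisj : Disjoint M (centralizer M) := by
    rw [disjoint_iff]
    refine eq_bot_of_commutator_eq_bot hcore _ (commutator_eq_bot_iff_le_centralizer.2 ?_)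
    exact inf_le_right.trans (centralizer_le inf_le_left)
  refine ⟨p, centralizer M, inferInstance, ?_, ?_, ?_, fun q hq d' e' hde' ↦ ?_⟩
  · by_contra! hmp
    obtain ⟨P, hP, -, hmem⟩ := hde
    refine hcentral' (mem_centralizer_iff.2 fun w hw ↦ ?_)
    exact (mem_centralizer_iff.1 ((hm.subgroup M).commutator_le_centralizer hmp hP hw) _ hmem).symm
  · exact (Nat.pos_of_ne_zero index_ne_zero_of_finite).trans_le (h.subgroup M p hp d e hde)
  · exact index_centralizer_le_pow_self hcard
  · obtain rfl | hqp := eq_or_ne q p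
    · rw [Function.update_self, Nat.le_div_iff_mul_le two_pos, mul_comm]
      exact h.two_mul_index_centralizer_le le_rfl hdisj hq hde
        (fun hcenter ↦ hcentral' (center_le_centralizer _ hcenter)) hde'
    · rw [Function.update_of_ne hqp]
      exact h.subgroup _ q hq d' e' hde'

theorem HasFocalBound.card_le_pow (h : HasFocalBound G μ) (hμ : ∀ p, μ p ≤ m)
    (hcore : ∀ p : ℕ, p.Prime → pCore p G = ⊥) {s : ℕ}
    (hs : ∑ p ∈ Finset.range (m + 1), μ p ≤ s) :
    Nat.card G ≤ (commutatorBound m ^ commutatorBound m) ^ s := by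
  induction s generalizing G μ with
  | zero =>
    obtain hG | hG := subsingleton_or_nontrivial G
    · rw [pow_zero, Nat.card_of_subsingleton (1 : G)]
    · obtain ⟨p, -, -, hpm, hpos, -⟩ := h.exists_update_half hμ hcore
      have := Finset.sum_eq_zero_iff.1 (Nat.le_zero.1 hs) p (Finset.mem_range.2 (by lia))
      lia
  | succ s ih =>
    obtain hG | hG := subsingleton_or_nontrivial G
    · rw [Nat.card_of_subsingleton (1 : G)]
      exact Nat.one_le_pow _ _ Nat.pow_self_pos
    obtain ⟨p, N, hN, hpm, hpos, hindex, hhalf⟩ := h.exists_update_half hμ hcore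
    have hle : Function.update μ p (μ p / 2) ≤ μ :=
      update_le_self_iff.2 (Nat.div_le_self _ _)
    have hlt : ∑ q ∈ Finset.range (m + 1), Function.update μ p (μ p / 2) q <
        ∑ q ∈ Finset.range (m + 1), μ q := by
      refine Finset.sum_lt_sum (fun q _ ↦ hle q) ⟨p, Finset.mem_range.2 (by lia), ?_⟩
      rw [Function.update_self]
      exact Nat.div_lt_self hpos one_lt_two
    rw [← card_mul_index N, pow_succ]
    exact Nat.mul_le_mul (ih hhalf (fun q ↦ (hle q).trans (hμ q))
      (fun q hq ↦ pCore_eq_bot_of_normal (hcore q hq) N) (by lia)) hindex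

/-- The bound for the index of a maximal normal solvable subgroup. -/
def solvableIndexBound (m : ℕ) : ℕ :=
  (commutatorBound m ^ commutatorBound m) ^ ((m + 1) * m)

theorem HasFocalBound.exists_isSolvable_index_le (h : HasFocalBound G fun _ ↦ m) :
    ∃ (R : Subgroup G) (_ : R.Normal), Group.IsSolvable R ∧ R.index ≤ solvableIndexBound m := by
  obtain ⟨R, hR, hsolvable, hcore⟩ := exists_isSolvable_pCore_quotient_eq_bot G
  refine ⟨R, hR, hsolvable, (h.quotient R).card_le_pow (fun _ ↦ le_rfl) hcore ?_⟩
  rw [Finset.sum_const, Finset.card_range, smul_eq_mul]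

end SolvableRadical

section NilpotentResidual

variable {G : Type*} [Group G] {H K L B C : Subgroup G} {m : ℕ}

theorem lowerCentralSeries_succ_le [L.Normal] {n : ℕ}
    (h : H.lowerCentralSeries n ≤ centralizerMod K L) (hHK : H ≤ K) :
    H.lowerCentralSeries (n + 1) ≤ L := by
  rw [Subgroup.lowerCentralSeries_succ, commutator_comm]
  exact (commutator_mono hHK le_rfl).trans (le_centralizerMod_iff.1 h)

theorem commutator_le_sup {H₁ H₂ K₁ K₂ : Subgroup G} [C.Normal] (h₁ : H₁ ≤ K₁ ⊔ C)
    (h₂ : H₂ ≤ K₂ ⊔ C) : ⁅H₁, H₂⁆ ≤ ⁅K₁, K₂⁆ ⊔ C := by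
  rw [← QuotientGroup.ker_mk' C, ← Subgroup.map_le_map_iff] at h₁ h₂ ⊢
  rw [map_commutator, map_commutator]
  exact commutator_mono h₁ h₂

variable [Finite G]

theorem commutator_le_of_isNilpotent [C.Normal]
    (h : ∀ p : ℕ, p.Prime → ⁅pCore p G ⊓ K, K⁆ ≤ C) {N : Subgroup G} [N.Normal]
    [Group.IsNilpotent N] (hNK : N ≤ K) : ⁅N, K⁆ ≤ C := by
  rw [commutator_comm, ← le_centralizerMod_iff]
  refine le_of_forall_isPGroup_le fun p hp P hPN hP ↦ ?_
  have : Fact p.Prime := ⟨hp⟩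
  rw [le_centralizerMod_iff, commutator_comm]
  exact (commutator_mono (le_inf (le_pCore_of_isNilpotent hP hPN) (hPN.trans hNK)) le_rfl).trans
    (h p hp)

/- By induction `⁅B, B⁆` is nilpotent, so `γ₃(B)` centralizes `B` modulo `L`, and `B` centralizes
`L`. -/
theorem isNilpotent_of_commutator_le_centralizerMod [L.Normal] [Group.IsSolvable K]
    (hKL : K ≤ centralizer (L : Set G))
    (h : ∀ (N : Subgroup G) [N.Normal] [Group.IsNilpotent N], N ≤ K → ⁅N, K⁆ ≤ centralizerMod H L)
    [hnormal : B.Normal] (hBK : B ≤ K) (hBH : B ≤ H) : Group.IsNilpotent B := by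
  induction B using WellFoundedLT.induction generalizing hnormal with
  | ind B ih =>
  obtain hB | hB := subsingleton_or_nontrivial B
  · infer_instance
  have : Group.IsSolvable B := Group.isSolvable_of_isSolvable_injective (inclusion_injective hBK)
  have hlt : ⁅B, B⁆ < B := by
    rw [← map_subtype_commutator]
    conv_rhs => rw [← range_subtype B, MonoidHom.range_eq_map]
    exact map_subtype_lt_map_subtype.2 (Group.IsSolvable.commutator_lt_top_of_nontrivial B)
  have := ih ⁅B, B⁆ hlt (hlt.le.trans hBK) (hlt.le.trans hBH)
  have h₂ : B.lowerCentralSeries 2 ≤ centralizerMod H L :=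
    (commutator_mono le_rfl hBK).trans (h ⁅B, B⁆ (hlt.le.trans hBK))
  have h₃ : B.lowerCentralSeries 3 ≤ L := lowerCentralSeries_succ_le h₂ hBH
  refine isNilpotent_of_lowerCentralSeries_eq_bot (n := 4) ?_
  rw [Subgroup.lowerCentralSeries_succ, commutator_comm, commutator_eq_bot_iff_le_centralizer]
  exact (hBK.trans hKL).trans (centralizer_le h₃)

/-- The bound for the index of a normal solvable subgroup `K` such that `[O_p(K), K]` is for all
primes `p` centralized by `G'` modulo a normal subgroup `L` which is centralized by `K` and has
order at most `commutatorBound m ^ m`. -/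
def residualIndexBound (m : ℕ) : ℕ :=
  solvableIndexBound m * indexBound m ^ m *
    (commutatorBound m ^ m) ^ (commutatorBound m ^ m)

namespace HasFocalBound

theorem exists_commutator_pCore_inf_le (h : HasFocalBound G fun _ ↦ m) :
    ∃ (K L : Subgroup G) (_ : K.Normal) (_ : L.Normal), Group.IsSolvable K ∧
      K.index ≤ residualIndexBound m ∧ Nat.card L ≤ commutatorBound m ^ m ∧
      K ≤ centralizer (L : Set G) ∧
      ∀ p : ℕ, p.Prime → ⁅pCore p G ⊓ K, K⁆ ≤ centralizerMod (commutator G) L := by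
  obtain ⟨R, hR, hsolvable, hRindex⟩ := h.exists_isSolvable_index_le
  choose U L hU hL hindex hcard hle using fun p : Nat.primesLE m ↦
    h.isBoundedNormalSet.exists_commutator_le_centralizerMod (V := pCore p G) fun d hd e ↦
      ⟨p, (Nat.mem_primesLE.1 p.2).2, d, e, .of_normal isPGroup_pCore hd e, rfl⟩
  simp only [closure_focalCommutators] at hle
  have hUpos : 0 < indexBound m := Nat.factorial_pos _
  have hUnormal : (⨅ p, U p).Normal := normal_iInf_normal hU
  have hLnormal : (⨆ p, L p).Normal := iSup_normal _
  have hLcard : Nat.card ↥(⨆ p, L p) ≤ commutatorBound m ^ m :=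
    (card_iSup_le_prod_card L).trans <|
      prod_le_pow_of_card_le commutatorBound_pos hcard (card_primesLE_le m)
  refine ⟨R ⊓ (⨅ p, U p) ⊓ centralizer ↑(⨆ p, L p), ⨆ p, L p, inferInstance, hLnormal, ?_, ?_,
    hLcard, inf_le_right, fun p hp ↦ ?_⟩
  · exact Group.isSolvable_of_isSolvable_injective
      (inclusion_injective (inf_le_left.trans inf_le_left : _ ≤ R))
  · refine index_inf_le.trans (Nat.mul_le_mul ?_ (index_centralizer_le_pow_self hLcard))
    refine index_inf_le.trans (Nat.mul_le_mul hRindex ?_)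
    exact (index_iInf_le _).trans (prod_le_pow_of_card_le hUpos hindex (card_primesLE_le m))
  obtain hpm | hmp := le_or_gt p m
  · let q : Nat.primesLE m := ⟨p, Nat.mem_primesLE.2 ⟨hpm, hp⟩⟩
    have hKU : R ⊓ (⨅ p, U p) ⊓ centralizer ↑(⨆ p, L p) ≤ U q :=
      inf_le_left.trans (inf_le_right.trans (iInf_le U q))
    exact (commutator_mono (inf_le_inf_left _ hKU) hKU).trans <|
      (hle q).trans (centralizerMod_mono (le_iSup L q))
  · have : Fact p.Prime := ⟨hp⟩
    have hcomm : ⁅commutator G, pCore p G⁆ = ⊥ :=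
      commutator_eq_bot_iff_le_centralizer.2 (h.commutator_le_centralizer hmp isPGroup_pCore)
    refine ((commutator_mono inf_le_left le_top).trans (commutator_le_left _ ⊤)).trans ?_
    exact le_centralizerMod_iff.2 (hcomm.le.trans bot_le)

/- Modulo the centralizer of `G'` modulo `L`, `G'` is contained in `K` up to a bounded number of
focal commutators, each of which centralizes `G'` modulo a bounded normal subgroup. -/
theorem exists_lowerCentralSeries_commutator_le (h : HasFocalBound G fun _ ↦ m) :
    ∃ (M : Subgroup G) (_ : M.Normal),
      Nat.card M ≤ commutatorBound m ^ m * commutatorBound m ^ residualIndexBound m ∧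
      (commutator G).lowerCentralSeries 3 ≤ M := by
  obtain ⟨K, L, hK, hL, hsolvable, hindex, hcard, hKL, hcore⟩ := h.exists_commutator_pCore_inf_le
  have hnilpotent : ∀ (N : Subgroup G) [N.Normal] [Group.IsNilpotent N], N ≤ K →
      ⁅N, K⁆ ≤ centralizerMod (commutator G) L := fun N _ _ ↦ commutator_le_of_isNilpotent hcore
  have : Group.IsNilpotent (⁅K, K⁆ : Subgroup G) :=
    isNilpotent_of_commutator_le_centralizerMod hKL hnilpotent (commutator_le_left K K)
      (commutator_mono le_top le_top)
  obtain ⟨X, hX, -, hXcard, hle⟩ := exists_subset_closure_le_closure_sup (focalCommutators G) K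
  rw [closure_focalCommutators] at hle
  choose M hM hMcard hmem using fun x : X ↦ h.isBoundedNormalSet.exists_normal_card_le (hX x.2)
  simp only [closure_focalCommutators] at hmem
  have := Fintype.ofFinite X
  have hMnormal : (⨆ x, M x).Normal := iSup_normal _
  let C := centralizerMod (commutator G) (L ⊔ ⨆ x, M x)
  have hXC : closure X ≤ C := (closure_le _).2 fun x hx ↦
    centralizerMod_mono (le_sup_of_le_right (le_iSup M ⟨x, hx⟩)) (hmem ⟨x, hx⟩)
  have hKC : ⁅⁅K, K⁆, K⁆ ≤ C :=
    (hnilpotent _ (commutator_le_left K K)).trans (centralizerMod_mono le_sup_left)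
  have hGC : commutator G ≤ K ⊔ C := hle.trans (sup_le (hXC.trans le_sup_right) le_sup_left)
  have hC : (commutator G).lowerCentralSeries 2 ≤ C :=
    (commutator_le_sup (commutator_le_sup hGC hGC) hGC).trans (sup_le hKC le_rfl)
  refine ⟨L ⊔ ⨆ x, M x, inferInstance, ?_, lowerCentralSeries_succ_le hC le_rfl⟩
  exact (card_sup_le_mul_card _ _).trans <| Nat.mul_le_mul hcard <|
    (card_iSup_le_prod_card M).trans <|
      prod_le_pow_of_card_le commutatorBound_pos hMcard (hXcard.trans hindex)

end HasFocalBound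

/-- The bound for the order of `G''` when the commutators of focal pairs have at most `m`
conjugates. -/
def secondDerivedBound (m : ℕ) : ℕ :=
  allCommutatorsBound (m * m) ^ m *
    (commutatorBound m ^ m * commutatorBound m ^ residualIndexBound m)

theorem second_derived_bounded_general (h : HasFocalBound G fun _ ↦ m) :
    Nat.card (derivedSeries G 2) ≤ secondDerivedBound m := by
  rw [derivedSeries_succ, derivedSeries_one]
  obtain ⟨M, hM, hcard, hle⟩ := h.exists_lowerCentralSeries_commutator_le
  have : Group.IsNilpotent (commutator (G ⧸ M)) := by
    refine isNilpotent_of_lowerCentralSeries_eq_bot (n := 3) ?_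
    rwa [← map_mk'_commutator, ← map_lowerCentralSeries, Subgroup.map_eq_bot_iff,
      QuotientGroup.ker_mk']
  refine (card_le_card_map_mk'_mul_card _ M).trans (Nat.mul_le_mul ?_ hcard)
  rw [map_commutator, map_mk'_commutator]
  exact (h.quotient M).card_commutator_commutator_le_pow

end NilpotentResidual

theorem hasFocalBound_of_card_isConj_le {G : Type*} [Group G] {m : ℕ} (hm : 0 < m)
    (h : ∀ x : G, (∃ a b : G, x = a⁻¹ * b⁻¹ * a * b) → IsPrimePow (orderOf x) →
      Nat.card {h : G // IsConj x h} ≤ m) : HasFocalBound G fun _ ↦ m := by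
  rintro p hp d e ⟨P, hP, -, hde⟩
  have : Fact p.Prime := ⟨hp⟩
  obtain ⟨k, hk⟩ := IsPGroup.iff_orderOf.1 hP ⟨_, hde⟩
  rw [Subgroup.orderOf_mk] at hk
  obtain rfl | hk₀ := eq_or_ne k 0
  · rw [pow_zero, orderOf_eq_one_iff] at hk
    rw [hk, index_eq_one.2 (centralizer_eq_top_iff_subset.2 (by simp [one_mem]))]
    exact hm
  · rw [← ncard_conjugatesOf]
    exact h _ ⟨d⁻¹, e⁻¹, by simp [commutatorElement_def]⟩ (hk ▸ hp.isPrimePow.pow hk₀)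

/-- Main theorem: if `G` is a finite group in which `|x^G| ≤ m` whenever `x` is a
commutator of prime power order, then `G''` has `m`-bounded order. -/
theorem second_derived_bounded :
    ∃ f : ℕ → ℕ, ∀ (G : Type) (_ : Group G) (_ : Finite G) (m : ℕ), 0 < m →
      (∀ x : G, (∃ a b : G, x = a⁻¹ * b⁻¹ * a * b) → IsPrimePow (orderOf x) →
        Nat.card {h : G // IsConj x h} ≤ m) →
      Nat.card (derivedSeries G 2) ≤ f m :=
  ⟨secondDerivedBound, fun G _ _ m hm h ↦
    second_derived_bounded_general (hasFocalBound_of_card_isConj_le hm h)⟩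
end
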